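/- arXiv:2003.14191 — 7 statements merged into one kernel-verified Lean document; each statement's English description precedes it below -/
import Mathlib

section
/- Let $I \subseteq \mathbb{R}$ be an interval and let $X, V : I \to \mathbb{R}^3$ be differentiable with $X(s) \ne 0$ and $V(s) \ne 0$ for all $s \in I$, satisfying $X'(s) = V(s)/\sqrt{1+|V(s)|^2}$ and $V'(s) = \lambda(s)\, X(s)/|X(s)|$ where $\lambda : I \to [0,\infty)$. Then for every $s \in I$, $\frac{d}{ds}\Big(\frac{V(s) \cdot X(s)}{|V(s)|}\Big) = \frac{|V(s)|}{\sqrt{1+|V(s)|^2}} + \frac{|X(s)|}{|V(s)|}\Big(1 - \frac{(V(s) \cdot X(s))^2}{|V(s)|^2 |X(s)|^2}\Big)\lambda(s) \;\ge\; 0$; in particular $s \mapsto \frac{V(s)\cdot X(s)}{|V(s)|}$ is nondecreasing on $I$. -/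
open MeasureTheory Real Set
noncomputable section

abbrev E3 := EuclideanSpace ℝ (Fin 3)

/-- The norm of a differentiable curve is differentiable away from the origin. -/
theorem hasDerivAt_norm_of_ne_zero {E : Type*} [NormedAddCommGroup E] [InnerProductSpace ℝ E]
    {f : ℝ → E} {f' : E} {x : ℝ} (hf : HasDerivAt f f' x) (hx : f x ≠ 0) :
    HasDerivAt (fun t => ‖f t‖) (inner ℝ (f x) f' / ‖f x‖) x := by
  have h := hf.norm_sq.sqrt (pow_ne_zero 2 (norm_ne_zero_iff.mpr hx))
  simp only [Real.sqrt_sq (norm_nonneg _)] at h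
  rwa [mul_div_mul_left _ _ two_ne_zero] at h

/-- The squared cosine of the angle between two vectors is at most one. -/
theorem inner_sq_div_norm_sq_mul_norm_sq_le_one {E : Type*} [NormedAddCommGroup E]
    [InnerProductSpace ℝ E] (v x : E) :
    (inner ℝ v x : ℝ) ^ 2 / (‖v‖ ^ 2 * ‖x‖ ^ 2) ≤ 1 := by
  refine div_le_one_of_le₀ ?_ (by positivity)
  rw [← mul_pow, sq_le_sq, abs_of_nonneg (by positivity : 0 ≤ ‖v‖ * ‖x‖)]
  exact abs_real_inner_le_norm v x

/-- Monotonicity of `V⋅X/|V|` along characteristics of the radially symmetric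
relativistic Vlasov–Poisson system, with the explicit (nonnegative) derivative. -/
theorem radial_monotonicity (I : Set ℝ) (hI : I.OrdConnected)
    (X V : ℝ → E3) (lam : ℝ → ℝ)
    (hX0 : ∀ s ∈ I, X s ≠ 0) (hV0 : ∀ s ∈ I, V s ≠ 0)
    (hlam : ∀ s ∈ I, 0 ≤ lam s)
    (hX : ∀ s ∈ I, HasDerivAt X ((Real.sqrt (1 + ‖V s‖ ^ 2))⁻¹ • V s) s)
    (hV : ∀ s ∈ I, HasDerivAt V (lam s • (‖X s‖⁻¹ • X s)) s) :
    (∀ s ∈ I,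
      HasDerivAt (fun r => (inner ℝ (V r) (X r) : ℝ) / ‖V r‖)
        (‖V s‖ / Real.sqrt (1 + ‖V s‖ ^ 2) +
          ‖X s‖ / ‖V s‖ *
            (1 - (inner ℝ (V s) (X s) : ℝ) ^ 2 / (‖V s‖ ^ 2 * ‖X s‖ ^ 2)) * lam s) s ∧
      0 ≤ ‖V s‖ / Real.sqrt (1 + ‖V s‖ ^ 2) +
          ‖X s‖ / ‖V s‖ *
            (1 - (inner ℝ (V s) (X s) : ℝ) ^ 2 / (‖V s‖ ^ 2 * ‖X s‖ ^ 2)) * lam s) ∧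
    MonotoneOn (fun r => (inner ℝ (V r) (X r) : ℝ) / ‖V r‖) I := by
  have key : ∀ s ∈ I,
      HasDerivAt (fun r => (inner ℝ (V r) (X r) : ℝ) / ‖V r‖)
        (‖V s‖ / Real.sqrt (1 + ‖V s‖ ^ 2) +
          ‖X s‖ / ‖V s‖ *
            (1 - (inner ℝ (V s) (X s) : ℝ) ^ 2 / (‖V s‖ ^ 2 * ‖X s‖ ^ 2)) * lam s) s ∧
      0 ≤ ‖V s‖ / Real.sqrt (1 + ‖V s‖ ^ 2) +
          ‖X s‖ / ‖V s‖ *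
            (1 - (inner ℝ (V s) (X s) : ℝ) ^ 2 / (‖V s‖ ^ 2 * ‖X s‖ ^ 2)) * lam s := by
    intro s hs
    constructor
    · have hVn : ‖V s‖ ≠ 0 := norm_ne_zero_iff.mpr (hV0 s hs)
      have hXn : ‖X s‖ ≠ 0 := norm_ne_zero_iff.mpr (hX0 s hs)
      have hsqrt : Real.sqrt (1 + ‖V s‖ ^ 2) ≠ 0 := by positivity
      refine (((hV s hs).inner ℝ (hX s hs)).div
        (hasDerivAt_norm_of_ne_zero (hV s hs) (hV0 s hs)) hVn).congr_deriv ?_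
      simp only [real_inner_smul_left, real_inner_smul_right, real_inner_self_eq_norm_sq]
      generalize Real.sqrt (1 + ‖V s‖ ^ 2) = w at *
      field_simp
      ring
    · have hcos := sub_nonneg.mpr (inner_sq_div_norm_sq_mul_norm_sq_le_one (V s) (X s))
      have := hlam s hs
      positivity
  refine ⟨key, monotoneOn_of_deriv_nonneg hI.convex
    (fun s hs => (key s hs).1.continuousAt.continuousWithinAt)
    (fun s hs => (key s (interior_subset hs)).1.differentiableAt.differentiableWithinAt)
    fun s hs => ?_⟩
  rw [(key s (interior_subset hs)).1.deriv]
  exact (key s (interior_subset hs)).2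
end
end

section
/- Let $\tau < T$ and let $X, V : [\tau, T] \to \mathbb{R}^3$ be $C^1$ with $X(s) \ne 0$ and $V(s) \ne 0$ for all $s$, satisfying $X'(s) = V(s)/\sqrt{1+|V(s)|^2}$ and $V'(s) = \lambda(s)\, X(s)/|X(s)|$ with $\lambda : [\tau,T] \to [0,\infty)$ continuous. Assume $V(\tau) \cdot X(\tau) \ge 0$ and set $c := |V(\tau)|/\sqrt{1+|V(\tau)|^2}$. Then for every $s \in [\tau, T]$: (i) $V(s) \cdot X(s) \ge 0$ and $|V(s)| \ge |V(\tau)|$; (ii) $\frac{V(s)\cdot X(s)}{|V(s)|} \ge c\,(s-\tau)$; (iii) $|X(s)|^2 \ge |X(\tau)|^2 + c^2 (s-\tau)^2$. -/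
open MeasureTheory Real Set
noncomputable section

/-- A function with nonnegative derivative on `[a, b]` is bounded below by its initial value. -/
theorem le_of_hasDerivAt_nonneg {f f' : ℝ → ℝ} {a b : ℝ}
    (hf : ∀ s ∈ Icc a b, HasDerivAt f (f' s) s) (hf' : ∀ s ∈ Icc a b, 0 ≤ f' s) :
    ∀ s ∈ Icc a b, f a ≤ f s := by
  intro s hs
  have hmono : MonotoneOn f (Icc a b) :=
    monotoneOn_of_hasDerivWithinAt_nonneg (convex_Icc a b)
      (fun x hx => (hf x hx).continuousAt.continuousWithinAt)
      (fun x hx => (hf x (interior_subset hx)).hasDerivWithinAt)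
      (fun x hx => hf' x (interior_subset hx))
  exact hmono (left_mem_Icc.2 (hs.1.trans hs.2)) hs hs.1

/-- The relativistic speed is a monotone function of the length of the momentum. -/
theorem div_sqrt_one_add_sq_le {a b : ℝ} (ha : 0 ≤ a) (hab : a ≤ b) :
    a / √(1 + a ^ 2) ≤ b / √(1 + b ^ 2) := by
  rw [div_le_div_iff₀ (by positivity) (by positivity)]
  refine (sq_le_sq₀ (by positivity) (mul_nonneg (ha.trans hab) (Real.sqrt_nonneg _))).1 ?_
  rw [mul_pow, mul_pow, Real.sq_sqrt (by positivity), Real.sq_sqrt (by positivity)]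
  nlinarith [pow_le_pow_left₀ ha hab 2]

/-- Quantitative outgoing-particle estimate: once the radial momentum `V⋅X` is
nonnegative under a radially outward force, the speed never decreases, the normalized
radial momentum grows at least linearly, and the particle escapes the origin. -/
theorem outgoing_characteristics (τ T : ℝ) (hτT : τ < T)
    (X V : ℝ → E3) (lam : ℝ → ℝ)
    (hX0 : ∀ s ∈ Set.Icc τ T, X s ≠ 0) (hV0 : ∀ s ∈ Set.Icc τ T, V s ≠ 0)
    (hlam_cont : ContinuousOn lam (Set.Icc τ T))
    (hlam : ∀ s ∈ Set.Icc τ T, 0 ≤ lam s)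
    (hX : ∀ s ∈ Set.Icc τ T, HasDerivAt X ((Real.sqrt (1 + ‖V s‖ ^ 2))⁻¹ • V s) s)
    (hV : ∀ s ∈ Set.Icc τ T, HasDerivAt V (lam s • (‖X s‖⁻¹ • X s)) s)
    (hinit : 0 ≤ (inner ℝ (V τ) (X τ) : ℝ)) :
    ∀ s ∈ Set.Icc τ T,
      (0 ≤ (inner ℝ (V s) (X s) : ℝ) ∧ ‖V τ‖ ≤ ‖V s‖) ∧
      (‖V τ‖ / Real.sqrt (1 + ‖V τ‖ ^ 2)) * (s - τ) ≤ (inner ℝ (V s) (X s) : ℝ) / ‖V s‖ ∧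
      ‖X τ‖ ^ 2 + (‖V τ‖ / Real.sqrt (1 + ‖V τ‖ ^ 2)) ^ 2 * (s - τ) ^ 2 ≤ ‖X s‖ ^ 2 := by
  have hp : ∀ s ∈ Icc τ T, HasDerivAt (fun t => (inner ℝ (V t) (X t) : ℝ))
      ((√(1 + ‖V s‖ ^ 2))⁻¹ * ‖V s‖ ^ 2 + lam s * ‖X s‖) s := by
    intro s hs
    have hx : ‖X s‖ ≠ 0 := norm_ne_zero_iff.2 (hX0 s hs)
    refine ((hV s hs).inner ℝ (hX s hs)).congr_deriv ?_
    simp only [inner_smul_left, inner_smul_right, real_inner_self_eq_norm_sq, conj_trivial]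
    field_simp
  have hp_nonneg : ∀ s ∈ Icc τ T, 0 ≤ (inner ℝ (V s) (X s) : ℝ) := fun s hs =>
    hinit.trans <| le_of_hasDerivAt_nonneg hp (fun t ht => by
      have := hlam t ht
      positivity) s hs
  have hnorm : ∀ s ∈ Icc τ T, HasDerivAt (fun t => ‖V t‖)
      (lam s * (‖X s‖⁻¹ * inner ℝ (V s) (X s)) / ‖V s‖) s := by
    intro s hs
    simpa only [inner_smul_right] using hasDerivAt_norm_of_ne_zero (hV s hs) (hV0 s hs)
  have hnorm_le : ∀ s ∈ Icc τ T, ‖V τ‖ ≤ ‖V s‖ :=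
    le_of_hasDerivAt_nonneg hnorm fun t ht => by
      have := hlam t ht
      have := hp_nonneg t ht
      positivity
  set c := ‖V τ‖ / √(1 + ‖V τ‖ ^ 2)
  have hc_nonneg : 0 ≤ c := by positivity
  have hc_le : ∀ s ∈ Icc τ T, c ≤ ‖V s‖ / √(1 + ‖V s‖ ^ 2) := fun s hs =>
    div_sqrt_one_add_sq_le (norm_nonneg _) (hnorm_le s hs)
  have hq : ∀ s ∈ Icc τ T, c * (s - τ) ≤ (inner ℝ (V s) (X s) : ℝ) / ‖V s‖ := by
    intro s hs
    have h := le_of_hasDerivAt_nonneg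
      (fun t ht => ((hp t ht).fun_div (hnorm t ht) (norm_ne_zero_iff.2 (hV0 t ht))).fun_sub
        (((hasDerivAt_id' t).sub_const τ).const_mul c)) (fun t ht => by
        have hx : 0 < ‖X t‖ := norm_pos_iff.2 (hX0 t ht)
        have hv : 0 < ‖V t‖ := norm_pos_iff.2 (hV0 t ht)
        have hγ : 0 < √(1 + ‖V t‖ ^ 2) := by positivity
        have hcs : 0 ≤ (‖V t‖ * ‖X t‖) ^ 2 - (inner ℝ (V t) (X t) : ℝ) ^ 2 :=
          sub_nonneg.2 (pow_le_pow_left₀ (hp_nonneg t ht) (real_inner_le_norm _ _) 2)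
        have hextra : 0 ≤ lam t * ((‖V t‖ * ‖X t‖) ^ 2 - (inner ℝ (V t) (X t) : ℝ) ^ 2) /
            (‖X t‖ * ‖V t‖ ^ 3) :=
          div_nonneg (mul_nonneg (hlam t ht) hcs) (by positivity)
        refine (add_nonneg (sub_nonneg.2 (hc_le t ht)) hextra).trans_eq ?_
        field_simp
        ring) s hs
    have h0 : 0 ≤ (inner ℝ (V τ) (X τ) : ℝ) / ‖V τ‖ := div_nonneg hinit (norm_nonneg _)
    simp only [sub_self, mul_zero, sub_zero] at h
    linarith
  intro s hs
  refine ⟨⟨hp_nonneg s hs, hnorm_le s hs⟩, hq s hs, ?_⟩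
  have h := le_of_hasDerivAt_nonneg
    (fun t ht => (hX t ht).norm_sq.fun_sub
      ((((hasDerivAt_id' t).sub_const τ).fun_pow 2).const_mul (c ^ 2))) (fun t ht => by
      have hv : 0 < ‖V t‖ := norm_pos_iff.2 (hV0 t ht)
      have hmul : c * (c * (t - τ)) ≤
          ‖V t‖ / √(1 + ‖V t‖ ^ 2) * ((inner ℝ (V t) (X t) : ℝ) / ‖V t‖) :=
        mul_le_mul (hc_le t ht) (hq t ht) (mul_nonneg hc_nonneg (sub_nonneg.2 ht.1))
          (by positivity)
      have hcancel : ‖V t‖ / √(1 + ‖V t‖ ^ 2) * ((inner ℝ (V t) (X t) : ℝ) / ‖V t‖) =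
          (√(1 + ‖V t‖ ^ 2))⁻¹ * inner ℝ (V t) (X t) := by
        field_simp
      rw [inner_smul_right, real_inner_comm]
      norm_num
      linarith) s hs
  simp only [sub_self, ne_eq, OfNat.ofNat_ne_zero, not_false_eq_true, zero_pow, mul_zero,
    sub_zero] at h
  linarith
end
end

section
/- Let $\tau < T$ and let $X, V : [\tau, T] \to \mathbb{R}^3$ be $C^1$ with $X(s) \ne 0$ and $V(s) \ne 0$ for all $s$, satisfying $X'(s) = V(s)/\sqrt{1+|V(s)|^2}$ and $V'(s) = \lambda(s)\, X(s)/|X(s)|$ with $\lambda : [\tau,T] \to [0,\infty)$ continuous. Assume $V(\tau) \cdot X(\tau) \ge 0$, and that for all $s \in [\tau,T]$ one has $\lambda(s) \le \min\{B,\, C/|X(s)|^2\}$ for some constants $B, C > 0$. Set $c := |V(\tau)|/\sqrt{1+|V(\tau)|^2} > 0$. Then for every $\gamma > 0$ and every $s \in [\tau, T]$: $|V(s)| \le |V(\tau)| + B\gamma + \frac{C}{c^2 \gamma}$. -/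
open MeasureTheory Real Set
noncomputable section

lemma monotoneOn_Icc_of_hasDerivAt_nonneg {f f' : ℝ → ℝ} {a b : ℝ}
    (hf : ∀ s ∈ Icc a b, HasDerivAt f (f' s) s) (hf' : ∀ s ∈ Icc a b, 0 ≤ f' s) :
    MonotoneOn f (Icc a b) :=
  monotoneOn_of_hasDerivWithinAt_nonneg (convex_Icc a b)
    (fun s hs => (hf s hs).continuousAt.continuousWithinAt)
    (fun s hs => (hf s (interior_subset hs)).hasDerivWithinAt)
    (fun s hs => hf' s (interior_subset hs))

/-- If `‖V'‖ ≤ g'` on `[a, b]`, then the norm of `V` grows at most by the increment of `g`. -/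
lemma norm_le_add_sub_of_hasDerivAt {E : Type*} [NormedAddCommGroup E] [NormedSpace ℝ E]
    {V V' : ℝ → E} {g g' : ℝ → ℝ} {a b : ℝ} (hab : a ≤ b)
    (hV : ∀ s ∈ Icc a b, HasDerivAt V (V' s) s) (hg : ∀ s ∈ Icc a b, HasDerivAt g (g' s) s)
    (hbound : ∀ s ∈ Icc a b, ‖V' s‖ ≤ g' s) :
    ‖V b‖ ≤ ‖V a‖ + (g b - g a) := by
  have h := image_norm_le_of_norm_deriv_right_le_deriv_boundary' (f := V) (f' := V')
    (B := fun s => ‖V a‖ + (g s - g a)) (B' := g') (a := a) (b := b)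
    (fun s hs => (hV s hs).continuousAt.continuousWithinAt)
    (fun s hs => (hV s (Ico_subset_Icc_self hs)).hasDerivWithinAt)
    (by simp)
    (fun s hs => (((hg s hs).sub_const (g a)).const_add _).continuousAt.continuousWithinAt)
    (fun s hs => (((hg s (Ico_subset_Icc_self hs)).sub_const (g a)).const_add _).hasDerivWithinAt)
    (fun s hs => hbound s (Ico_subset_Icc_self hs))
  exact h (right_mem_Icc.2 hab)

section Characteristics

variable {E : Type*} [NormedAddCommGroup E] [InnerProductSpace ℝ E]
  {X V : ℝ → E} {lam : ℝ → ℝ} {τ T : ℝ}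

lemma hasDerivAt_inner_velocity_position {s l : ℝ}
    (hX : HasDerivAt X ((√(1 + ‖V s‖ ^ 2))⁻¹ • V s) s)
    (hV : HasDerivAt V (l • (‖X s‖⁻¹ • X s)) s) :
    HasDerivAt (fun t => inner ℝ (V t) (X t))
      (‖V s‖ ^ 2 / √(1 + ‖V s‖ ^ 2) + l * ‖X s‖) s := by
  refine (hV.inner ℝ hX).congr_deriv ?_
  simp only [inner_smul_left, inner_smul_right, real_inner_self_eq_norm_sq, conj_trivial]
  rcases eq_or_ne ‖X s‖ 0 with h | h
  · simp [h]; ring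
  · field_simp

lemma hasDerivAt_norm_velocity_sq {s l : ℝ}
    (hV : HasDerivAt V (l • (‖X s‖⁻¹ • X s)) s) :
    HasDerivAt (fun t => ‖V t‖ ^ 2) (2 * (l * ‖X s‖⁻¹ * inner ℝ (V s) (X s))) s := by
  refine hV.norm_sq.congr_deriv ?_
  simp only [inner_smul_right]
  ring

lemma inner_velocity_position_nonneg
    (hlam : ∀ s ∈ Icc τ T, 0 ≤ lam s)
    (hX : ∀ s ∈ Icc τ T, HasDerivAt X ((√(1 + ‖V s‖ ^ 2))⁻¹ • V s) s)
    (hV : ∀ s ∈ Icc τ T, HasDerivAt V (lam s • (‖X s‖⁻¹ • X s)) s)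
    (hinit : 0 ≤ inner ℝ (V τ) (X τ)) {s : ℝ} (hs : s ∈ Icc τ T) :
    0 ≤ inner ℝ (V s) (X s) := by
  have hmono := monotoneOn_Icc_of_hasDerivAt_nonneg
    (fun t ht => hasDerivAt_inner_velocity_position (hX t ht) (hV t ht))
    (fun t ht => by have := hlam t ht; positivity)
  exact hinit.trans (hmono (left_mem_Icc.2 (hs.1.trans hs.2)) hs hs.1)

lemma norm_velocity_sq_mono
    (hlam : ∀ s ∈ Icc τ T, 0 ≤ lam s)
    (hX : ∀ s ∈ Icc τ T, HasDerivAt X ((√(1 + ‖V s‖ ^ 2))⁻¹ • V s) s)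
    (hV : ∀ s ∈ Icc τ T, HasDerivAt V (lam s • (‖X s‖⁻¹ • X s)) s)
    (hinit : 0 ≤ inner ℝ (V τ) (X τ)) {s : ℝ} (hs : s ∈ Icc τ T) :
    ‖V τ‖ ^ 2 ≤ ‖V s‖ ^ 2 := by
  have hmono := monotoneOn_Icc_of_hasDerivAt_nonneg
    (fun t ht => hasDerivAt_norm_velocity_sq (hV t ht))
    (fun t ht => by
      have := hlam t ht
      have := inner_velocity_position_nonneg hlam hX hV hinit ht
      positivity)
  exact hmono (left_mem_Icc.2 (hs.1.trans hs.2)) hs hs.1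

/-- The radial component `X · V / √(1 + |V|²)` grows at least at rate `c²`. -/
lemma le_inner_velocity_position_div_sqrt
    (hX0 : ∀ s ∈ Icc τ T, X s ≠ 0)
    (hlam : ∀ s ∈ Icc τ T, 0 ≤ lam s)
    (hX : ∀ s ∈ Icc τ T, HasDerivAt X ((√(1 + ‖V s‖ ^ 2))⁻¹ • V s) s)
    (hV : ∀ s ∈ Icc τ T, HasDerivAt V (lam s • (‖X s‖⁻¹ • X s)) s)
    (hinit : 0 ≤ inner ℝ (V τ) (X τ)) {s : ℝ} (hs : s ∈ Icc τ T) :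
    (‖V τ‖ / √(1 + ‖V τ‖ ^ 2)) ^ 2 * (s - τ) ≤ inner ℝ (V s) (X s) / √(1 + ‖V s‖ ^ 2) := by
  have hderiv : ∀ t ∈ Icc τ T, HasDerivAt
      (fun r => inner ℝ (V r) (X r) / √(1 + ‖V r‖ ^ 2) -
        (‖V τ‖ / √(1 + ‖V τ‖ ^ 2)) ^ 2 * (r - τ)) _ t := fun t ht =>
    ((hasDerivAt_inner_velocity_position (hX t ht) (hV t ht)).div
      (((hasDerivAt_norm_velocity_sq (hV t ht)).const_add 1).sqrt (by positivity))
      (by positivity)).sub (((hasDerivAt_id t).sub_const τ).const_mul _)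
  have hmono := monotoneOn_Icc_of_hasDerivAt_nonneg hderiv (fun t ht => by
    have hl := hlam t ht
    have hx : 0 < ‖X t‖ := norm_pos_iff.2 (hX0 t ht)
    have hv := norm_velocity_sq_mono hlam hX hV hinit ht
    have hcs : inner ℝ (V t) (X t) ^ 2 ≤ ‖V t‖ ^ 2 * ‖X t‖ ^ 2 := by
      rw [← mul_pow, ← sq_abs]
      gcongr
      exact abs_real_inner_le_norm _ _
    have hw : 0 < √(1 + ‖V t‖ ^ 2) := by positivity
    have hw2 : √(1 + ‖V t‖ ^ 2) ^ 2 = 1 + ‖V t‖ ^ 2 := sq_sqrt (by positivity)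
    have hc : (‖V τ‖ / √(1 + ‖V τ‖ ^ 2)) ^ 2 ≤ ‖V t‖ ^ 2 / √(1 + ‖V t‖ ^ 2) ^ 2 := by
      rw [div_pow, sq_sqrt (by positivity), hw2, div_le_div_iff₀ (by positivity) (by positivity)]
      linarith
    generalize inner ℝ (V t) (X t) = p at *
    generalize √(1 + ‖V t‖ ^ 2) = w at *
    have hrest : 0 ≤ lam t * (‖X t‖ ^ 2 * w ^ 2 - p ^ 2) / (‖X t‖ * w ^ 3) := by
      have : 0 ≤ ‖X t‖ ^ 2 * w ^ 2 - p ^ 2 := by rw [hw2]; nlinarith [sq_nonneg ‖X t‖]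
      positivity
    have heq : ((‖V t‖ ^ 2 / w + lam t * ‖X t‖) * w -
        p * (2 * (lam t * ‖X t‖⁻¹ * p) / (2 * w))) / w ^ 2 =
        ‖V t‖ ^ 2 / w ^ 2 + lam t * (‖X t‖ ^ 2 * w ^ 2 - p ^ 2) / (‖X t‖ * w ^ 3) := by
      field_simp
      ring
    rw [heq]
    linarith)
  have h := hmono (left_mem_Icc.2 (hs.1.trans hs.2)) hs hs.1
  have h0 : 0 ≤ inner ℝ (V τ) (X τ) / √(1 + ‖V τ‖ ^ 2) := by positivity
  simp only [sub_self, mul_zero, sub_zero] at h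
  linarith

/-- Outgoing characteristics escape the origin at least at the constant rate `c`. -/
lemma norm_position_sq_lower_bound
    (hX0 : ∀ s ∈ Icc τ T, X s ≠ 0)
    (hlam : ∀ s ∈ Icc τ T, 0 ≤ lam s)
    (hX : ∀ s ∈ Icc τ T, HasDerivAt X ((√(1 + ‖V s‖ ^ 2))⁻¹ • V s) s)
    (hV : ∀ s ∈ Icc τ T, HasDerivAt V (lam s • (‖X s‖⁻¹ • X s)) s)
    (hinit : 0 ≤ inner ℝ (V τ) (X τ)) {s : ℝ} (hs : s ∈ Icc τ T) :
    ‖X τ‖ ^ 2 + (‖V τ‖ / √(1 + ‖V τ‖ ^ 2)) ^ 2 * (s - τ) ^ 2 ≤ ‖X s‖ ^ 2 := by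
  have hderiv : ∀ t ∈ Icc τ T, HasDerivAt
      (fun r => ‖X r‖ ^ 2 - (‖V τ‖ / √(1 + ‖V τ‖ ^ 2)) ^ 2 * (r - τ) ^ 2)
      (2 * (inner ℝ (V t) (X t) / √(1 + ‖V t‖ ^ 2) -
        (‖V τ‖ / √(1 + ‖V τ‖ ^ 2)) ^ 2 * (t - τ))) t := fun t ht => by
    refine ((hX t ht).norm_sq.sub
      ((((hasDerivAt_id t).sub_const τ).pow 2).const_mul _)).congr_deriv ?_
    simp only [inner_smul_right, real_inner_comm (V t) (X t), id]
    push_cast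
    ring
  have hmono := monotoneOn_Icc_of_hasDerivAt_nonneg hderiv (fun t ht => by
    have := le_inner_velocity_position_div_sqrt hX0 hlam hX hV hinit ht
    linarith)
  have h := hmono (left_mem_Icc.2 (hs.1.trans hs.2)) hs hs.1
  simp only [sub_self] at h
  linarith

end Characteristics

/-- Velocity-gain estimate for outgoing characteristics: under a radially outward
force bounded by `B` globally and by `C/|X|²` pointwise, the speed can only increase by
`Bγ + C/(c²γ)` for any splitting parameter `γ > 0`, where `c = |V(τ)|/√(1+|V(τ)|²)`. -/
theorem outgoing_velocity_gain (τ T : ℝ) (hτT : τ < T)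
    (X V : ℝ → E3) (lam : ℝ → ℝ) (B C : ℝ) (hB : 0 < B) (hC : 0 < C)
    (hX0 : ∀ s ∈ Set.Icc τ T, X s ≠ 0) (hV0 : ∀ s ∈ Set.Icc τ T, V s ≠ 0)
    (hlam_cont : ContinuousOn lam (Set.Icc τ T))
    (hlam : ∀ s ∈ Set.Icc τ T, 0 ≤ lam s)
    (hlam_bd : ∀ s ∈ Set.Icc τ T, lam s ≤ min B (C / ‖X s‖ ^ 2))
    (hX : ∀ s ∈ Set.Icc τ T, HasDerivAt X ((Real.sqrt (1 + ‖V s‖ ^ 2))⁻¹ • V s) s)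
    (hV : ∀ s ∈ Set.Icc τ T, HasDerivAt V (lam s • (‖X s‖⁻¹ • X s)) s)
    (hinit : 0 ≤ (inner ℝ (V τ) (X τ) : ℝ)) :
    ∀ γ > (0 : ℝ), ∀ s ∈ Set.Icc τ T,
      ‖V s‖ ≤ ‖V τ‖ + B * γ +
        C / ((‖V τ‖ / Real.sqrt (1 + ‖V τ‖ ^ 2)) ^ 2 * γ) := by
  intro γ hγ s hs
  have hτ : τ ∈ Icc τ T := left_mem_Icc.2 hτT.le
  have hc : 0 < ‖V τ‖ / √(1 + ‖V τ‖ ^ 2) := by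
    have := norm_pos_iff.2 (hV0 τ hτ)
    positivity
  have hescape := fun t (ht : t ∈ Icc τ T) =>
    norm_position_sq_lower_bound hX0 hlam hX hV hinit ht
  generalize ‖V τ‖ / √(1 + ‖V τ‖ ^ 2) = c at *
  have hnorm : ∀ t ∈ Icc τ T, ‖lam t • (‖X t‖⁻¹ • X t)‖ = lam t := fun t ht => by
    have := norm_ne_zero_iff.2 (hX0 t ht)
    rw [norm_smul, norm_smul, norm_inv, norm_norm, inv_mul_cancel₀ this, mul_one,
      norm_of_nonneg (hlam t ht)]
  have hnear : ∀ t ∈ Icc τ T, ‖V t‖ ≤ ‖V τ‖ + B * (t - τ) := fun t ht => by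
    have hsub : Icc τ t ⊆ Icc τ T := Icc_subset_Icc_right ht.2
    have := norm_le_add_sub_of_hasDerivAt (g := fun r => B * r) (g' := fun _ => B) ht.1
      (fun r hr => hV r (hsub hr))
      (fun r _ => by simpa using (hasDerivAt_id r).const_mul B)
      (fun r hr => (hnorm r (hsub hr)).trans_le ((hlam_bd r (hsub hr)).trans (min_le_left _ _)))
    linarith
  rcases le_total s (τ + γ) with hsγ | hsγ
  · have h := hnear s hs
    have hB' : B * (s - τ) ≤ B * γ := by gcongr; linarith
    have : 0 ≤ C / (c ^ 2 * γ) := by positivity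
    linarith
  · have hsub : Icc (τ + γ) s ⊆ Icc τ T := Icc_subset_Icc (by linarith) hs.2
    have hγ_near := hnear (τ + γ) (hsub (left_mem_Icc.2 hsγ))
    have hfar := norm_le_add_sub_of_hasDerivAt
      (g := fun r => -(C / c ^ 2) * (r - τ)⁻¹) (g' := fun r => C / (c ^ 2 * (r - τ) ^ 2)) hsγ
      (fun r hr => hV r (hsub hr))
      (fun r hr => by
        have hr0 : r - τ ≠ 0 := by linarith [hr.1]
        refine ((((hasDerivAt_id r).sub_const τ).inv hr0).const_mul _).congr_deriv ?_
        simp only [id]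
        field_simp)
      (fun r hr => by
        have hr0 : 0 < r - τ := by linarith [hr.1]
        rw [hnorm r (hsub hr)]
        refine (hlam_bd r (hsub hr)).trans ((min_le_right _ _).trans ?_)
        gcongr
        linarith [hescape r (hsub hr), sq_nonneg ‖X τ‖])
    have hs0 : 0 ≤ C / c ^ 2 * (s - τ)⁻¹ := by
      have : 0 < s - τ := by linarith
      positivity
    have hsplit : C / (c ^ 2 * γ) = C / c ^ 2 * γ⁻¹ := by field_simp
    simp only [add_sub_cancel_left] at hfar hγ_near
    linarith
end
end

section
/- Fix an even smooth function $\tilde\psi : \mathbb{R} \to [0,1]$ supported in $[-3/2, 3/2]$ and equal to $1$ on $[-5/4, 5/4]$, and for $k \in \mathbb{Z}$ define $\psi_k : \mathbb{R}^3 \to \mathbb{R}$ by $\psi_k(\xi) := \tilde\psi(|\xi|/2^k) - \tilde\psi(|\xi|/2^{k-1})$, and for $l \in \mathbb{Z}$ define $\psi_{\le l} : \mathbb{R} \to \mathbb{R}$ by $\psi_{\le l}(r) := \tilde\psi(r/2^l)$. For $k \in \mathbb{Z}$, an integer $l \le 0$, and a unit vector $\theta \in \mathbb{S}^2$, define $\tilde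 K_{k,l,\theta}(y) := \int_{\mathbb{R}^3} e^{i y \cdot \xi}\, i\xi\, |\xi|^{-2}\, \psi_k(\xi)\, \psi_{\le l}\big(\theta \cdot \xi/|\xi|\big)\,d\xi$. Then for every natural number $N$ there is a constant $C_N$ (depending only on $\tilde\psi$ and $N$) such that for all such $k, l, \theta$ and all $y \in \mathbb{R}^3$: $|\tilde K_{k,l,\theta}(y)| \le C_N\, 2^{2k+l}\, (1 + 2^{k+l} |y \cdot \theta|)^{-N}\, (1 + 2^{k} |y - (y\cdot\theta)\theta|)^{-N}$. -/
open MeasureTheory Real Set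
noncomputable section

/-- The angularly localized kernel
`K_{k,l,θ}(y) = ∫ e^{iy⋅ξ} iξ |ξ|⁻² ψ_k(ξ) ψ_{≤l}(θ⋅ξ/|ξ|) dξ` of `∇Δ⁻¹` localized to
frequencies `|ξ| ≈ 2^k` whose direction is within angle `≈ 2^l` of the plane
orthogonal to `θ`; here `ψ_k(ξ) = ψ̃(|ξ|/2^k) - ψ̃(|ξ|/2^{k-1})` and
`ψ_{≤l}(r) = ψ̃(r/2^l)`. -/
def angKernel (ψ : ℝ → ℝ) (k l : ℤ) (θ : E3) (y : E3) : EuclideanSpace ℂ (Fin 3) :=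
  ∫ ξ : E3,
    (Complex.exp (Complex.I * ((inner ℝ y ξ : ℝ) : ℂ)) * Complex.I *
        (((‖ξ‖ ^ 2 : ℝ) : ℂ))⁻¹ *
        (((ψ (‖ξ‖ / 2 ^ k) - ψ (‖ξ‖ / 2 ^ (k - 1)) : ℝ)) : ℂ) *
        ((ψ (((inner ℝ θ ξ : ℝ) / ‖ξ‖) / 2 ^ l) : ℝ) : ℂ)) •
      (WithLp.toLp 2 (fun j => ((ξ j : ℝ) : ℂ)) : EuclideanSpace ℂ (Fin 3))

/-- Linear change of variables in a Bochner integral. -/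
theorem integral_eq_abs_det_smul_integral_comp {V F : Type*} [NormedAddCommGroup V]
    [NormedSpace ℝ V] [FiniteDimensional ℝ V] [MeasurableSpace V] [BorelSpace V]
    [NormedAddCommGroup F] [NormedSpace ℝ F] (μ : Measure V) [μ.IsAddHaarMeasure]
    (L : V →L[ℝ] V) (hL : L.det ≠ 0) (g : V → F) :
    ∫ x, g x ∂μ = |L.det| • ∫ x, g (L x) ∂μ := by
  have hbij : Function.Bijective L :=
    (LinearMap.equivOfDetNeZero (L : V →ₗ[ℝ] V) hL).bijective
  have h := integral_image_eq_integral_abs_det_fderiv_smul μ MeasurableSet.univ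
    (fun x _ => L.hasFDerivAt.hasFDerivWithinAt) hbij.injective.injOn g
  rwa [image_univ, hbij.surjective.range_eq, Measure.restrict_univ, integral_smul] at h

/-- A smooth family of functions supported in a fixed ball has uniformly rapidly decaying
Fourier integrals, for parameters in a compact set. -/
theorem exists_pow_mul_norm_integral_exp_inner_smul_le {X V F : Type*}
    [NormedAddCommGroup X] [NormedSpace ℝ X]
    [NormedAddCommGroup V] [InnerProductSpace ℝ V] [FiniteDimensional ℝ V] [MeasurableSpace V]
    [BorelSpace V] [NormedAddCommGroup F] [NormedSpace ℂ F]
    {f : X × V → F} (hf : ContDiff ℝ (⊤ : ℕ∞) f) {P : Set X} (hP : IsCompact P) {R : ℝ}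
    (hR : ∀ p ∈ P, ∀ x, R < ‖x‖ → f (p, x) = 0) (n : ℕ) :
    ∃ C : ℝ, ∀ p ∈ P, ∀ z : V,
      ‖z‖ ^ n * ‖∫ x, Complex.exp (Complex.I * ((inner ℝ z x : ℝ) : ℂ)) • f (p, x)‖ ≤ C := by
  have hbound : ∀ m : ℕ, ∃ M : ℝ, ∀ p ∈ P, ∀ x ∈ Metric.closedBall (0 : V) R,
      ‖iteratedFDeriv ℝ m (fun v => f (p, v)) x‖ ≤ M := by
    intro m
    have hcont : Continuous (iteratedFDeriv ℝ m f) :=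
      hf.continuous_iteratedFDeriv (by exact_mod_cast le_top)
    obtain ⟨M, hM⟩ := (hP.prod (isCompact_closedBall (0 : V) R)).exists_bound_of_continuousOn
      hcont.continuousOn
    refine ⟨M, fun p hp x hx => ?_⟩
    have hshift : ContDiff ℝ (⊤ : ℕ∞) (fun q : X × V => f ((p, 0) + q)) :=
      hf.comp (contDiff_const.add contDiff_id)
    have heq : (fun v => f (p, v)) =
        (fun q : X × V => f ((p, 0) + q)) ∘ (ContinuousLinearMap.inr ℝ X V) := by
      ext v; simp
    rw [heq, ContinuousLinearMap.iteratedFDeriv_comp_right _ hshift _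
      (by exact_mod_cast le_top : (m : WithTop ℕ∞) ≤ ((⊤ : ℕ∞) : WithTop ℕ∞)),
      iteratedFDeriv_comp_add_left]
    refine (ContinuousMultilinearMap.norm_compContinuousLinearMap_le _ _).trans ?_
    have h1 : ∏ _i : Fin m, ‖ContinuousLinearMap.inr ℝ X V‖ ≤ 1 :=
      Finset.prod_le_one (fun _ _ => by positivity)
        (fun _ _ => ContinuousLinearMap.norm_inr_le_one ℝ X V)
    refine (mul_le_of_le_one_right (norm_nonneg _) h1).trans ?_
    simpa using hM (p, x) ⟨hp, hx⟩
  choose M hM using hbound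
  refine ⟨(2 * π) ^ n * (2 ^ n * ∑ m ∈ Finset.range (n + 1),
    ∫ _ in Metric.closedBall (0 : V) R, M m), fun p hp z => ?_⟩
  have hsmooth : ContDiff ℝ (⊤ : ℕ∞) (fun v => f (p, v)) :=
    hf.comp (contDiff_const.prodMk contDiff_id)
  have htsupp : tsupport (fun v => f (p, v)) ⊆ Metric.closedBall (0 : V) R := by
    refine closure_minimal (fun x hx => ?_) Metric.isClosed_closedBall
    by_contra hxR
    exact hx (hR p hp x (by simpa using hxR))
  have hcompact : HasCompactSupport (fun v => f (p, v)) :=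
    (isCompact_closedBall (0 : V) R).of_isClosed_subset (isClosed_tsupport _) htsupp
  have hzero : ∀ m : ℕ, ∀ x ∉ Metric.closedBall (0 : V) R,
      iteratedFDeriv ℝ m (fun v => f (p, v)) x = 0 := by
    intro m x hx
    by_contra hne
    exact hx (htsupp (support_iteratedFDeriv_subset m hne))
  have hcont : ∀ m : ℕ, Continuous (iteratedFDeriv ℝ m (fun v => f (p, v))) := fun m =>
    hsmooth.continuous_iteratedFDeriv (by exact_mod_cast le_top)
  have hdecay := Real.pow_mul_norm_iteratedFDeriv_fourier_le (K := ⊤) (N := ⊤) hsmooth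
    (fun j m _ _ => Continuous.integrable_of_hasCompactSupport (by have := hcont m; fun_prop)
      ((hcompact.iteratedFDeriv m).norm.mul_left)) (k := 0) (n := n) le_top le_top
      (-(2 * π)⁻¹ • z)
  have hfourier : FourierTransform.fourier (fun v => f (p, v)) (-(2 * π)⁻¹ • z) =
      ∫ x, Complex.exp (Complex.I * ((inner ℝ z x : ℝ) : ℂ)) • f (p, x) := by
    rw [Real.fourier_eq']
    congr 1 with x
    congr 2
    rw [inner_smul_right, real_inner_comm]
    push_cast
    have : (π : ℂ) ≠ 0 := by exact_mod_cast pi_ne_zero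
    field_simp
  rw [norm_iteratedFDeriv_zero, hfourier, norm_smul, mul_pow, norm_neg, norm_inv,
    Real.norm_of_nonneg (by positivity : (0 : ℝ) ≤ 2 * π), inv_pow, mul_assoc,
    inv_mul_le_iff₀ (by positivity)] at hdecay
  refine hdecay.trans ?_
  have hsum : ∑ q ∈ Finset.range (0 + 1) ×ˢ Finset.range (n + 1),
      ∫ v, ‖v‖ ^ q.1 * ‖iteratedFDeriv ℝ q.2 (fun v => f (p, v)) v‖ ≤
      ∑ m ∈ Finset.range (n + 1), ∫ _ in Metric.closedBall (0 : V) R, M m := by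
    rw [Finset.sum_product]
    simp only [zero_add, Finset.range_one, Finset.sum_singleton, pow_zero, one_mul]
    refine Finset.sum_le_sum fun m _ => ?_
    rw [← setIntegral_eq_integral_of_forall_compl_eq_zero (s := Metric.closedBall (0 : V) R)
      (fun x hx => by rw [hzero m x hx, norm_zero])]
    exact setIntegral_mono_on
      ((hcont m).norm.continuousOn.integrableOn_compact (isCompact_closedBall _ _))
      (continuousOn_const.integrableOn_compact (isCompact_closedBall _ _))
      measurableSet_closedBall (fun x hx => hM m p hp x hx)
  simp only [pow_zero, Nat.cast_zero, mul_zero, zero_add, one_mul] at hsum ⊢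
  gcongr

/-- The map dilating by `lam` in the direction of the unit vector `θ` and fixing its orthogonal
complement. -/
def dilateAlong (lam : ℝ) (θ x : E3) : E3 := x + ((lam - 1) * inner ℝ θ x) • θ

/-- The symbol of the kernel after rescaling to unit frequency and unit angle. -/
def rescaledSymbol (ψ : ℝ → ℝ) (q : (ℝ × E3) × E3) : EuclideanSpace ℂ (Fin 3) :=
  (Complex.I * (((‖dilateAlong q.1.1 q.1.2 q.2‖ ^ 2 : ℝ) : ℂ))⁻¹ *
      ((ψ ‖dilateAlong q.1.1 q.1.2 q.2‖ - ψ (2 * ‖dilateAlong q.1.1 q.1.2 q.2‖) : ℝ) : ℂ) *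
      ((ψ (inner ℝ q.1.2 q.2 / ‖dilateAlong q.1.1 q.1.2 q.2‖) : ℝ) : ℂ)) •
    WithLp.toLp 2 (fun j => ((dilateAlong q.1.1 q.1.2 q.2 j : ℝ) : ℂ))

theorem contDiff_dilateAlong :
    ContDiff ℝ (⊤ : ℕ∞) (fun q : (ℝ × E3) × E3 => dilateAlong q.1.1 q.1.2 q.2) := by
  have hθ : ContDiff ℝ (⊤ : ℕ∞) (fun q : (ℝ × E3) × E3 => q.1.2) := by fun_prop
  have hinner := hθ.inner ℝ contDiff_snd
  unfold dilateAlong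
  fun_prop

theorem contDiff_rescaledSymbol {ψ : ℝ → ℝ} (hψ : ContDiff ℝ (⊤ : ℕ∞) ψ)
    (hψ_one : ∀ r : ℝ, |r| ≤ 5 / 4 → ψ r = 1) :
    ContDiff ℝ (⊤ : ℕ∞) (rescaledSymbol ψ) := by
  rw [contDiff_iff_contDiffAt]
  intro q
  by_cases hq : dilateAlong q.1.1 q.1.2 q.2 = 0
  · refine (contDiffAt_const (c := (0 : EuclideanSpace ℂ (Fin 3)))).congr_of_eventuallyEq ?_
    have hnear : ∀ᶠ q' : (ℝ × E3) × E3 in nhds q,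
        ‖dilateAlong q'.1.1 q'.1.2 q'.2‖ < 5 / 8 :=
      contDiff_dilateAlong.continuous.norm.continuousAt.eventually_lt continuousAt_const
        (by simp [hq])
    filter_upwards [hnear] with q' hq'
    have h0 := norm_nonneg (dilateAlong q'.1.1 q'.1.2 q'.2)
    rw [rescaledSymbol, hψ_one _ (by rw [abs_of_nonneg h0]; linarith),
      hψ_one _ (by rw [abs_of_nonneg (by positivity)]; linarith)]
    simp
  · have hB := contDiff_dilateAlong.contDiffAt (x := q)
    have hnorm := hB.norm ℝ hq
    have hne := norm_ne_zero_iff.mpr hq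
    have hofReal : ContDiff ℝ (⊤ : ℕ∞) (fun r : ℝ => (r : ℂ)) := Complex.ofRealCLM.contDiff
    have hinner : ContDiffAt ℝ (⊤ : ℕ∞)
        (fun q : (ℝ × E3) × E3 => (inner ℝ q.1.2 q.2 : ℝ)) q :=
      ContDiffAt.inner ℝ (by fun_prop) contDiffAt_snd
    unfold rescaledSymbol
    refine ContDiffAt.fun_smul (𝕜 := ℝ) ?_ ?_
    · refine ((contDiffAt_const.mul ?_).mul ?_).mul ?_
      · exact (hofReal.contDiffAt.comp q (hnorm.pow 2)).inv (by simpa using hq)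
      · exact hofReal.contDiffAt.comp q ((hψ.contDiffAt.comp q hnorm).sub
          (hψ.contDiffAt.comp q (contDiffAt_const.mul hnorm)))
      · exact hofReal.contDiffAt.comp q (hψ.contDiffAt.comp q (hinner.div hnorm hne))
    · refine (PiLp.contDiff_toLp (𝕜 := ℝ) (p := 2)).contDiffAt.comp q (contDiffAt_pi.2 fun j => ?_)
      exact hofReal.contDiffAt.comp q ((contDiff_piLp_apply (p := 2)).contDiffAt.comp q hB)

theorem rescaledSymbol_eq_zero {ψ : ℝ → ℝ}
    (hψ_supp : Function.support ψ ⊆ Set.Icc (-(3 / 2)) (3 / 2))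
    {lam : ℝ} (hlam : lam ∈ Icc (0 : ℝ) 1) {θ : E3} (hθ : ‖θ‖ = 1) {x : E3} (hx : 4 < ‖x‖) :
    rescaledSymbol ψ ((lam, θ), x) = 0 := by
  have hzero : ∀ r : ℝ, 3 / 2 < |r| → ψ r = 0 := by
    intro r hr
    by_contra hne
    exact absurd (abs_le.2 (hψ_supp hne)) (not_le.2 hr)
  have h0 := norm_nonneg (dilateAlong lam θ x)
  rcases lt_or_ge (3 / 2) ‖dilateAlong lam θ x‖ with hB | hB
  · simp only [rescaledSymbol]
    rw [hzero _ (by rwa [abs_of_nonneg h0]),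
      hzero (2 * _) (by rw [abs_of_nonneg (by positivity)]; linarith)]
    simp
  · have htri : ‖x‖ ≤ ‖dilateAlong lam θ x‖ + |(inner ℝ θ x : ℝ)| := by
      have hsub : x = dilateAlong lam θ x - ((lam - 1) * inner ℝ θ x) • θ := by
        simp [dilateAlong]
      calc ‖x‖ = ‖dilateAlong lam θ x - ((lam - 1) * inner ℝ θ x) • θ‖ := by rw [← hsub]
        _ ≤ ‖dilateAlong lam θ x‖ + ‖((lam - 1) * inner ℝ θ x) • θ‖ := norm_sub_le _ _
        _ ≤ ‖dilateAlong lam θ x‖ + |(inner ℝ θ x : ℝ)| := by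
          rw [norm_smul, hθ, mul_one, Real.norm_eq_abs, abs_mul]
          gcongr
          exact mul_le_of_le_one_left (abs_nonneg _)
            (abs_le.2 ⟨by linarith [hlam.1], by linarith [hlam.2]⟩)
    rcases h0.eq_or_lt with hB0 | hBpos
    · simp [rescaledSymbol, ← hB0]
    · simp only [rescaledSymbol]
      rw [hzero (inner ℝ θ x / _) ?_]
      · simp
      · rw [abs_div, abs_of_pos hBpos, lt_div_iff₀ hBpos]
        linarith

theorem norm_rescaled_frequency_sq (c lam : ℝ) {θ : E3} (hθ : ‖θ‖ = 1) (y : E3) :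
    ‖c • dilateAlong lam θ y‖ ^ 2 =
      (c * lam * inner ℝ y θ) ^ 2 + (c * ‖y - (inner ℝ y θ : ℝ) • θ‖) ^ 2 := by
  have hθθ : (inner ℝ θ θ : ℝ) = 1 := by rw [real_inner_self_eq_norm_sq, hθ, one_pow]
  rw [norm_smul, mul_pow, mul_pow c, Real.norm_eq_abs, sq_abs, ← real_inner_self_eq_norm_sq,
    ← real_inner_self_eq_norm_sq, dilateAlong]
  simp only [inner_add_left, inner_add_right, inner_sub_left, inner_sub_right, inner_smul_left,
    inner_smul_right, hθθ, real_inner_comm θ y, RCLike.conj_to_real]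
  ring

theorem angKernel_eq_integral_rescaledSymbol (ψ : ℝ → ℝ) (k l : ℤ) {θ : E3} (hθ : ‖θ‖ = 1)
    (y : E3) :
    angKernel ψ k l θ y = ((2 : ℝ) ^ (2 * k + l)) •
      ∫ x, Complex.exp (Complex.I *
        ((inner ℝ ((2 : ℝ) ^ k • dilateAlong (2 ^ l) θ y) x : ℝ) : ℂ)) •
          rescaledSymbol ψ (((2 : ℝ) ^ l, θ), x) := by
  have hc : (0 : ℝ) < 2 ^ k := by positivity
  have hlam : (0 : ℝ) < 2 ^ l := by positivity
  have hθθ : (inner ℝ θ θ : ℝ) = 1 := by rw [real_inner_self_eq_norm_sq, hθ, one_pow]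
  set T : E3 →ₗ[ℝ] E3 := (2 : ℝ) ^ k •
    LinearMap.transvection (((2 : ℝ) ^ l - 1) • (innerₛₗ ℝ θ)) θ with hT
  have hTapply : ∀ x, LinearMap.toContinuousLinearMap T x =
      (2 : ℝ) ^ k • dilateAlong (2 ^ l) θ x := by
    intro x
    simp [hT, LinearMap.transvection.apply, dilateAlong]
  have hdet : (LinearMap.toContinuousLinearMap T).det = 2 ^ (3 * k + l) := by
    rw [LinearMap.det_toContinuousLinearMap, hT, LinearMap.det_smul, LinearMap.transvection.det]
    simp [hθ, zpow_add₀, zpow_mul']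
  rw [angKernel, integral_eq_abs_det_smul_integral_comp volume _ (by rw [hdet]; positivity), hdet,
    abs_of_pos (by positivity)]
  rw [show (3 * k + l) = (2 * k + l) + k by ring, zpow_add₀ two_ne_zero, mul_smul, ← integral_smul]
  congr 2 with x j
  rw [hTapply]
  have hnorm : ‖(2 : ℝ) ^ k • dilateAlong (2 ^ l) θ x‖ = 2 ^ k * ‖dilateAlong (2 ^ l) θ x‖ := by
    rw [norm_smul, Real.norm_of_nonneg hc.le]
  have hfreq : ‖(2 : ℝ) ^ k • dilateAlong (2 ^ l) θ x‖ / 2 ^ k = ‖dilateAlong (2 ^ l) θ x‖ := by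
    rw [hnorm]; field_simp
  have hfreq' : ‖(2 : ℝ) ^ k • dilateAlong (2 ^ l) θ x‖ / 2 ^ (k - 1) =
      2 * ‖dilateAlong (2 ^ l) θ x‖ := by
    rw [hnorm, zpow_sub_one₀ two_ne_zero]; field_simp
  have hangle : (inner ℝ θ ((2 : ℝ) ^ k • dilateAlong (2 ^ l) θ x) : ℝ) /
      ‖(2 : ℝ) ^ k • dilateAlong (2 ^ l) θ x‖ / 2 ^ l =
      inner ℝ θ x / ‖dilateAlong (2 ^ l) θ x‖ := by
    have hinner : (inner ℝ θ (dilateAlong (2 ^ l) θ x) : ℝ) = 2 ^ l * inner ℝ θ x := by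
      rw [dilateAlong, inner_add_right, inner_smul_right, hθθ]; ring
    rw [hnorm, inner_smul_right, hinner, mul_div_mul_left _ _ hc.ne', div_div, mul_comm _ (2 ^ l),
      mul_div_mul_left _ _ hlam.ne']
  have hphase : (inner ℝ y ((2 : ℝ) ^ k • dilateAlong (2 ^ l) θ x) : ℝ) =
      inner ℝ ((2 : ℝ) ^ k • dilateAlong (2 ^ l) θ y) x := by
    simp only [dilateAlong, inner_smul_left, inner_smul_right, inner_add_left, inner_add_right,
      RCLike.conj_to_real, real_inner_comm θ y]
    ring
  rw [hfreq, hfreq', hangle, hphase, hnorm, rescaledSymbol]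
  simp only [PiLp.smul_apply, smul_eq_mul, Complex.real_smul, mul_pow, Complex.ofReal_mul,
    Complex.ofReal_pow, mul_inv]
  push_cast
  field_simp

/-- Anisotropic decay of the angularly localized kernel:
`|K_{k,l,θ}(y)| ≤ C_N 2^{2k+l} (1 + 2^{k+l}|y⋅θ|)^{-N} (1 + 2^k |y - (y⋅θ)θ|)^{-N}`. -/
theorem ang_kernel_bound
    (ψ : ℝ → ℝ) (hψ_smooth : ContDiff ℝ (⊤ : ℕ∞) ψ) (hψ_even : ∀ r, ψ (-r) = ψ r)
    (hψ_range : ∀ r, ψ r ∈ Set.Icc (0 : ℝ) 1)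
    (hψ_supp : Function.support ψ ⊆ Set.Icc (-(3 / 2)) (3 / 2))
    (hψ_one : ∀ r : ℝ, |r| ≤ 5 / 4 → ψ r = 1)
    (N : ℕ) :
    ∃ C : ℝ, ∀ (k l : ℤ), l ≤ 0 → ∀ θ : E3, ‖θ‖ = 1 → ∀ y : E3,
      ‖angKernel ψ k l θ y‖ ≤
        C * (2 : ℝ) ^ (2 * k + l) *
          (((1 + (2 : ℝ) ^ (k + l) * |(inner ℝ y θ : ℝ)|) ^ N))⁻¹ *
          (((1 + (2 : ℝ) ^ k * ‖y - (inner ℝ y θ : ℝ) • θ‖) ^ N))⁻¹ := by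
  have hP : IsCompact (Icc (0 : ℝ) 1 ×ˢ Metric.sphere (0 : E3) 1) :=
    isCompact_Icc.prod (isCompact_sphere 0 1)
  have hsupp : ∀ p ∈ Icc (0 : ℝ) 1 ×ˢ Metric.sphere (0 : E3) 1, ∀ x, 4 < ‖x‖ →
      rescaledSymbol ψ (p, x) = 0 := fun p hp x hx =>
    rescaledSymbol_eq_zero hψ_supp hp.1 (by simpa using hp.2) hx
  have hsmooth := contDiff_rescaledSymbol hψ_smooth hψ_one
  obtain ⟨C₀, hC₀⟩ := exists_pow_mul_norm_integral_exp_inner_smul_le hsmooth hP hsupp 0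
  obtain ⟨C₁, hC₁⟩ := exists_pow_mul_norm_integral_exp_inner_smul_le hsmooth hP hsupp (2 * N)
  refine ⟨2 ^ (2 * N) * (C₀ + C₁), fun k l hl θ hθ y => ?_⟩
  have hmem : ((2 : ℝ) ^ l, θ) ∈ Icc (0 : ℝ) 1 ×ˢ Metric.sphere (0 : E3) 1 :=
    ⟨⟨by positivity, zpow_le_one_of_nonpos₀ one_le_two hl⟩, by simpa using hθ⟩
  rw [angKernel_eq_integral_rescaledSymbol ψ k l hθ y, norm_smul,
    Real.norm_of_nonneg (by positivity)]
  have hsq := norm_rescaled_frequency_sq (2 ^ k) (2 ^ l) hθ y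
  set z := (2 : ℝ) ^ k • dilateAlong (2 ^ l) θ y
  have h₀ := hC₀ _ hmem z
  have h₁ := hC₁ _ hmem z
  rw [pow_zero, one_mul] at h₀
  set J := ‖∫ x, Complex.exp (Complex.I * ((inner ℝ z x : ℝ) : ℂ)) •
    rescaledSymbol ψ (((2 : ℝ) ^ l, θ), x)‖
  have hpar : (2 : ℝ) ^ (k + l) * |(inner ℝ y θ : ℝ)| ≤ ‖z‖ := by
    refine le_of_sq_le_sq ?_ (norm_nonneg z)
    rw [hsq, mul_pow, sq_abs, zpow_add₀ two_ne_zero, ← mul_pow]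
    exact le_add_of_nonneg_right (sq_nonneg _)
  have hperp : (2 : ℝ) ^ k * ‖y - (inner ℝ y θ : ℝ) • θ‖ ≤ ‖z‖ := by
    refine le_of_sq_le_sq ?_ (norm_nonneg z)
    rw [hsq]
    exact le_add_of_nonneg_left (sq_nonneg _)
  have hweight : (1 + (2 : ℝ) ^ (k + l) * |(inner ℝ y θ : ℝ)|) ^ N *
      (1 + (2 : ℝ) ^ k * ‖y - (inner ℝ y θ : ℝ) • θ‖) ^ N ≤
      2 ^ (2 * N) * (1 + ‖z‖ ^ (2 * N)) := by
    calc _ ≤ (1 + ‖z‖) ^ N * (1 + ‖z‖) ^ N := by gcongr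
      _ = (1 + ‖z‖) ^ (2 * N) := by rw [← pow_add, two_mul]
      _ ≤ 2 ^ (2 * N) * (1 + ‖z‖ ^ (2 * N)) := by
        have hz := norm_nonneg z
        rcases le_total ‖z‖ 1 with h | h
        · calc (1 + ‖z‖) ^ (2 * N) ≤ 2 ^ (2 * N) := by gcongr; linarith
            _ ≤ _ := le_mul_of_one_le_right (by positivity)
              (le_add_of_nonneg_right (by positivity))
        · calc (1 + ‖z‖) ^ (2 * N) ≤ (2 * ‖z‖) ^ (2 * N) := by gcongr; linarith
            _ ≤ _ := by rw [mul_pow]; gcongr; linarith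
  rw [← div_eq_mul_inv, ← div_eq_mul_inv, div_div, le_div_iff₀ (by positivity)]
  calc (2 : ℝ) ^ (2 * k + l) * J * _
      ≤ (2 : ℝ) ^ (2 * k + l) * J * (2 ^ (2 * N) * (1 + ‖z‖ ^ (2 * N))) := by gcongr
    _ = 2 ^ (2 * N) * (J + ‖z‖ ^ (2 * N) * J) * (2 : ℝ) ^ (2 * k + l) := by ring
    _ ≤ 2 ^ (2 * N) * (C₀ + C₁) * (2 : ℝ) ^ (2 * k + l) := by gcongr
end
end

section
/- There is an absolute constant $C$ such that for all unit vectors $a, b \in \mathbb{S}^2 \subset \mathbb{R}^3$ and all $\epsilon \in (0,1)$, the surface measure of the set $\{c \in \mathbb{S}^2 : |(a - c) \times b| \le \epsilon\}$ is at most $C\, \epsilon^{3/2}$. -/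
open MeasureTheory Real Set
noncomputable section

/-- The cross product on `ℝ³` (with the Euclidean norm). -/
def cross3 (u v : E3) : E3 :=
  !₂[u 1 * v 2 - u 2 * v 1, u 2 * v 0 - u 0 * v 2, u 0 * v 1 - u 1 * v 0]

/-- Lagrange's identity for `cross3`. -/
lemma norm_cross3_sq (w b : E3) :
    ‖cross3 w b‖ ^ 2 = ‖w‖ ^ 2 * ‖b‖ ^ 2 - (inner ℝ b w) ^ 2 := by
  simp only [EuclideanSpace.norm_sq_eq, PiLp.inner_apply, cross3, Fin.sum_univ_three,
    Real.norm_eq_abs, sq_abs, RCLike.inner_apply, conj_trivial]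
  simp
  ring

/-- A map that is antilipschitz on a set `S` controls the Hausdorff measure of `S`. -/
lemma hausdorffMeasure_le_of_dist_le {X Y : Type*} [MetricSpace X] [MeasurableSpace X]
    [BorelSpace X] [MetricSpace Y] [MeasurableSpace Y] [BorelSpace Y] {d : ℝ} (hd : 0 ≤ d)
    (K : NNReal) (f : X → Y) (S : Set X) (T : Set Y) (hT : ∀ c ∈ S, f c ∈ T)
    (h : ∀ c ∈ S, ∀ c' ∈ S, dist c c' ≤ K * dist (f c) (f c')) :
    μH[d] S ≤ (K : ENNReal) ^ d * μH[d] T := by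
  have hanti : AntilipschitzWith K (fun c : S => f c) :=
    AntilipschitzWith.of_le_mul_dist fun c c' => h c c.2 c' c'.2
  have hS : μH[d] S = μH[d] (univ : Set S) := by
    have := (isometry_subtype_coe (s := S)).hausdorffMeasure_image (Or.inl hd) univ
    rwa [image_univ, Subtype.range_coe] at this
  rw [hS]
  refine (hanti.le_hausdorffMeasure_image hd univ).trans ?_
  gcongr
  rintro _ ⟨c, -, rfl⟩
  exact hT c c.2

/-- On a part of the sphere where the `i`-th coordinate keeps its sign and is at least `1/2` in
absolute value, area is controlled by that of the projection to the other two coordinates. -/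
lemma hausdorffMeasure_sphere_patch_le (i j k : Fin 3)
    (hijk : ∀ f : Fin 3 → ℝ, ∑ l, f l = f i + f j + f k) (S : Set E3)
    (hS : ∀ c ∈ S, ‖c‖ = 1) (hi : ∀ c ∈ S, ∀ c' ∈ S, 1 ≤ |c i + c' i|)
    (J K : Set ℝ) (hJ : ∀ c ∈ S, c j ∈ J) (hK : ∀ c ∈ S, c k ∈ K) :
    μH[2] S ≤ 25 * (volume J * volume K) := by
  have hnorm : ∀ c ∈ S, c i ^ 2 + c j ^ 2 + c k ^ 2 = 1 := fun c hc => by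
    have := EuclideanSpace.norm_sq_eq c
    rw [hijk, hS c hc] at this
    simpa using this.symm
  have key := hausdorffMeasure_le_of_dist_le (d := 2) (by norm_num) 5
    (fun c : E3 => (![c j, c k] : Fin 2 → ℝ)) S (univ.pi ![J, K])
    (fun c hc => by
      intro l _
      fin_cases l
      · exact hJ c hc
      · exact hK c hc)
    (fun c hc c' hc' => by
      set m := dist (![c j, c k] : Fin 2 → ℝ) ![c' j, c' k]
      have hm0 : 0 ≤ m := dist_nonneg
      have hj : |c j - c' j| ≤ m := dist_le_pi_dist (![c j, c k] : Fin 2 → ℝ) ![c' j, c' k] 0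
      have hk : |c k - c' k| ≤ m := dist_le_pi_dist (![c j, c k] : Fin 2 → ℝ) ![c' j, c' k] 1
      have h1 := hnorm c hc
      have h2 := hnorm c' hc'
      have bd : ∀ x y z : ℝ, x ^ 2 + y ^ 2 + z ^ 2 = 1 → |y| ≤ 1 ∧ |z| ≤ 1 := fun x y z h =>
        ⟨abs_le_one_iff_mul_self_le_one.2 (by nlinarith),
          abs_le_one_iff_mul_self_le_one.2 (by nlinarith)⟩
      obtain ⟨b1, b2⟩ := bd _ _ _ h1
      obtain ⟨b3, b4⟩ := bd _ _ _ h2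
      have diff : ∀ x y : ℝ, |x| ≤ 1 → |y| ≤ 1 → |x - y| ≤ m → |(x - y) * (x + y)| ≤ m * 2 :=
        fun x y hx hy hxy => by
          rw [abs_mul]
          have := abs_add_le x y
          exact mul_le_mul hxy (by linarith) (abs_nonneg _) hm0
      have e1 := diff _ _ b1 b3 hj
      have e2 := diff _ _ b2 b4 hk
      have hci : |c i - c' i| ≤ 4 * m := by
        have e3 : |c i - c' i| * |c i + c' i|
            = |(c j - c' j) * (c j + c' j) + (c k - c' k) * (c k + c' k)| := by
          rw [← abs_mul, ← abs_neg]
          congr 1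
          linarith
        have e4 := abs_add_le ((c j - c' j) * (c j + c' j)) ((c k - c' k) * (c k + c' k))
        have e5 := le_mul_of_one_le_right (abs_nonneg (c i - c' i)) (hi c hc c' hc')
        linarith
      have hsq : dist c c' ^ 2 = (c i - c' i) ^ 2 + (c j - c' j) ^ 2 + (c k - c' k) ^ 2 := by
        rw [dist_eq_norm, EuclideanSpace.norm_sq_eq, hijk]
        simp
      have s1 := sq_le_sq' (abs_le.1 hci).1 (abs_le.1 hci).2
      have s2 := sq_le_sq' (abs_le.1 hj).1 (abs_le.1 hj).2
      have s3 := sq_le_sq' (abs_le.1 hk).1 (abs_le.1 hk).2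
      refine abs_le_of_sq_le_sq' ?_ (by positivity) |>.2
      rw [hsq]
      push_cast
      nlinarith)
  have hvol : (μH[2] : Measure (Fin 2 → ℝ)) = volume := by
    simpa using hausdorffMeasure_pi_real (ι := Fin 2)
  rw [hvol, volume_pi_pi] at key
  refine key.trans (le_of_eq ?_)
  norm_num [Fin.prod_univ_two]

lemma volume_abs_sq_sub_le (M r : ℝ) (hr : 0 ≤ r) :
    volume {z : ℝ | |z ^ 2 - M| ≤ r} ≤ ENNReal.ofReal (2 * √(2 * r)) := by
  have hsub : {z : ℝ | |z ^ 2 - M| ≤ r} ⊆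
      Icc (√(M - r)) (√(M + r)) ∪ Icc (-√(M + r)) (-√(M - r)) := by
    intro z hz
    obtain ⟨h1, h2⟩ := abs_le.1 (mem_ofPred.1 hz)
    have h3 : √(M - r) ≤ |z| := Real.sqrt_le_iff.2 ⟨abs_nonneg _, by rw [sq_abs]; linarith⟩
    have h4 : |z| ≤ √(M + r) := Real.abs_le_sqrt (by linarith)
    rcases abs_cases z with ⟨h, -⟩ | ⟨h, -⟩
    · left; constructor <;> linarith
    · right; constructor <;> linarith
  have hlen : √(M + r) - √(M - r) ≤ √(2 * r) := by
    have := Real.sqrt_nonneg (M - r)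
    rw [sub_le_iff_le_add, Real.sqrt_le_iff]
    refine ⟨by positivity, ?_⟩
    have h1 : M - r ≤ √(M - r) ^ 2 := by
      rcases le_total 0 (M - r) with h | h
      · rw [Real.sq_sqrt h]
      · exact h.trans (sq_nonneg _)
    have h2 := Real.sq_sqrt (show 0 ≤ 2 * r by linarith)
    nlinarith [Real.sqrt_nonneg (2 * r)]
  refine (measure_mono hsub).trans ((measure_union_le _ _).trans ?_)
  rw [Real.volume_Icc, Real.volume_Icc, two_mul, ENNReal.ofReal_add (by positivity) (by positivity)]
  gcongr
  linarith

/-- The part of the unit sphere over a square of side `2ε` in a coordinate plane. -/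
lemma hausdorffMeasure_sphere_over_square_le (q : E3) (hq : ‖q‖ = 1) (ε : ℝ) (h0 : 0 < ε)
    (h1 : ε < 1) :
    μH[2] {c : E3 | ‖c‖ = 1 ∧ |c 0 - q 0| ≤ ε ∧ |c 1 - q 1| ≤ ε} ≤
      ENNReal.ofReal (1600 * ε ^ ((3 : ℝ) / 2)) := by
  set A := {c : E3 | ‖c‖ = 1 ∧ |c 0 - q 0| ≤ ε ∧ |c 1 - q 1| ≤ ε}
  set X := Icc (q 0 - ε) (q 0 + ε)
  set Y := Icc (q 1 - ε) (q 1 + ε)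
  set Z := {z : ℝ | |z ^ 2 - q 2 ^ 2| ≤ 6 * ε}
  have hnorm : ∀ c : E3, ‖c‖ = 1 → c 0 ^ 2 + c 1 ^ 2 + c 2 ^ 2 = 1 := fun c hc => by
    have := EuclideanSpace.norm_sq_eq c
    rw [Fin.sum_univ_three, hc] at this
    simpa using this.symm
  have hX : ∀ c ∈ A, c 0 ∈ X := fun c hc => by
    obtain ⟨h, h'⟩ := abs_le.1 hc.2.1
    constructor <;> linarith
  have hY : ∀ c ∈ A, c 1 ∈ Y := fun c hc => by
    obtain ⟨h, h'⟩ := abs_le.1 hc.2.2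
    constructor <;> linarith
  have hZ : ∀ c ∈ A, c 2 ∈ Z := fun c hc => by
    have e1 := hnorm c hc.1
    have e2 := hnorm q hq
    have diff : ∀ x y : ℝ, |y| ≤ 1 → |x - y| ≤ ε → |x ^ 2 - y ^ 2| ≤ 3 * ε :=
      fun x y hy hxy => by
        have e : x ^ 2 - y ^ 2 = (x - y) * ((x - y) + (y + y)) := by ring
        have t1 := abs_add_le (x - y) (y + y)
        have t2 := abs_add_le y y
        rw [e, abs_mul, mul_comm 3 ε]
        exact mul_le_mul hxy (by linarith) (abs_nonneg _) h0.le
    have d1 := abs_le.1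
      (diff _ _ (abs_le_one_iff_mul_self_le_one.2 (by nlinarith)) hc.2.1)
    have d2 := abs_le.1
      (diff _ _ (abs_le_one_iff_mul_self_le_one.2 (by nlinarith)) hc.2.2)
    exact mem_ofPred.2 <| abs_le.2 ⟨by linarith [d1.2, d2.2], by linarith [d1.1, d2.1]⟩
  have patch : ∀ (i j k : Fin 3) (J K : Set ℝ),
      (∀ f : Fin 3 → ℝ, ∑ l, f l = f i + f j + f k) → (∀ c ∈ A, c j ∈ J) → (∀ c ∈ A, c k ∈ K) →
      μH[2] (A ∩ {c | 1 / 2 ≤ |c i|}) ≤ 50 * (volume J * volume K) := by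
    intro i j k J K hijk hJ hK
    have hsub : A ∩ {c | 1 / 2 ≤ |c i|} ⊆
        (A ∩ {c | 1 / 2 ≤ c i}) ∪ (A ∩ {c | c i ≤ -(1 / 2)}) := by
      rintro c ⟨hc, hc'⟩
      rcases le_abs.1 (mem_ofPred.1 hc') with h | h
      · exact Or.inl ⟨hc, h⟩
      · exact Or.inr ⟨hc, show c i ≤ -(1 / 2) by linarith⟩
    have hpos := hausdorffMeasure_sphere_patch_le i j k hijk (A ∩ {c | 1 / 2 ≤ c i})
      (fun c hc => hc.1.1)
      (fun c hc c' hc' => le_abs.2 (Or.inl (by linarith [mem_ofPred.1 hc.2, mem_ofPred.1 hc'.2])))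
      J K (fun c hc => hJ c hc.1) (fun c hc => hK c hc.1)
    have hneg := hausdorffMeasure_sphere_patch_le i j k hijk (A ∩ {c | c i ≤ -(1 / 2)})
      (fun c hc => hc.1.1)
      (fun c hc c' hc' => le_abs.2 (Or.inr (by linarith [mem_ofPred.1 hc.2, mem_ofPred.1 hc'.2])))
      J K (fun c hc => hJ c hc.1) (fun c hc => hK c hc.1)
    refine (measure_mono hsub).trans ((measure_union_le _ _).trans ((add_le_add hpos hneg).trans ?_))
    rw [← add_mul]
    norm_num
  have hcover : A ⊆ (A ∩ {c | 1 / 2 ≤ |c 0|}) ∪ (A ∩ {c | 1 / 2 ≤ |c 1|}) ∪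
      (A ∩ {c | 1 / 2 ≤ |c 2|}) := by
    intro c hc
    by_contra hcon
    simp only [mem_union, mem_inter_iff, hc, true_and, mem_ofPred_eq, not_or, not_le] at hcon
    obtain ⟨⟨t0, t1⟩, t2⟩ := hcon
    have e := hnorm c hc.1
    have s0 := sq_lt_sq' (abs_lt.1 t0).1 (abs_lt.1 t0).2
    have s1 := sq_lt_sq' (abs_lt.1 t1).1 (abs_lt.1 t1).2
    have s2 := sq_lt_sq' (abs_lt.1 t2).1 (abs_lt.1 t2).2
    linarith
  have vX : volume X = ENNReal.ofReal (2 * ε) := by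
    rw [Real.volume_Icc]; congr 1; ring
  have vY : volume Y = ENNReal.ofReal (2 * ε) := by
    rw [Real.volume_Icc]; congr 1; ring
  have hsqrt : 2 * √(2 * (6 * ε)) ≤ 7 * √ε := by
    have : √(2 * (6 * ε)) ≤ 7 / 2 * √ε := by
      rw [Real.sqrt_le_iff]
      refine ⟨by positivity, ?_⟩
      rw [mul_pow, Real.sq_sqrt h0.le]
      linarith
    linarith
  have vZ : volume Z ≤ ENNReal.ofReal (7 * √ε) :=
    (volume_abs_sq_sub_le _ _ (by positivity)).trans (ENNReal.ofReal_le_ofReal hsqrt)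
  have p0 := patch 0 1 2 Y Z (fun f => Fin.sum_univ_three f) hY hZ
  have p1 := patch 1 0 2 X Z (fun f => by rw [Fin.sum_univ_three]; ring) hX hZ
  have p2 := patch 2 0 1 X Y (fun f => by rw [Fin.sum_univ_three]; ring) hX hY
  have hpow : ε ^ ((3 : ℝ) / 2) = ε * √ε := by
    rw [Real.sqrt_eq_rpow, show (3 : ℝ) / 2 = 1 + 1 / 2 by norm_num, Real.rpow_add h0,
      Real.rpow_one]
  have hε : ε ≤ √ε := Real.le_sqrt_of_sq_le (by nlinarith)
  calc μH[2] A ≤ 50 * (volume Y * volume Z) + 50 * (volume X * volume Z)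
        + 50 * (volume X * volume Y) :=
        (measure_mono hcover).trans ((measure_union_le _ _).trans
          (add_le_add ((measure_union_le _ _).trans (add_le_add p0 p1)) p2))
    _ ≤ ENNReal.ofReal 50 * (ENNReal.ofReal (2 * ε) * ENNReal.ofReal (7 * √ε))
        + ENNReal.ofReal 50 * (ENNReal.ofReal (2 * ε) * ENNReal.ofReal (7 * √ε))
        + ENNReal.ofReal 50 * (ENNReal.ofReal (2 * ε) * ENNReal.ofReal (2 * ε)) := by
        rw [vX, vY, ENNReal.ofReal_ofNat]
        gcongr
    _ = ENNReal.ofReal (50 * (2 * ε * (7 * √ε)) + 50 * (2 * ε * (7 * √ε))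
        + 50 * (2 * ε * (2 * ε))) := by
        have hmul : ∀ x y z : ℝ, 0 ≤ x → 0 ≤ y → ENNReal.ofReal (x * (y * z)) =
            ENNReal.ofReal x * (ENNReal.ofReal y * ENNReal.ofReal z) := fun x y z hx hy => by
          rw [ENNReal.ofReal_mul hx, ENNReal.ofReal_mul hy]
        rw [ENNReal.ofReal_add (by positivity) (by positivity),
          ENNReal.ofReal_add (by positivity) (by positivity),
          hmul _ _ _ (by positivity) (by positivity), hmul _ _ _ (by positivity) (by positivity)]
    _ ≤ ENNReal.ofReal (1600 * ε ^ ((3 : ℝ) / 2)) := by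
        rw [hpow]
        apply ENNReal.ofReal_le_ofReal
        nlinarith [mul_le_mul_of_nonneg_left hε h0.le]

lemma exists_orthonormalBasis_eq_last (b : E3) (hb : ‖b‖ = 1) :
    ∃ B : OrthonormalBasis (Fin 3) ℝ E3, B 2 = b := by
  have hon : Orthonormal ℝ (({2} : Set (Fin 3)).domRestrict (fun _ => b)) := by
    refine ⟨fun _ => hb, fun i j hij => (hij (Subsingleton.elim i j)).elim⟩
  obtain ⟨B, hB⟩ := hon.exists_orthonormalBasis_extension_of_card_eq (by simp)
  exact ⟨B, hB 2 rfl⟩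

/-- For unit vectors `a, b` the set `{c ∈ 𝕊² : |(a-c) × b| ≤ ε}` has 2-dimensional
surface (Hausdorff) measure at most `C ε^{3/2}`. -/
theorem sphere_cap_bound :
    ∃ C : ℝ, ∀ a b : E3, ‖a‖ = 1 → ‖b‖ = 1 → ∀ ε ∈ Set.Ioo (0 : ℝ) 1,
      μH[2] {c : E3 | ‖c‖ = 1 ∧ ‖cross3 (a - c) b‖ ≤ ε} ≤
        ENNReal.ofReal (C * ε ^ ((3 : ℝ) / 2)) := by
  refine ⟨1600, fun a b ha hb ε hε => ?_⟩
  obtain ⟨B, rfl⟩ := exists_orthonormalBasis_eq_last b hb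
  have hbound := hausdorffMeasure_sphere_over_square_le (B.repr a)
    (by rw [LinearIsometryEquiv.norm_map, ha]) ε hε.1 hε.2
  rw [← B.repr.toIsometryEquiv.hausdorffMeasure_preimage] at hbound
  refine le_trans ?_ hbound
  apply measure_mono
  rintro c ⟨hc, hcross⟩
  have hsq : ‖cross3 (a - c) (B 2)‖ ^ 2
      = (B.repr c 0 - B.repr a 0) ^ 2 + (B.repr c 1 - B.repr a 1) ^ 2 := by
    rw [norm_cross3_sq, hb, ← B.repr_apply_apply, ← LinearIsometryEquiv.norm_map B.repr (a - c),
      EuclideanSpace.norm_sq_eq, Fin.sum_univ_three]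
    simp
    ring
  have hle : ‖cross3 (a - c) (B 2)‖ ^ 2 ≤ ε ^ 2 := pow_le_pow_left₀ (norm_nonneg _) hcross 2
  rw [hsq] at hle
  refine ⟨?_, ?_, ?_⟩
  · exact (LinearIsometryEquiv.norm_map _ _).trans hc
  · exact abs_le_of_sq_le_sq (by
      change (B.repr c 0 - B.repr a 0) ^ 2 ≤ _
      nlinarith [sq_nonneg (B.repr c 1 - B.repr a 1)]) hε.1.le
  · exact abs_le_of_sq_le_sq (by
      change (B.repr c 1 - B.repr a 1) ^ 2 ≤ _
      nlinarith [sq_nonneg (B.repr c 0 - B.repr a 0)]) hε.1.le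
end
end

section
/- There is an absolute constant $C$ with the following property. Let $g : \mathbb{R}^3 \to [0,\infty)$ be integrable and invariant under all rotations about the $x_3$-axis, i.e. $g(R_\theta y) = g(y)$ for all $\theta$, where $R_\theta(y_1,y_2,y_3) = (y_1\cos\theta - y_2\sin\theta,\, y_1\sin\theta + y_2\cos\theta,\, y_3)$. Then for every $x \in \mathbb{R}^3$ and every $R > 0$ with $|\slashed x| \ge 2R$, where $\slashed x := (x_1, x_2)$: $\int_{\{y : |y| \le R\}} g(x - y)\,dy \;\le\; \frac{C R}{|\slashed x|} \int_{\mathbb{R}^3} g(y)\,dy$. -/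
open MeasureTheory Real Set
noncomputable section

/-- Rotation by angle `θ` about the `x₃`-axis. -/
def rotZ (θ : ℝ) (x : E3) : E3 :=
  !₂[x 0 * Real.cos θ - x 1 * Real.sin θ, x 0 * Real.sin θ + x 1 * Real.cos θ, x 2]

theorem rotZ_rotZ (θ φ : ℝ) (x : E3) : rotZ θ (rotZ φ x) = rotZ (θ + φ) x := by
  ext i
  fin_cases i <;> simp [rotZ, Real.cos_add, Real.sin_add] <;> ring

theorem rotZ_zero (x : E3) : rotZ 0 x = x := by
  ext i
  fin_cases i <;> simp [rotZ]

theorem norm_rotZ (θ : ℝ) (x : E3) : ‖rotZ θ x‖ = ‖x‖ := by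
  simp only [EuclideanSpace.norm_eq, Fin.sum_univ_three, Real.norm_eq_abs, sq_abs]
  congr 1
  simp [rotZ]
  linear_combination (x 0 ^ 2 + x 1 ^ 2) * Real.sin_sq_add_cos_sq θ

/-- Rotation about the `x₃`-axis as a linear isometric automorphism. -/
def rotZIsometry (θ : ℝ) : E3 ≃ₗᵢ[ℝ] E3 where
  toFun := rotZ θ
  invFun := rotZ (-θ)
  left_inv x := by rw [rotZ_rotZ, neg_add_cancel, rotZ_zero]
  right_inv x := by rw [rotZ_rotZ, add_neg_cancel, rotZ_zero]
  map_add' x y := by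
    ext i
    fin_cases i <;> simp [rotZ] <;> ring
  map_smul' c x := by
    ext i
    fin_cases i <;> simp [rotZ] <;> ring
  norm_map' := norm_rotZ θ

/-- The chord between two rotated copies of a point is at least as long as
twice the sine of half the angle times the distance to the axis. -/
theorem chord_le_dist_rotZ (θ φ : ℝ) (x : E3) :
    2 * Real.sin ((θ - φ) / 2) * Real.sqrt (x 0 ^ 2 + x 1 ^ 2) ≤
      dist (rotZ θ x) (rotZ φ x) := by
  rw [EuclideanSpace.dist_eq]
  apply Real.le_sqrt_of_sq_le
  simp only [Fin.sum_univ_three, Real.dist_eq, sq_abs]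
  rw [mul_pow, Real.sq_sqrt (by positivity), mul_pow, Real.sin_sq_eq_half_sub]
  simp only [rotZ, mul_div_cancel₀ (θ - φ) (two_ne_zero' ℝ), Real.cos_sub]
  simp
  apply le_of_eq
  linear_combination (-(x 0 ^ 2 + x 1 ^ 2)) *
    (Real.sin_sq_add_cos_sq θ + Real.sin_sq_add_cos_sq φ)

theorem setIntegral_closedBall_rotZ {g : E3 → ℝ}
    (hg : ∀ (θ : ℝ) (y : E3), g (rotZ θ y) = g y) (θ : ℝ) (x : E3) (R : ℝ) :
    ∫ y in Metric.closedBall (rotZ θ x) R, g y = ∫ y in Metric.closedBall x R, g y := by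
  have h := (rotZIsometry θ).measurePreserving.setIntegral_preimage_emb
    (rotZIsometry θ).toHomeomorph.measurableEmbedding g (Metric.closedBall (rotZ θ x) R)
  rw [← h, LinearIsometryEquiv.preimage_closedBall,
    show rotZ θ x = rotZIsometry θ x from rfl, LinearIsometryEquiv.symm_apply_apply]
  exact integral_congr_ae (.of_forall (hg θ))

theorem setIntegral_norm_le_sub (g : E3 → ℝ) (x : E3) (R : ℝ) :
    ∫ y in {y : E3 | ‖y‖ ≤ R}, g (x - y) = ∫ y in Metric.closedBall x R, g y := by
  have h := (Measure.measurePreserving_sub_left volume x).setIntegral_preimage_emb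
    (Homeomorph.subLeft x).measurableEmbedding g (Metric.closedBall x R)
  rw [← h]
  congr 2
  ext y
  simp

/-- If `N R` is smaller than the distance of `x` to the axis, then `N` rotated copies of the
ball of radius `R` about `x` can be placed disjointly. -/
theorem pairwise_disjoint_closedBall_rotZ {x : E3} {R : ℝ} {N : ℕ}
    (hN : N * R < Real.sqrt (x 0 ^ 2 + x 1 ^ 2)) :
    Pairwise (Function.onFun Disjoint fun k : Fin N =>
      Metric.closedBall (rotZ (π * k / N) x) R) := by
  refine (pairwise_disjoint_on _).2 fun j k hjk => ?_
  have hN0 : (0 : ℝ) < N := by exact_mod_cast j.pos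
  have hjk' : (j : ℝ) + 1 ≤ k := by exact_mod_cast hjk
  have hkN : (k : ℝ) ≤ N := by exact_mod_cast k.is_lt.le
  have hj : (0 : ℝ) ≤ (j : ℕ) := Nat.cast_nonneg _
  have heq : (π * k / N - π * j / N) / 2 = π / 2 * ((k - j) / N) := by ring
  have hfrac : ((k : ℝ) - j) / N ≤ 1 := by rw [div_le_one hN0]; linarith
  have hfrac' : 1 / (N : ℝ) ≤ ((k : ℝ) - j) / N := by gcongr; linarith
  have hsin := Real.mul_le_sin (x := π / 2 * (((k : ℝ) - j) / N))
    (mul_nonneg (by positivity) ((one_div_pos.2 hN0).le.trans hfrac'))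
    (mul_le_of_le_one_right (by positivity) hfrac)
  rw [show 2 / π * (π / 2 * (((k : ℝ) - j) / N)) = ((k : ℝ) - j) / N by
    field_simp] at hsin
  have hchord := chord_le_dist_rotZ (π * k / N) (π * j / N) x
  rw [heq] at hchord
  refine (Metric.closedBall_disjoint_closedBall ?_).symm
  have hR : R < 1 / N * Real.sqrt (x 0 ^ 2 + x 1 ^ 2) := by
    rw [one_div_mul_eq_div, lt_div_iff₀ hN0]; linarith
  have hle := mul_le_mul_of_nonneg_right (hfrac'.trans hsin)
    (Real.sqrt_nonneg (x 0 ^ 2 + x 1 ^ 2))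
  linarith

theorem natCast_mul_setIntegral_closedBall_le {g : E3 → ℝ} (hint : Integrable g volume)
    (hpos : ∀ y, 0 ≤ g y) (hg : ∀ (θ : ℝ) (y : E3), g (rotZ θ y) = g y)
    {x : E3} {R : ℝ} {N : ℕ} (hN : N * R < Real.sqrt (x 0 ^ 2 + x 1 ^ 2)) :
    N * ∫ y in Metric.closedBall x R, g y ≤ ∫ y, g y := by
  have h := integral_iUnion_fintype (μ := volume) (f := g)
    (fun k : Fin N => Metric.isClosed_closedBall.measurableSet)
    (pairwise_disjoint_closedBall_rotZ hN) (fun _ => hint.integrableOn)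
  simp only [setIntegral_closedBall_rotZ hg, Finset.sum_const, Finset.card_univ,
    Fintype.card_fin, nsmul_eq_mul] at h
  rw [← h]
  exact setIntegral_le_integral hint (.of_forall hpos)

/-- Cylindrical averaging estimate: for an axially symmetric nonnegative integrable
density `g`, the mass in a ball of radius `R` centered at a point at distance
`|x̸| ≥ 2R` from the symmetry axis is at most `C (R/|x̸|)` times the total mass. -/
theorem cylindrical_mass_bound :
    ∃ C : ℝ, ∀ g : E3 → ℝ, Integrable g volume → (∀ y, 0 ≤ g y) →
      (∀ (θ : ℝ) (y : E3), g (rotZ θ y) = g y) →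
      ∀ (x : E3) (R : ℝ), 0 < R → 2 * R ≤ Real.sqrt (x 0 ^ 2 + x 1 ^ 2) →
        (∫ y in {y : E3 | ‖y‖ ≤ R}, g (x - y)) ≤
          C * R / Real.sqrt (x 0 ^ 2 + x 1 ^ 2) * ∫ y, g y := by
  refine ⟨2, fun g hint hpos hg x R hR hx => ?_⟩
  rw [setIntegral_norm_le_sub]
  set r := Real.sqrt (x 0 ^ 2 + x 1 ^ 2)
  have hr0 : 0 < r := by linarith
  have hlow : r / (2 * R) ≤ ⌈r / (2 * R)⌉₊ := Nat.le_ceil _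
  have hup : (⌈r / (2 * R)⌉₊ : ℝ) < r / (2 * R) + 1 := Nat.ceil_lt_add_one (by positivity)
  have hN : ⌈r / (2 * R)⌉₊ * R < r := by
    have h := mul_lt_mul_of_pos_right hup hR
    have hhalf : (r / (2 * R) + 1) * R = r / 2 + R := by field_simp
    linarith
  have hmass := natCast_mul_setIntegral_closedBall_le hint hpos hg hN
  have hball : 0 ≤ ∫ y in Metric.closedBall x R, g y := integral_nonneg hpos
  calc ∫ y in Metric.closedBall x R, g y
      = 2 * R / r * (r / (2 * R) * ∫ y in Metric.closedBall x R, g y) := by field_simp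
    _ ≤ 2 * R / r * ∫ y, g y := by
      gcongr
      exact (mul_le_mul_of_nonneg_right hlow hball).trans hmass
end
end

section
/- Let $n_c = 10^{7}$, $\epsilon = 10/n_c$, $\epsilon^\star = \epsilon/100$. For every $D > 0$ there exist constants $C$ and $K_0$ with the following property. Let $f$ be a classical solution of the relativistic Vlasov–Poisson system on $[0,T]$ that is axially symmetric, i.e. $f(t, R_\theta x, R_\theta v) = f(t,x,v)$ for every rotation $R_\theta$ about the $x_3$-axis, with $\|f(s,\cdot,\cdot)\|_{L^\infty} \le D$ and $\iint (1+|v|) f(s,x,v)\,dx\,dv \le D$ for all $s \in [0,T]$. Define $\tilde M := (1+T)^{n_c^2} + \sup_{s \in [0,T]} \iint (1+|v|)^{n_c} f(s,x,v)\,dx\,dv$, assumed finite, let $M_T$ be the least nonnegative integer $k$ with $2^k \ge \tilde M^{1/(n_c - 1)}$, and assume in addition that $\sup_{s \in [0,T]} \iint (1+|x|+|v|)^{n_c} f(s,x,v)\,dx\,dv \le \tilde M$. If $M_T \ge K_0$, then $\int_0^T \int_{\mathbb{R}^3}\int_{\mathbb{R}^3} \frac{|\slashed v|^{2 + 2\epsilon^\star}}{|\slashed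 x|^{1 - 2\epsilon^\star}\, \sqrt{1+|v|^2}}\, f(s,x,v)\,dx\,dv\,ds \;\le\; C\, 2^{5 \epsilon M_T}$. -/
open MeasureTheory Real Set
noncomputable section

/-- The relativistic velocity `v̂ = v / √(1+|v|²)`. -/
def vhat (v : E3) : E3 := (Real.sqrt (1 + ‖v‖ ^ 2))⁻¹ • v

/-- The spatial density `ρ(t,x) = ∫ f(t,x,v) dv`. -/
def rvpRho (f : ℝ → E3 → E3 → ℝ) (t : ℝ) (x : E3) : ℝ := ∫ v, f t x v

/-- The electric field `E(t,x) = (4π)⁻¹ ∫ (x-y) ρ(t,y)/|x-y|³ dy`. -/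
def rvpField (f : ℝ → E3 → E3 → ℝ) (t : ℝ) (x : E3) : E3 :=
  (4 * Real.pi)⁻¹ • ∫ y, (rvpRho f t y / ‖x - y‖ ^ 3) • (x - y)

/-- `f` is a classical solution of the relativistic Vlasov–Poisson system on the
time interval `I`: it is nonnegative, `C¹`, and satisfies the transport equation
`∂ₜ f + v̂ ⋅ ∇ₓ f + E ⋅ ∇ᵥ f = 0` pointwise (phrased as the vanishing of the
derivative of `f` in the direction `(1, v̂, E(t,x))`). -/
def IsRVPSolution (I : Set ℝ) (f : ℝ → E3 → E3 → ℝ) : Prop :=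
  (∀ t ∈ I, ∀ x v, 0 ≤ f t x v) ∧
  ContDiffOn ℝ 1 (fun p : ℝ × E3 × E3 => f p.1 p.2.1 p.2.2) (I ×ˢ (Set.univ : Set (E3 × E3))) ∧
  ∀ t ∈ I, ∀ x v,
    fderivWithin ℝ (fun p : ℝ × E3 × E3 => f p.1 p.2.1 p.2.2)
      (I ×ˢ (Set.univ : Set (E3 × E3))) (t, x, v) (1, vhat v, rvpField f t x) = 0

/-- The norm `|x̸|` of the horizontal projection `x̸ = (x₁, x₂)`. -/
def slashN (x : E3) : ℝ := Real.sqrt (x 0 ^ 2 + x 1 ^ 2)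

/-- The constant `n_c = 10⁷`, as a real number. -/
def ncR : ℝ := 10 ^ 7

/-- The constant `ε = 10 / n_c`. -/
def epsC : ℝ := 10 / 10 ^ 7

/-- The constant `ε⋆ = ε / 100`. -/
def epsStar : ℝ := epsC / 100

/-- The `n_c`-th velocity moment `M_{n_c}(s)`, with `n_c = 10⁷`. -/
def momentNc (f : ℝ → E3 → E3 → ℝ) (s : ℝ) : ℝ :=
  ∫ p : E3 × E3, (1 + ‖p.2‖) ^ (10 ^ 7 : ℕ) * f s p.1 p.2

/-- The enlarged moment `\tilde M^c(t) = (1+t)^{n_c²} + sup_{s ∈ [0,t]} M_{n_c}(s)`. -/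
def tildeMc (f : ℝ → E3 → E3 → ℝ) (t : ℝ) : ℝ :=
  (1 + t) ^ (10 ^ 14 : ℕ) + sSup (momentNc f '' Set.Icc 0 t)

/-! ### Integrable kernels -/

theorem ae_coord_ne_zero (i : Fin 3) : ∀ᵐ x : E3, x i ≠ 0 := by
  have h : ∀ᵐ y : Fin 3 → ℝ, y i ≠ 0 := by
    have := Measure.ae_eval_ne (μ := fun _ : Fin 3 => (volume : Measure ℝ)) i 0
    exact this
  exact (PiLp.volume_preserving_ofLp (Fin 3)).quasiMeasurePreserving.ae h

theorem integrable_indicator_norm_rpow {E : Type*} [NormedAddCommGroup E] [NormedSpace ℝ E]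
    [FiniteDimensional ℝ E] [MeasurableSpace E] [BorelSpace E] (μ : Measure E)
    [μ.IsAddHaarMeasure] (hd : 1 ≤ Module.finrank ℝ E) {a : ℝ}
    (ha : a < Module.finrank ℝ E) :
    Integrable ((Metric.ball (0 : E) 1).indicator fun z => ‖z‖ ^ (-a)) μ := by
  rw [integrable_indicator_iff measurableSet_ball]
  refine integrableOn_ball_of_norm_le_rpow (C := 1) (α := a) hd ha ?_ ?_
  · refine Filter.Eventually.of_forall fun x => ?_
    rw [one_mul, Real.norm_of_nonneg (by positivity)]
  · exact (measurable_norm.pow_const _).aestronglyMeasurable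

theorem measurable_slashN : Measurable slashN := by
  unfold slashN; fun_prop

theorem slashN_nonneg (x : E3) : 0 ≤ slashN x := Real.sqrt_nonneg _

/-- A kernel, integrable over `ℝ³`, dominating the singularity of `1 / |x̸|` near the axis. -/
def axisKernel (x : E3) : ℝ :=
  {x : E3 | slashN x < 1}.indicator (fun x => slashN x ^ (-(3 / 2) : ℝ)) x *
    (1 + |x 2|) ^ (-2 : ℝ)

theorem axisKernel_nonneg (x : E3) : 0 ≤ axisKernel x := by
  refine mul_nonneg (indicator_nonneg (fun y _ => ?_) _) (by positivity)
  exact Real.rpow_nonneg (slashN_nonneg y) _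

theorem abs_coord_le_slashN (x : E3) : |x 0| ≤ slashN x ∧ |x 1| ≤ slashN x :=
  ⟨Real.abs_le_sqrt (by nlinarith [sq_nonneg (x 1)]),
    Real.abs_le_sqrt (by nlinarith [sq_nonneg (x 0)])⟩

theorem measurable_axisKernel : Measurable axisKernel := by
  refine Measurable.mul (Measurable.indicator (measurable_slashN.pow_const _)
    (measurableSet_lt measurable_slashN measurable_const)) ?_
  fun_prop

theorem integrable_axisKernel : Integrable axisKernel := by
  let k : ℝ → ℝ := (Metric.ball (0 : ℝ) 1).indicator fun z => ‖z‖ ^ (-(3 / 4) : ℝ)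
  have hk : Integrable k :=
    integrable_indicator_norm_rpow volume (by simp) (a := 3 / 4) (by norm_num)
  have hj : Integrable (fun s : ℝ => (1 + ‖s‖) ^ (-2 : ℝ)) :=
    integrable_one_add_norm (by norm_num)
  have hprod : Integrable (fun y : Fin 3 → ℝ =>
      ∏ i, (![k, k, fun s : ℝ => (1 + ‖s‖) ^ (-2 : ℝ)] i) (y i)) := by
    refine Integrable.fintype_prod (μ := fun _ => volume) fun i => ?_
    fin_cases i
    · exact hk
    · exact hk
    · exact hj
  have hE : Integrable (fun x : E3 => k (x 0) * k (x 1) * (1 + ‖x 2‖) ^ (-2 : ℝ)) := by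
    have h := (PiLp.volume_preserving_ofLp (Fin 3)).integrable_comp
      hprod.aestronglyMeasurable |>.2 hprod
    refine h.congr (Filter.Eventually.of_forall fun x => ?_)
    simp [Fin.prod_univ_three]
  refine hE.mono' measurable_axisKernel.aestronglyMeasurable ?_
  filter_upwards [ae_coord_ne_zero 0, ae_coord_ne_zero 1] with x h0 h1
  rw [Real.norm_of_nonneg (axisKernel_nonneg x)]
  obtain ⟨ha, hb⟩ := abs_coord_le_slashN x
  have h0 : 0 < |x 0| := abs_pos.2 h0
  have h1 : 0 < |x 1| := abs_pos.2 h1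
  unfold axisKernel
  rw [Real.norm_eq_abs]
  refine mul_le_mul_of_nonneg_right ?_ (by positivity)
  by_cases hx : slashN x < 1
  · rw [indicator_of_mem (show x ∈ {x : E3 | slashN x < 1} from hx)]
    have e0 : k (x 0) = |x 0| ^ (-(3 / 4) : ℝ) :=
      indicator_of_mem (by rw [mem_ball_zero_iff, Real.norm_eq_abs]; linarith) _
    have e1 : k (x 1) = |x 1| ^ (-(3 / 4) : ℝ) :=
      indicator_of_mem (by rw [mem_ball_zero_iff, Real.norm_eq_abs]; linarith) _
    have hs : 0 < slashN x := h0.trans_le ha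
    rw [e0, e1, show (-(3 / 2) : ℝ) = -(3 / 4) + -(3 / 4) by norm_num, Real.rpow_add hs]
    exact mul_le_mul (Real.rpow_le_rpow_of_nonpos h0 ha (by norm_num))
      (Real.rpow_le_rpow_of_nonpos h1 hb (by norm_num)) (by positivity) (by positivity)
  · rw [indicator_of_notMem (show x ∉ {x : E3 | slashN x < 1} from hx)]
    exact mul_nonneg (indicator_nonneg (fun _ _ => by positivity) _)
      (indicator_nonneg (fun _ _ => by positivity) _)

/-! ### The Coulomb field of a phase-space density -/

theorem inv_sq_split {s W : ℝ} (hs : 0 < s) (hW : 1 ≤ W) :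
    (s ^ 2)⁻¹ ≤ W ^ 16 ∨ (s < 1 ∧ (s ^ 2)⁻¹ ≤ s ^ (-(5 / 2) : ℝ) * W ^ (-4 : ℝ)) := by
  have hW0 : 0 < W := by linarith
  rcases le_or_gt 1 (s * W ^ 8) with h | h
  · left
    rw [inv_le_iff_one_le_mul₀ (by positivity)]
    calc (1 : ℝ) ≤ (s * W ^ 8) ^ 2 := one_le_pow₀ h
      _ = W ^ 16 * s ^ 2 := by ring
  · right
    have h1 : s < 1 := by
      have : (1 : ℝ) ≤ W ^ 8 := one_le_pow₀ hW
      nlinarith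
    refine ⟨h1, ?_⟩
    have h2 : s ^ (1 / 2 : ℝ) * W ^ (4 : ℝ) ≤ 1 := by
      have : (s * W ^ 8) ^ (1 / 2 : ℝ) ≤ 1 := Real.rpow_le_one (by positivity) h.le (by norm_num)
      rw [Real.mul_rpow hs.le (by positivity), ← Real.rpow_natCast, ← Real.rpow_mul hW0.le] at this
      norm_num at this ⊢
      exact this
    have h3 : (s ^ 2)⁻¹ = s ^ (-(5 / 2) : ℝ) * s ^ (1 / 2 : ℝ) := by
      rw [← Real.rpow_add hs, ← Real.rpow_natCast, ← Real.rpow_neg hs.le]; norm_num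
    rw [h3, Real.rpow_neg hW0.le]
    refine mul_le_mul_of_nonneg_left ?_ (by positivity)
    rw [← one_div, le_div_iff₀ (by positivity)]
    exact h2

/-- The phase-space weight `1 + |x| + |v|`. -/
def phaseWeight (p : E3 × E3) : ℝ := 1 + ‖p.1‖ + ‖p.2‖

theorem one_le_phaseWeight (p : E3 × E3) : 1 ≤ phaseWeight p := by
  unfold phaseWeight; linarith [norm_nonneg p.1, norm_nonneg p.2]

theorem continuous_phaseWeight : Continuous phaseWeight := by
  unfold phaseWeight; fun_prop

/-- The kernel dominating the Coulomb singularity where particles are close but slow. -/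
def closeKernel (x : E3) (p : E3 × E3) : ℝ :=
  (Metric.ball (0 : E3) 1).indicator (fun z => ‖z‖ ^ (-(5 / 2) : ℝ)) (x - p.1) *
    (1 + ‖p.2‖) ^ (-4 : ℝ)

theorem closeKernel_nonneg (x : E3) (p : E3 × E3) : 0 ≤ closeKernel x p :=
  mul_nonneg (indicator_nonneg (fun _ _ => by positivity) _) (by positivity)

theorem integrable_closeKernel (x : E3) : Integrable (closeKernel x) := by
  have h1 : Integrable ((Metric.ball (0 : E3) 1).indicator fun z => ‖z‖ ^ (-(5 / 2) : ℝ)) :=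
    integrable_indicator_norm_rpow volume (by simp) (by norm_num)
  have h2 : Integrable (fun w : E3 => (1 + ‖w‖) ^ (-4 : ℝ)) :=
    integrable_one_add_norm (by norm_num)
  exact (h1.comp_sub_left x).mul_prod h2

theorem integral_closeKernel (x : E3) : ∫ p, closeKernel x p = ∫ p, closeKernel 0 p := by
  have key : ∀ x : E3, ∫ p, closeKernel x p =
      (∫ z : E3, (Metric.ball (0 : E3) 1).indicator (fun z => ‖z‖ ^ (-(5 / 2) : ℝ)) z) *
        ∫ w : E3, (1 + ‖w‖) ^ (-4 : ℝ) := by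
    intro x
    rw [← integral_sub_left_eq_self _ volume x]
    exact integral_prod_mul
      (fun y : E3 => (Metric.ball (0 : E3) 1).indicator (fun z => ‖z‖ ^ (-(5 / 2) : ℝ)) (x - y))
      (fun w : E3 => (1 + ‖w‖) ^ (-4 : ℝ))
  rw [key, key]

theorem mul_inv_sq_le_closeKernel {g : E3 × E3 → ℝ} {D : ℝ} (h0 : ∀ p, 0 ≤ g p)
    (hD : ∀ p, g p ≤ D) (x : E3) (p : E3 × E3) :
    g p * (‖x - p.1‖ ^ 2)⁻¹ ≤ phaseWeight p ^ 20 * g p + D * closeKernel x p := by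
  have hg := h0 p
  have hD0 : 0 ≤ D := hg.trans (hD p)
  have hk := closeKernel_nonneg x p
  have hq := one_le_phaseWeight p
  have hq20 : 0 ≤ phaseWeight p ^ 20 * g p := by positivity
  rcases (norm_nonneg (x - p.1)).eq_or_lt with h | h
  · rw [← h]; simp only [ne_eq, OfNat.ofNat_ne_zero, not_false_eq_true, zero_pow, inv_zero,
      mul_zero]; positivity
  rcases inv_sq_split h (W := 1 + ‖p.2‖) (by linarith [norm_nonneg p.2]) with h1 | ⟨h1, h2⟩
  · have : (1 + ‖p.2‖) ^ 16 ≤ phaseWeight p ^ 20 := by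
      calc (1 + ‖p.2‖) ^ 16 ≤ phaseWeight p ^ 16 := by
            gcongr; unfold phaseWeight; linarith [norm_nonneg p.1]
        _ ≤ phaseWeight p ^ 20 := pow_le_pow_right₀ hq (by norm_num)
    nlinarith [mul_nonneg hD0 hk]
  · have : (‖x - p.1‖ ^ 2)⁻¹ ≤ closeKernel x p := by
      unfold closeKernel
      rwa [indicator_of_mem (by rwa [mem_ball_zero_iff])]
    have h3 : 0 ≤ (‖x - p.1‖ ^ 2)⁻¹ := by positivity
    calc g p * (‖x - p.1‖ ^ 2)⁻¹ ≤ D * closeKernel x p := mul_le_mul (hD p) this h3 hD0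
      _ ≤ _ := by linarith

/-- Nonnegative continuous bounded phase-space densities with twenty finite moments. -/
structure IsPhaseDensity (D : ℝ) (g : E3 × E3 → ℝ) : Prop where
  continuous : Continuous g
  nonneg : ∀ p, 0 ≤ g p
  le_bound : ∀ p, g p ≤ D
  integrable_moment : Integrable fun p => phaseWeight p ^ 20 * g p

namespace IsPhaseDensity

variable {D : ℝ} {g : E3 × E3 → ℝ}

theorem bound_nonneg (h : IsPhaseDensity D g) : 0 ≤ D := (h.nonneg 0).trans (h.le_bound 0)

theorem integrable_mul_of_le (h : IsPhaseDensity D g) {w : E3 × E3 → ℝ} (hw : Measurable w)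
    {c : ℝ} (hc : ∀ p, |w p| ≤ c * phaseWeight p ^ 20) : Integrable fun p => w p * g p := by
  refine (h.integrable_moment.const_mul c).mono'
    (hw.mul h.continuous.measurable).aestronglyMeasurable (.of_forall fun p => ?_)
  rw [norm_mul, Real.norm_eq_abs, Real.norm_of_nonneg (h.nonneg p), ← mul_assoc]
  exact mul_le_mul_of_nonneg_right (hc p) (h.nonneg p)

theorem integrable_inv_sq (h : IsPhaseDensity D g) (x : E3) :
    Integrable fun p : E3 × E3 => g p * (‖x - p.1‖ ^ 2)⁻¹ := by
  refine (h.integrable_moment.add ((integrable_closeKernel x).const_mul D)).mono' ?_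
    (.of_forall fun p => ?_)
  · have := h.continuous.measurable
    exact Measurable.aestronglyMeasurable (by fun_prop)
  · rw [Real.norm_of_nonneg (mul_nonneg (h.nonneg p) (by positivity))]
    exact mul_inv_sq_le_closeKernel h.nonneg h.le_bound x p

theorem integral_inv_sq_le (h : IsPhaseDensity D g) (x : E3) :
    ∫ p : E3 × E3, g p * (‖x - p.1‖ ^ 2)⁻¹ ≤
      (∫ p, phaseWeight p ^ 20 * g p) + D * ∫ p, closeKernel 0 p := by
  rw [← integral_closeKernel x, ← integral_const_mul,
    ← integral_add h.integrable_moment ((integrable_closeKernel x).const_mul D)]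
  exact integral_mono (h.integrable_inv_sq x)
    (h.integrable_moment.add ((integrable_closeKernel x).const_mul D))
    fun p => mul_inv_sq_le_closeKernel h.nonneg h.le_bound x p

end IsPhaseDensity

/-- The spatial density of a phase-space density. -/
def spatialDensity (g : E3 × E3 → ℝ) (x : E3) : ℝ := ∫ v, g (x, v)

/-- The Coulomb field generated by a phase-space density. -/
def coulombField (g : E3 × E3 → ℝ) (x : E3) : E3 :=
  (4 * Real.pi)⁻¹ • ∫ y, (spatialDensity g y / ‖x - y‖ ^ 3) • (x - y)

namespace IsPhaseDensity

variable {D : ℝ} {g : E3 × E3 → ℝ}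

theorem spatialDensity_nonneg (h : IsPhaseDensity D g) (x : E3) : 0 ≤ spatialDensity g x :=
  integral_nonneg fun _ => h.nonneg _

theorem measurable_spatialDensity (h : IsPhaseDensity D g) : Measurable (spatialDensity g) :=
  (h.continuous.stronglyMeasurable.integral_prod_right' (ν := volume)).measurable

/-- A uniform bound for the Coulomb field. -/
def fieldBound (D : ℝ) (g : E3 × E3 → ℝ) : ℝ :=
  (∫ p, phaseWeight p ^ 20 * g p) + D * ∫ p, closeKernel 0 p

theorem norm_coulomb_integrand (h : IsPhaseDensity D g) (x y : E3) :
    ‖(spatialDensity g y / ‖x - y‖ ^ 3) • (x - y)‖ = spatialDensity g y * (‖x - y‖ ^ 2)⁻¹ := by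
  have hr := h.spatialDensity_nonneg y
  rw [norm_smul, Real.norm_of_nonneg (by positivity)]
  rcases eq_or_ne (‖x - y‖) 0 with h0 | h0
  · simp [h0]
  · field_simp

theorem integrable_spatialDensity_inv_sq (h : IsPhaseDensity D g) (x : E3) :
    Integrable fun y => spatialDensity g y * (‖x - y‖ ^ 2)⁻¹ := by
  have := (h.integrable_inv_sq x).integral_prod_left
  simp only [integral_mul_const] at this
  exact this

theorem integral_spatialDensity_inv_sq_le (h : IsPhaseDensity D g) (x : E3) :
    ∫ y, spatialDensity g y * (‖x - y‖ ^ 2)⁻¹ ≤ fieldBound D g := by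
  refine le_trans (le_of_eq ?_) (h.integral_inv_sq_le x)
  have := integral_prod _ (h.integrable_inv_sq x)
  simp only [integral_mul_const] at this
  exact this.symm

theorem measurable_coulomb_integrand (h : IsPhaseDensity D g) :
    Measurable fun z : E3 × E3 => (spatialDensity g z.2 / ‖z.1 - z.2‖ ^ 3) • (z.1 - z.2) := by
  have := h.measurable_spatialDensity
  fun_prop

theorem integrable_coulomb_integrand (h : IsPhaseDensity D g) (x : E3) :
    Integrable fun y => (spatialDensity g y / ‖x - y‖ ^ 3) • (x - y) := by
  refine (h.integrable_spatialDensity_inv_sq x).mono'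
    (h.measurable_coulomb_integrand.comp measurable_prodMk_left).aestronglyMeasurable
    (.of_forall fun y => (h.norm_coulomb_integrand x y).le)

theorem measurable_coulombField (h : IsPhaseDensity D g) : Measurable (coulombField g) := by
  have := h.measurable_coulomb_integrand.stronglyMeasurable.integral_prod_right'
    (ν := (volume : Measure E3))
  exact this.measurable.const_smul (4 * Real.pi)⁻¹

theorem inv_four_pi_le_one : (4 * Real.pi)⁻¹ ≤ 1 :=
  inv_le_one_of_one_le₀ (by linarith [Real.pi_gt_three])

theorem norm_coulombField_le (h : IsPhaseDensity D g) (x : E3) :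
    ‖coulombField g x‖ ≤ fieldBound D g := by
  unfold coulombField
  rw [norm_smul, Real.norm_of_nonneg (by positivity)]
  refine (mul_le_of_le_one_left (norm_nonneg _) inv_four_pi_le_one).trans ?_
  refine (norm_integral_le_integral_norm _).trans ?_
  simp only [h.norm_coulomb_integrand]
  exact h.integral_spatialDensity_inv_sq_le x

theorem integrable_weight_spatialDensity (h : IsPhaseDensity D g) :
    Integrable fun x => (1 + ‖x‖) * spatialDensity g x := by
  have := (h.integrable_mul_of_le (w := fun p => 1 + ‖p.1‖) (c := 1) (by fun_prop)
    fun p => ?_).integral_prod_left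
  · simp only [integral_const_mul] at this
    exact this
  · rw [one_mul, abs_of_nonneg (by positivity)]
    refine le_trans ?_ (le_self_pow₀ (one_le_phaseWeight p) (by norm_num))
    unfold phaseWeight; linarith [norm_nonneg p.2]

open scoped InnerProductSpace in
/-- The repulsive Coulomb force does nonnegative work along a monotone vector field. -/
theorem integral_inner_coulombField_nonneg (h : IsPhaseDensity D g) {u : E3 → E3}
    (hu : Measurable u) (hle : ∀ x, ‖u x‖ ≤ 1 + ‖x‖)
    (hmono : ∀ x y, 0 ≤ ⟪x - y, u x - u y⟫_ℝ) :
    0 ≤ ∫ p : E3 × E3, ⟪coulombField g p.1, u p.1⟫_ℝ * g p := by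
  let ρ := spatialDensity g
  let H : E3 × E3 → ℝ := fun z => ρ z.1 * ⟪u z.1, (ρ z.2 / ‖z.1 - z.2‖ ^ 3) • (z.1 - z.2)⟫_ℝ
  have hρ := h.measurable_spatialDensity
  have hρ0 := h.spatialDensity_nonneg
  have hHm : Measurable H := by
    have h1 := h.measurable_coulomb_integrand
    exact (hρ.comp measurable_fst).mul ((hu.comp measurable_fst).inner h1)
  have hHle : ∀ x y, ‖H (x, y)‖ ≤ (1 + ‖x‖) * ρ x * (ρ y * (‖x - y‖ ^ 2)⁻¹) := by
    intro x y
    simp only [H]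
    rw [norm_mul, Real.norm_of_nonneg (hρ0 x), ← h.norm_coulomb_integrand x y, mul_comm (1 + ‖x‖),
      mul_assoc]
    refine mul_le_mul_of_nonneg_left ((norm_inner_le_norm _ _).trans ?_) (hρ0 x)
    exact mul_le_mul_of_nonneg_right (hle x) (norm_nonneg _)
  have hHx : ∀ x, Integrable fun y => H (x, y) := fun x =>
    ((h.integrable_coulomb_integrand x).const_inner (u x)).const_mul (ρ x)
  have hHint : Integrable H (volume.prod volume) := by
    rw [integrable_prod_iff hHm.aestronglyMeasurable]
    refine ⟨.of_forall hHx, ?_⟩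
    refine (h.integrable_weight_spatialDensity.mul_const (fieldBound D g)).mono'
      (hHm.norm.stronglyMeasurable.integral_prod_right').aestronglyMeasurable
      (.of_forall fun x => ?_)
    rw [Real.norm_of_nonneg (integral_nonneg fun _ => norm_nonneg _)]
    have hw : 0 ≤ (1 + ‖x‖) * ρ x := mul_nonneg (by positivity) (hρ0 x)
    refine (integral_mono (hHx x).norm
      ((h.integrable_spatialDensity_inv_sq x).const_mul ((1 + ‖x‖) * ρ x)) (hHle x)).trans ?_
    rw [integral_const_mul]
    exact mul_le_mul_of_nonneg_left (h.integral_spatialDensity_inv_sq_le x) hw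
  have hI : ∫ p : E3 × E3, ⟪coulombField g p.1, u p.1⟫_ℝ * g p =
      (4 * Real.pi)⁻¹ * ∫ z, H z ∂(volume.prod volume) := by
    have hint : Integrable (fun p : E3 × E3 => ⟪coulombField g p.1, u p.1⟫_ℝ * g p) := by
      have hE := h.measurable_coulombField
      refine h.integrable_mul_of_le (c := fieldBound D g)
        ((hE.comp measurable_fst).inner (hu.comp measurable_fst)) fun p => ?_
      refine (abs_real_inner_le_norm _ _).trans ?_
      have h2 : 1 + ‖p.1‖ ≤ phaseWeight p ^ 20 := by
        refine le_trans ?_ (le_self_pow₀ (one_le_phaseWeight p) (by norm_num))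
        unfold phaseWeight; linarith [norm_nonneg p.2]
      exact mul_le_mul (h.norm_coulombField_le _) ((hle _).trans h2) (norm_nonneg _)
        ((norm_nonneg _).trans (h.norm_coulombField_le 0))
    rw [integral_prod _ hHint, ← integral_const_mul]
    refine (integral_prod _ hint).trans (integral_congr_ae (.of_forall fun x => ?_))
    simp only [H]
    rw [integral_const_mul, integral_const_mul, integral_inner (h.integrable_coulomb_integrand x),
      coulombField, real_inner_smul_left, real_inner_comm]
    simp only [ρ, spatialDensity]
    ring
  rw [hI]
  refine mul_nonneg (by positivity) ?_
  have hswap : ∫ z, H z.swap ∂(volume.prod volume) = ∫ z, H z ∂(volume.prod volume) :=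
    integral_prod_swap H
  have hsum : 0 ≤ ∫ z, (H z + H z.swap) ∂(volume.prod volume) := by
    refine integral_nonneg fun z => ?_
    have : H z + H z.swap = ρ z.1 * ρ z.2 / ‖z.1 - z.2‖ ^ 3 * ⟪z.1 - z.2, u z.1 - u z.2⟫_ℝ := by
      simp only [H, Prod.fst_swap, Prod.snd_swap, inner_smul_right, norm_sub_rev z.2 z.1]
      rw [← neg_sub z.1 z.2, inner_neg_right, real_inner_comm (z.1 - z.2) (u z.1),
        real_inner_comm (z.1 - z.2) (u z.2), inner_sub_right (z.1 - z.2)]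
      ring
    simp only [Pi.zero_apply]
    rw [this]
    exact mul_nonneg (div_nonneg (mul_nonneg (hρ0 _) (hρ0 _)) (by positivity)) (hmono _ _)
  have hadd : ∫ z, (H z + H z.swap) ∂(volume.prod volume) =
      (∫ z, H z ∂(volume.prod volume)) + ∫ z, H z.swap ∂(volume.prod volume) :=
    integral_add hHint hHint.swap
  linarith

end IsPhaseDensity

/-! ### Weak form of the transport equation -/

theorem hasCompactSupport_comp_prodMk {α β : Type*} [TopologicalSpace α] [TopologicalSpace β]
    [T2Space α] [T2Space β] {Ψ : α × β → ℝ} (hs : HasCompactSupport Ψ) :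
    (∀ x, HasCompactSupport fun v => Ψ (x, v)) ∧ ∀ v, HasCompactSupport fun x => Ψ (x, v) := by
  refine ⟨fun x => HasCompactSupport.intro (hs.isCompact.image continuous_snd) fun v hv => ?_,
    fun v => HasCompactSupport.intro (hs.isCompact.image continuous_fst) fun x hx => ?_⟩
  · exact image_eq_zero_of_notMem_tsupport fun h => hv ⟨(x, v), h, rfl⟩
  · exact image_eq_zero_of_notMem_tsupport fun h => hx ⟨(x, v), h, rfl⟩

section

variable {E F : Type*} [NormedAddCommGroup E] [NormedSpace ℝ E]
  [NormedAddCommGroup F] [NormedSpace ℝ F]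

theorem integrable_mul_fderiv_of_hasCompactSupport [MeasurableSpace E] [BorelSpace E]
    [FiniteDimensional ℝ E] {μ : Measure E} [IsFiniteMeasureOnCompacts μ] {Φ G : E → ℝ}
    (hΦ : Continuous Φ) (hs : HasCompactSupport Φ) (hG : ContDiff ℝ 1 G) {b : E → E}
    (hb : Measurable b) {K : ℝ} (hK : ∀ p, ‖b p‖ ≤ K) :
    Integrable (fun p => Φ p * fderiv ℝ G p (b p)) μ := by
  have hG' : Continuous (fderiv ℝ G) := hG.continuous_fderiv (by norm_num)
  have h1 : Integrable (fun p => Φ p * ‖fderiv ℝ G p‖ * K) μ :=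
    (Continuous.integrable_of_hasCompactSupport (by fun_prop) hs.mul_right).mul_const K
  refine h1.norm.mono' ?_ (.of_forall fun p => ?_)
  · refine (hΦ.measurable.mul ?_).aestronglyMeasurable
    exact (isBoundedBilinearMap_apply (𝕜 := ℝ) (E := E) (F := ℝ)).continuous.measurable.comp
      (hG'.measurable.prodMk hb)
  · have hK0 : 0 ≤ K := (norm_nonneg _).trans (hK p)
    rw [norm_mul, norm_mul, norm_mul, norm_norm, Real.norm_of_nonneg hK0, mul_assoc]
    gcongr
    exact (ContinuousLinearMap.le_opNorm _ _).trans (by gcongr; exact hK p)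

theorem integrable_fderiv_mul_of_hasCompactSupport [MeasurableSpace E] [BorelSpace E]
    [FiniteDimensional ℝ E] {μ : Measure E} [IsFiniteMeasureOnCompacts μ] {Φ G : E → ℝ}
    (hΦ : ContDiff ℝ 1 Φ) (hs : HasCompactSupport Φ) (hG : Continuous G) {b : E → E}
    (hb : Measurable b) {K : ℝ} (hK : ∀ p, ‖b p‖ ≤ K) :
    Integrable (fun p => fderiv ℝ Φ p (b p) * G p) μ := by
  have hΦ' : Continuous (fderiv ℝ Φ) := hΦ.continuous_fderiv (by norm_num)
  have h1 : Integrable (fun p => ‖fderiv ℝ Φ p‖ * G p * K) μ :=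
    (Continuous.integrable_of_hasCompactSupport (by fun_prop)
      ((hs.fderiv (𝕜 := ℝ)).norm.mul_right)).mul_const K
  refine h1.norm.mono' ?_ (.of_forall fun p => ?_)
  · refine (Measurable.mul ?_ hG.measurable).aestronglyMeasurable
    exact (isBoundedBilinearMap_apply (𝕜 := ℝ) (E := E) (F := ℝ)).continuous.measurable.comp
      (hΦ'.measurable.prodMk hb)
  · have hK0 : 0 ≤ K := (norm_nonneg _).trans (hK p)
    rw [norm_mul, norm_mul, norm_mul, norm_norm, Real.norm_of_nonneg hK0, mul_right_comm]
    gcongr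
    exact (ContinuousLinearMap.le_opNorm _ _).trans (by gcongr; exact hK p)

theorem integral_mul_fderiv_eq_neg [MeasurableSpace E] [BorelSpace E]
    [FiniteDimensional ℝ E] {μ : Measure E} [μ.IsAddHaarMeasure] {Φ G : E → ℝ}
    (hΦ : ContDiff ℝ 1 Φ) (hs : HasCompactSupport Φ) (hG : ContDiff ℝ 1 G) (b : E) :
    ∫ p, Φ p * fderiv ℝ G p b ∂μ = -∫ p, fderiv ℝ Φ p b * G p ∂μ :=
  integral_mul_fderiv_eq_neg_fderiv_mul_of_integrable
    (integrable_fderiv_mul_of_hasCompactSupport hΦ hs hG.continuous measurable_const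
      fun _ => le_rfl)
    (integrable_mul_fderiv_of_hasCompactSupport hΦ.continuous hs hG measurable_const
      fun _ => le_rfl)
    ((hΦ.continuous.mul hG.continuous).integrable_of_hasCompactSupport hs.mul_right)
    (fun x _ => hΦ.differentiable (by norm_num) x) (fun x _ => hG.differentiable (by norm_num) x)

theorem fderiv_comp_prodMk_right {G : E × F → ℝ} (hG : Differentiable ℝ G) (x : E) (v b : F) :
    fderiv ℝ (fun v => G (x, v)) v b = fderiv ℝ G (x, v) (0, b) := by
  have := (hG (x, v)).hasFDerivAt.comp v (hasFDerivAt_prodMk_right x v)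
  rw [show (fun v => G (x, v)) = G ∘ fun v => (x, v) from rfl, this.fderiv]
  simp

theorem fderiv_comp_prodMk_left {G : E × F → ℝ} (hG : Differentiable ℝ G) (x b : E) (v : F) :
    fderiv ℝ (fun x => G (x, v)) x b = fderiv ℝ G (x, v) (b, 0) := by
  have := HasFDerivAt.comp (𝕜 := ℝ) (f := fun x => (x, v)) x (hG (x, v)).hasFDerivAt
    (hasFDerivAt_prodMk_left x v)
  rw [show (fun x => G (x, v)) = G ∘ fun x => (x, v) from rfl, this.fderiv]
  simp

end

section

variable {Ψ G : E3 × E3 → ℝ} {b : E3 → E3} {K : ℝ}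

theorem integral_mul_fderiv_snd (hΨ : ContDiff ℝ 1 Ψ) (hs : HasCompactSupport Ψ)
    (hG : ContDiff ℝ 1 G) (hb : Measurable b) (hK : ∀ x, ‖b x‖ ≤ K) :
    ∫ p : E3 × E3, Ψ p * fderiv ℝ G p (0, b p.1) =
      -∫ p : E3 × E3, fderiv ℝ Ψ p (0, b p.1) * G p := by
  have hb' : Measurable fun p : E3 × E3 => ((0 : E3), b p.1) := by fun_prop
  have hK' : ∀ p : E3 × E3, ‖((0 : E3), b p.1)‖ ≤ K := fun p => by simpa using hK p.1
  have hΨd := hΨ.differentiable (by norm_num)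
  have hGd := hG.differentiable (by norm_num)
  have h1 := integral_prod _
    (integrable_mul_fderiv_of_hasCompactSupport (μ := volume) hΨ.continuous hs hG hb' hK')
  have h2 := integral_prod _
    (integrable_fderiv_mul_of_hasCompactSupport (μ := volume) hΨ hs hG.continuous hb' hK')
  refine h1.trans (Eq.trans ?_ (congrArg Neg.neg h2).symm)
  rw [← integral_neg]
  refine integral_congr_ae (.of_forall fun x => ?_)
  have := integral_mul_fderiv_eq_neg (μ := volume) (Φ := fun v => Ψ (x, v))
    (G := fun v => G (x, v)) (by fun_prop) ((hasCompactSupport_comp_prodMk hs).1 x)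
    (by fun_prop) (b x)
  simpa only [fderiv_comp_prodMk_right hΨd, fderiv_comp_prodMk_right hGd] using this

theorem integral_mul_fderiv_fst (hΨ : ContDiff ℝ 1 Ψ) (hs : HasCompactSupport Ψ)
    (hG : ContDiff ℝ 1 G) (hb : Measurable b) (hK : ∀ x, ‖b x‖ ≤ K) :
    ∫ p : E3 × E3, Ψ p * fderiv ℝ G p (b p.2, 0) =
      -∫ p : E3 × E3, fderiv ℝ Ψ p (b p.2, 0) * G p := by
  have hb' : Measurable fun p : E3 × E3 => (b p.2, (0 : E3)) := by fun_prop
  have hK' : ∀ p : E3 × E3, ‖(b p.2, (0 : E3))‖ ≤ K := fun p => by simpa using hK p.2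
  have hΨd := hΨ.differentiable (by norm_num)
  have hGd := hG.differentiable (by norm_num)
  have h1 := integral_prod_symm _
    (integrable_mul_fderiv_of_hasCompactSupport (μ := volume) hΨ.continuous hs hG hb' hK')
  have h2 := integral_prod_symm _
    (integrable_fderiv_mul_of_hasCompactSupport (μ := volume) hΨ hs hG.continuous hb' hK')
  refine h1.trans (Eq.trans ?_ (congrArg Neg.neg h2).symm)
  rw [← integral_neg]
  refine integral_congr_ae (.of_forall fun v => ?_)
  have := integral_mul_fderiv_eq_neg (μ := volume) (Φ := fun x => Ψ (x, v))
    (G := fun x => G (x, v)) (by fun_prop) ((hasCompactSupport_comp_prodMk hs).2 v)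
    (by fun_prop) (b v)
  simpa only [fderiv_comp_prodMk_left hΨd, fderiv_comp_prodMk_left hGd] using this

theorem continuous_vhat : Continuous vhat := by
  unfold vhat
  have h : Continuous fun v : E3 => √(1 + ‖v‖ ^ 2) := by fun_prop
  exact (h.inv₀ fun v => by positivity).smul continuous_id

theorem norm_vhat_le (v : E3) : ‖vhat v‖ ≤ 1 := by
  unfold vhat
  rw [norm_smul, Real.norm_of_nonneg (by positivity), inv_mul_le_iff₀ (by positivity), mul_one]
  exact Real.le_sqrt_of_sq_le (by linarith)

theorem integrable_prod_of_hasCompactSupport {T : ℝ} {F : ℝ × E3 × E3 → ℝ}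
    (hΨ : Continuous Ψ) (hs : HasCompactSupport Ψ) (hF : ContinuousOn F (Icc 0 T ×ˢ univ)) :
    Integrable (fun z : ℝ × E3 × E3 => Ψ z.2 * F z)
      ((volume.restrict (Icc 0 T)).prod volume) := by
  have e : (volume.restrict (Icc 0 T)).prod (volume : Measure (E3 × E3)) =
      volume.restrict (Icc 0 T ×ˢ univ) := by
    conv_lhs => rw [← Measure.restrict_univ (μ := (volume : Measure (E3 × E3)))]
    rw [Measure.prod_restrict]; rfl
  rw [e]
  have hc : ContinuousOn (fun z : ℝ × E3 × E3 => Ψ z.2 * F z) (Icc 0 T ×ˢ univ) :=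
    (hΨ.comp continuous_snd).continuousOn.mul hF
  have hK : IsCompact (Icc 0 T ×ˢ tsupport Ψ) := isCompact_Icc.prod hs
  have hKS : Icc 0 T ×ˢ tsupport Ψ ⊆ Icc 0 T ×ˢ univ := prod_mono le_rfl (subset_univ _)
  refine IntegrableOn.of_forall_sdiff_eq_zero ((hc.mono hKS).integrableOn_compact hK)
    (measurableSet_Icc.prod MeasurableSet.univ) fun z hz => ?_
  have : z.2 ∉ tsupport Ψ := fun h => hz.2 ⟨hz.1.1, h⟩
  rw [image_eq_zero_of_notMem_tsupport this, zero_mul]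

/-- The weak form of the transport equation on `[0, T]`, tested with a `C¹` compactly supported
function of phase space. -/
theorem IsRVPSolution.integral_weak {T : ℝ} (hT : 0 < T) {f : ℝ → E3 → E3 → ℝ}
    (hf : IsRVPSolution (Icc 0 T) f) {D : ℝ}
    (hd : ∀ t ∈ Icc 0 T, IsPhaseDensity D fun p => f t p.1 p.2)
    (hΨ : ContDiff ℝ 1 Ψ) (hs : HasCompactSupport Ψ) :
    IntegrableOn (fun t => ∫ p : E3 × E3,
      fderiv ℝ Ψ p (vhat p.2, rvpField f t p.1) * f t p.1 p.2) (Icc 0 T) ∧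
    ∫ t in Icc 0 T, ∫ p : E3 × E3, fderiv ℝ Ψ p (vhat p.2, rvpField f t p.1) * f t p.1 p.2 =
      (∫ p : E3 × E3, Ψ p * f T p.1 p.2) - ∫ p : E3 × E3, Ψ p * f 0 p.1 p.2 := by
  obtain ⟨-, hcd, heq⟩ := hf
  set F : ℝ × E3 × E3 → ℝ := fun p => f p.1 p.2.1 p.2.2 with hF
  set S : Set (ℝ × E3 × E3) := Icc 0 T ×ˢ univ with hS
  set L := fderivWithin ℝ F S with hLdef
  have hSu : UniqueDiffOn ℝ S := (uniqueDiffOn_Icc hT).prod uniqueDiffOn_univ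
  have hL : ContinuousOn L S := hcd.continuousOn_fderivWithin hSu (by norm_num)
  have hFd : ∀ z ∈ S, HasFDerivWithinAt F (L z) S z := fun z hz =>
    (hcd.differentiableOn (by norm_num) z hz).hasFDerivWithinAt
  have hslice : ∀ t ∈ Icc 0 T, ∀ p : E3 × E3, ∀ w : E3 × E3,
      fderiv ℝ (fun p : E3 × E3 => f t p.1 p.2) p w = L (t, p) (0, w) := by
    intro t ht p w
    have := (hFd (t, p) ⟨ht, mem_univ _⟩).comp p
      (hasFDerivAt_prodMk_right t p).hasFDerivWithinAt (s := univ) fun q _ => ⟨ht, mem_univ _⟩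
    rw [hasFDerivWithinAt_univ] at this
    rw [show (fun p : E3 × E3 => f t p.1 p.2) = F ∘ fun q => (t, q) from rfl, this.fderiv]
    simp
  have hsliceC : ∀ t ∈ Icc 0 T, ContDiff ℝ 1 fun p : E3 × E3 => f t p.1 p.2 := by
    intro t ht
    rw [← contDiffOn_univ]
    exact hcd.comp (g := F) (contDiff_prodMk_right t).contDiffOn fun q _ => ⟨ht, mem_univ _⟩
  have htime : ∀ p : E3 × E3, ∀ t ∈ Ioo 0 T,
      HasDerivAt (fun t => f t p.1 p.2) (L (t, p) (1, 0)) t := by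
    intro p t ht
    have hz : S ∈ nhds (t, p) := prod_mem_nhds (Icc_mem_nhds ht.1 ht.2) Filter.univ_mem
    have h1 := (hFd (t, p) ⟨Ioo_subset_Icc_self ht, mem_univ _⟩).hasFDerivAt hz
    have h2 := h1.comp_hasDerivAt t ((hasDerivAt_id t).prodMk (hasDerivAt_const t p))
    exact h2
  have hint : Integrable (fun z : ℝ × E3 × E3 => Ψ z.2 * L z (1, 0))
      ((volume.restrict (Icc 0 T)).prod volume) :=
    integrable_prod_of_hasCompactSupport hΨ.continuous hs (hL.clm_apply continuousOn_const)
  have hAB : ∀ t ∈ Icc 0 T, ∫ p : E3 × E3, Ψ p * L (t, p) (1, 0) =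
      ∫ p : E3 × E3, fderiv ℝ Ψ p (vhat p.2, rvpField f t p.1) * f t p.1 p.2 := by
    intro t ht
    have hg := hd t ht
    have hE : Measurable (rvpField f t) := hg.measurable_coulombField
    have hEb : ∀ x, ‖rvpField f t x‖ ≤ _ := hg.norm_coulombField_le
    have hv := continuous_vhat.measurable
    have hb1 : Measurable fun p : E3 × E3 => (vhat p.2, (0 : E3)) := by fun_prop
    have hb2 : Measurable fun p : E3 × E3 => ((0 : E3), rvpField f t p.1) := by fun_prop
    have hK1 : ∀ p : E3 × E3, ‖(vhat p.2, (0 : E3))‖ ≤ 1 := fun p => by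
      simpa using norm_vhat_le p.2
    have hK2 : ∀ p : E3 × E3, ‖((0 : E3), rvpField f t p.1)‖ ≤ _ := fun p => by
      simpa using hEb p.1
    have hGc := hsliceC t ht
    have hpt : ∀ p : E3 × E3, Ψ p * L (t, p) (1, 0) =
        -(Ψ p * fderiv ℝ (fun p : E3 × E3 => f t p.1 p.2) p (vhat p.2, 0) +
          Ψ p * fderiv ℝ (fun p : E3 × E3 => f t p.1 p.2) p (0, rvpField f t p.1)) := by
      intro p
      have h0 := heq t ht p.1 p.2
      rw [hslice t ht, hslice t ht]
      have hsplit : ((1 : ℝ), vhat p.2, rvpField f t p.1) =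
          (1, (0 : E3 × E3)) + (0, (vhat p.2, (0 : E3))) + (0, ((0 : E3), rvpField f t p.1)) := by
        simp
      rw [hsplit, map_add, map_add] at h0
      have h0' : L (t, p) (1, 0) + L (t, p) (0, (vhat p.2, 0)) +
        L (t, p) (0, (0, rvpField f t p.1)) = 0 := h0
      linear_combination Ψ p * h0'
    have hpt2 : ∀ p : E3 × E3, fderiv ℝ Ψ p (vhat p.2, rvpField f t p.1) * f t p.1 p.2 =
        fderiv ℝ Ψ p (vhat p.2, 0) * f t p.1 p.2 +
          fderiv ℝ Ψ p (0, rvpField f t p.1) * f t p.1 p.2 := by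
      intro p
      rw [← add_mul, ← map_add]
      simp
    simp only [hpt, hpt2]
    rw [integral_neg, integral_add
      (integrable_mul_fderiv_of_hasCompactSupport hΨ.continuous hs hGc hb1 hK1)
      (integrable_mul_fderiv_of_hasCompactSupport hΨ.continuous hs hGc hb2 hK2),
      integral_add
      (integrable_fderiv_mul_of_hasCompactSupport hΨ hs hGc.continuous hb1 hK1)
      (integrable_fderiv_mul_of_hasCompactSupport hΨ hs hGc.continuous hb2 hK2),
      integral_mul_fderiv_fst hΨ hs hGc hv norm_vhat_le,
      integral_mul_fderiv_snd hΨ hs hGc hE hEb]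
    ring
  refine ⟨IntegrableOn.congr_fun (f := fun t => ∫ p : E3 × E3, Ψ p * L (t, p) (1, 0))
    hint.integral_prod_left hAB measurableSet_Icc, ?_⟩
  rw [← setIntegral_congr_fun measurableSet_Icc hAB]
  have hswap : ∫ t in Icc 0 T, ∫ p : E3 × E3, Ψ p * L (t, p) (1, 0) =
      ∫ p : E3 × E3, ∫ t in Icc 0 T, Ψ p * L (t, p) (1, 0) :=
    integral_integral_swap (f := fun t p => Ψ p * L (t, p) (1, 0)) hint
  have h0T : (0 : ℝ) ∈ Icc 0 T := ⟨le_rfl, hT.le⟩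
  have hTT : T ∈ Icc 0 T := ⟨hT.le, le_rfl⟩
  have hi : ∀ t ∈ Icc 0 T, Integrable fun p : E3 × E3 => Ψ p * f t p.1 p.2 := fun t ht =>
    (hΨ.continuous.mul (hsliceC t ht).continuous).integrable_of_hasCompactSupport hs.mul_right
  rw [hswap, ← integral_sub (hi T hTT) (hi 0 h0T)]
  refine integral_congr_ae (.of_forall fun p => ?_)
  have hLp : ContinuousOn (fun t => L (t, p) (1, 0)) (Icc 0 T) :=
    (hL.comp (by fun_prop : ContinuousOn (fun t : ℝ => (t, p)) (Icc 0 T))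
      fun t ht => ⟨ht, mem_univ _⟩).clm_apply continuousOn_const
  have hftc := intervalIntegral.integral_eq_sub_of_hasDerivAt_of_le hT.le
    (f := fun t => f t p.1 p.2) (f' := fun t => L (t, p) (1, 0))
    (hcd.continuousOn.comp (by fun_prop : ContinuousOn (fun t : ℝ => (t, p)) (Icc 0 T))
      fun t ht => ⟨ht, mem_univ _⟩) (htime p) (hLp.intervalIntegrable_of_Icc hT.le)
  rw [intervalIntegral.integral_of_le hT.le, ← integral_Icc_eq_integral_Ioc] at hftc
  simp only
  rw [integral_const_mul, hftc]
  ring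

end

/-! ### The virial multiplier -/

/-- The regularized squared distance `η² + |x̸|²` to the axis. -/
def axisReg (η : ℝ) (x : E3) : ℝ := η ^ 2 + (x 0 ^ 2 + x 1 ^ 2)

/-- The regularized virial multiplier `(x̸ ⋅ v̸) / |x̸|^{1-δ}`. -/
def virial (δ η : ℝ) (p : E3 × E3) : ℝ :=
  (p.1 0 * p.2 0 + p.1 1 * p.2 1) * axisReg η p.1 ^ ((δ - 1) / 2)

/-- The regularized radial field `x̸ / |x̸|^{1-δ}`. -/
def axisField (δ η : ℝ) (x : E3) : E3 :=
  !₂[x 0 * axisReg η x ^ ((δ - 1) / 2), x 1 * axisReg η x ^ ((δ - 1) / 2), 0]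

/-- The regularized weight `|v̸|² / (|x̸|^{1-δ} √(1+|v|²))`. -/
def virialWeight (δ η : ℝ) (p : E3 × E3) : ℝ :=
  slashN p.2 ^ 2 * axisReg η p.1 ^ ((δ - 1) / 2) / √(1 + ‖p.2‖ ^ 2)

theorem slashN_sq (x : E3) : slashN x ^ 2 = x 0 ^ 2 + x 1 ^ 2 := Real.sq_sqrt (by positivity)

theorem slashN_le_norm (x : E3) : slashN x ≤ ‖x‖ := by
  rw [EuclideanSpace.norm_eq, Fin.sum_univ_three]
  refine Real.sqrt_le_sqrt ?_
  simp only [Real.norm_eq_abs, sq_abs]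
  nlinarith [sq_nonneg (x 2)]

theorem abs_mul_add_mul_le_slashN (x y : E3) :
    |x 0 * y 0 + x 1 * y 1| ≤ slashN x * slashN y := by
  unfold slashN
  rw [← Real.sqrt_mul (by positivity)]
  refine Real.abs_le_sqrt ?_
  nlinarith [sq_nonneg (x 0 * y 1 - x 1 * y 0)]

theorem axisReg_pos {η : ℝ} (hη : 0 < η) (x : E3) : 0 < axisReg η x := by
  unfold axisReg; positivity

theorem slashN_sq_le_axisReg (η : ℝ) (x : E3) : slashN x ^ 2 ≤ axisReg η x := by
  rw [slashN_sq, axisReg]; nlinarith [sq_nonneg η]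

theorem slashN_mul_axisReg_rpow_le {δ : ℝ} (hδ : δ ∈ Ioo (0 : ℝ) 1) (η : ℝ) (x : E3) :
    slashN x * axisReg η x ^ ((δ - 1) / 2) ≤ (1 + ‖x‖) ^ δ := by
  rcases (slashN_nonneg x).eq_or_lt with h | h
  · rw [← h, zero_mul]; positivity
  calc slashN x * axisReg η x ^ ((δ - 1) / 2)
      ≤ slashN x * (slashN x ^ 2) ^ ((δ - 1) / 2) := by
        refine mul_le_mul_of_nonneg_left (Real.rpow_le_rpow_of_nonpos (by positivity)
          (slashN_sq_le_axisReg η x) (by linarith [hδ.2])) h.le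
    _ = slashN x ^ δ := by
        rw [← Real.rpow_natCast, ← Real.rpow_mul h.le]
        nth_rewrite 1 [← Real.rpow_one (slashN x)]
        rw [← Real.rpow_add h]
        congr 1; push_cast; ring
    _ ≤ (1 + ‖x‖) ^ δ := by
        refine Real.rpow_le_rpow h.le ?_ hδ.1.le
        linarith [slashN_le_norm x]

theorem abs_virial_le {δ η : ℝ} (hδ : δ ∈ Ioo (0 : ℝ) 1) (hη : 0 < η) (p : E3 × E3) :
    |virial δ η p| ≤ (1 + ‖p.2‖) * (1 + ‖p.1‖) ^ δ := by
  have h1 := abs_mul_add_mul_le_slashN p.1 p.2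
  have h2 := slashN_mul_axisReg_rpow_le hδ η p.1
  have h3 : 0 < axisReg η p.1 ^ ((δ - 1) / 2) := Real.rpow_pos_of_pos (axisReg_pos hη _) _
  have h4 : slashN p.2 ≤ 1 + ‖p.2‖ := by linarith [slashN_le_norm p.2]
  unfold virial
  rw [abs_mul, abs_of_pos h3]
  calc _ ≤ slashN p.1 * slashN p.2 * axisReg η p.1 ^ ((δ - 1) / 2) := by gcongr
    _ = slashN p.2 * (slashN p.1 * axisReg η p.1 ^ ((δ - 1) / 2)) := by ring
    _ ≤ _ := by
      refine mul_le_mul h4 h2 (mul_nonneg (slashN_nonneg _) h3.le) (by positivity)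

theorem norm_axisField {δ η : ℝ} (hη : 0 < η) (x : E3) :
    ‖axisField δ η x‖ = slashN x * axisReg η x ^ ((δ - 1) / 2) := by
  have h3 : 0 < axisReg η x ^ ((δ - 1) / 2) := Real.rpow_pos_of_pos (axisReg_pos hη _) _
  rw [EuclideanSpace.norm_eq, Fin.sum_univ_three, slashN, ← Real.sqrt_mul_self h3.le,
    ← Real.sqrt_mul (by positivity)]
  congr 1
  simp [axisField, mul_pow]
  ring

theorem one_add_norm_rpow_le {δ : ℝ} (hδ : δ ∈ Ioo (0 : ℝ) 1) (x : E3) :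
    (1 + ‖x‖) ^ δ ≤ 1 + ‖x‖ := by
  have h : 1 ≤ 1 + ‖x‖ := by linarith [norm_nonneg x]
  simpa using Real.rpow_le_rpow_of_exponent_le h hδ.2.le

theorem norm_axisField_le {δ η : ℝ} (hδ : δ ∈ Ioo (0 : ℝ) 1) (hη : 0 < η) (x : E3) :
    ‖axisField δ η x‖ ≤ 1 + ‖x‖ := by
  rw [norm_axisField hη]
  exact (slashN_mul_axisReg_rpow_le hδ η x).trans (one_add_norm_rpow_le hδ x)

theorem mul_rpow_monotone {δ η s t : ℝ} (hδ : 0 < δ) (hη : 0 < η) (hs : 0 ≤ s) (hst : s ≤ t) :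
    s * (η ^ 2 + s ^ 2) ^ ((δ - 1) / 2) ≤ t * (η ^ 2 + t ^ 2) ^ ((δ - 1) / 2) := by
  have ht : 0 ≤ t := hs.trans hst
  have key : ∀ r : ℝ, r * (η ^ 2 + r ^ 2) ^ ((δ - 1) / 2) =
      r / √(η ^ 2 + r ^ 2) * (η ^ 2 + r ^ 2) ^ (δ / 2) := by
    intro r
    have hr : 0 < η ^ 2 + r ^ 2 := by positivity
    rw [Real.sqrt_eq_rpow, div_eq_mul_inv r, ← Real.rpow_neg hr.le, mul_assoc, ← Real.rpow_add hr]
    congr 2; ring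
  rw [key, key]
  have hst2 : s ^ 2 ≤ t ^ 2 := by gcongr
  refine mul_le_mul ?_ (Real.rpow_le_rpow (by positivity) (by linarith) (by linarith))
    (by positivity) (by positivity)
  rw [div_le_div_iff₀ (by positivity) (by positivity)]
  refine (pow_le_pow_iff_left₀ (by positivity) (by positivity) (two_ne_zero)).1 ?_
  rw [mul_pow, mul_pow, Real.sq_sqrt (by positivity), Real.sq_sqrt (by positivity)]
  nlinarith [sq_nonneg η]

open scoped InnerProductSpace

theorem inner_axisField (δ η : ℝ) (x y : E3) : ⟪y, axisField δ η x⟫_ℝ =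
    (x 0 * y 0 + x 1 * y 1) * axisReg η x ^ ((δ - 1) / 2) := by
  simp [axisField, PiLp.inner_apply, Fin.sum_univ_three]
  ring

theorem axisField_monotone {δ η : ℝ} (hδ : 0 < δ) (hη : 0 < η) (x y : E3) :
    0 ≤ ⟪x - y, axisField δ η x - axisField δ η y⟫_ℝ := by
  rw [inner_sub_right, inner_axisField, inner_axisField]
  have hx : 0 < axisReg η x ^ ((δ - 1) / 2) := Real.rpow_pos_of_pos (axisReg_pos hη _) _
  have hy : 0 < axisReg η y ^ ((δ - 1) / 2) := Real.rpow_pos_of_pos (axisReg_pos hη _) _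
  have hm : 0 ≤ (slashN x - slashN y) * (slashN x * axisReg η x ^ ((δ - 1) / 2) -
      slashN y * axisReg η y ^ ((δ - 1) / 2)) := by
    have hxs : axisReg η x = η ^ 2 + slashN x ^ 2 := by rw [slashN_sq]; rfl
    have hys : axisReg η y = η ^ 2 + slashN y ^ 2 := by rw [slashN_sq]; rfl
    rw [hxs, hys]
    rcases le_total (slashN x) (slashN y) with h | h
    · have := mul_rpow_monotone hδ hη (slashN_nonneg x) h
      exact mul_nonneg_of_nonpos_of_nonpos (by linarith) (by linarith)
    · have := mul_rpow_monotone hδ hη (slashN_nonneg y) h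
      exact mul_nonneg (by linarith) (by linarith)
  have hc := (le_abs_self _).trans (abs_mul_add_mul_le_slashN x y)
  have hx2 := slashN_sq x
  have hy2 := slashN_sq y
  simp only [PiLp.sub_apply]
  set a := axisReg η x ^ ((δ - 1) / 2)
  set b := axisReg η y ^ ((δ - 1) / 2)
  have : (x 0 * (x 0 - y 0) + x 1 * (x 1 - y 1)) * a - (y 0 * (x 0 - y 0) + y 1 * (x 1 - y 1)) * b =
    slashN x ^ 2 * a + slashN y ^ 2 * b - (a + b) * (x 0 * y 0 + x 1 * y 1) := by
    rw [hx2, hy2]; ring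
  rw [this]
  nlinarith [mul_le_mul_of_nonneg_left hc (by positivity : 0 ≤ a + b)]

theorem contDiff_axisReg_rpow {η : ℝ} (hη : 0 < η) (c : ℝ) :
    ContDiff ℝ 1 fun p : E3 × E3 => axisReg η p.1 ^ c := by
  refine ContDiff.rpow_const_of_ne ?_ fun p => (axisReg_pos hη _).ne'
  unfold axisReg
  fun_prop

theorem contDiff_virial {η : ℝ} (δ : ℝ) (hη : 0 < η) : ContDiff ℝ 1 (virial δ η) := by
  unfold virial
  exact ContDiff.mul (by fun_prop) (contDiff_axisReg_rpow hη _)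

theorem continuous_virialWeight {η : ℝ} (δ : ℝ) (hη : 0 < η) : Continuous (virialWeight δ η) := by
  unfold virialWeight slashN
  refine Continuous.div ?_ (by fun_prop) fun p => by positivity
  exact Continuous.mul (by fun_prop) (contDiff_axisReg_rpow hη _).continuous

theorem virialWeight_nonneg {η : ℝ} (δ : ℝ) (hη : 0 < η) (p : E3 × E3) :
    0 ≤ virialWeight δ η p :=
  div_nonneg (mul_nonneg (sq_nonneg _) (Real.rpow_nonneg (axisReg_pos hη _).le _))
    (Real.sqrt_nonneg _)

theorem measurable_axisField {η : ℝ} (δ : ℝ) (hη : 0 < η) : Measurable (axisField δ η) := by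
  have h : Continuous fun x : E3 => axisReg η x ^ ((δ - 1) / 2) :=
    (contDiff_axisReg_rpow hη _).continuous.comp (continuous_id.prodMk continuous_id)
  refine Continuous.measurable ?_
  unfold axisField
  fun_prop

theorem fderiv_virial {η : ℝ} (δ : ℝ) (hη : 0 < η) (p : E3 × E3) (a b : E3) :
    fderiv ℝ (virial δ η) p (a, b) =
      (a 0 * p.2 0 + a 1 * p.2 1 + (p.1 0 * b 0 + p.1 1 * b 1)) *
          axisReg η p.1 ^ ((δ - 1) / 2) +
        (p.1 0 * p.2 0 + p.1 1 * p.2 1) * ((δ - 1) * (p.1 0 * a 0 + p.1 1 * a 1) *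
          axisReg η p.1 ^ ((δ - 1) / 2 - 1)) := by
  have hd := ((contDiff_virial δ hη).differentiable (by norm_num) p).hasFDerivAt.hasLineDerivAt
    (a, b)
  refine HasDerivAt.unique hd ?_
  have hl : ∀ c d : ℝ, HasDerivAt (fun s : ℝ => c + s * d) d 0 := fun c d => by
    simpa using ((hasDerivAt_id (0 : ℝ)).mul_const d).const_add c
  have h1 : HasDerivAt (fun s : ℝ => (p.1 0 + s * a 0) * (p.2 0 + s * b 0) +
      (p.1 1 + s * a 1) * (p.2 1 + s * b 1))
      (a 0 * p.2 0 + a 1 * p.2 1 + (p.1 0 * b 0 + p.1 1 * b 1)) 0 := by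
    refine (((hl (p.1 0) (a 0)).fun_mul (hl (p.2 0) (b 0))).fun_add
      ((hl (p.1 1) (a 1)).fun_mul (hl (p.2 1) (b 1)))).congr_deriv ?_
    ring
  have h2 : HasDerivAt (fun s : ℝ => η ^ 2 + ((p.1 0 + s * a 0) ^ 2 + (p.1 1 + s * a 1) ^ 2))
      (2 * (p.1 0 * a 0 + p.1 1 * a 1)) 0 := by
    refine ((((hl (p.1 0) (a 0)).fun_pow 2).fun_add
      ((hl (p.1 1) (a 1)).fun_pow 2)).const_add (η ^ 2)).congr_deriv ?_
    norm_num
    ring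
  have h3 := h2.rpow_const (p := (δ - 1) / 2) (Or.inl (by simp; positivity))
  refine (h1.fun_mul h3).congr_deriv ?_
  simp only [zero_mul, add_zero, axisReg]
  ring

theorem fderiv_virial_ge {δ η : ℝ} (hδ : δ ∈ Ioo (0 : ℝ) 1) (hη : 0 < η) (p : E3 × E3) (b : E3) :
    δ * virialWeight δ η p + ⟪b, axisField δ η p.1⟫_ℝ ≤
      fderiv ℝ (virial δ η) p (vhat p.2, b) := by
  have hr := axisReg_pos hη p.1
  have hg : 0 < √(1 + ‖p.2‖ ^ 2) := by positivity
  rw [fderiv_virial δ hη, inner_axisField, Real.rpow_sub_one hr.ne', virialWeight, slashN_sq]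
  simp only [vhat, PiLp.smul_apply, smul_eq_mul]
  have hc : 0 < axisReg η p.1 ^ ((δ - 1) / 2) := Real.rpow_pos_of_pos hr _
  set c := axisReg η p.1 ^ ((δ - 1) / 2)
  set r := axisReg η p.1 with hrdef
  set γ := √(1 + ‖p.2‖ ^ 2)
  set d := p.1 0 * p.2 0 + p.1 1 * p.2 1 with hd
  have hcs : d ^ 2 ≤ r * (p.2 0 ^ 2 + p.2 1 ^ 2) := by
    rw [hrdef, axisReg, hd]
    nlinarith [sq_nonneg (p.1 0 * p.2 1 - p.1 1 * p.2 0),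
      mul_nonneg (sq_nonneg η) (add_nonneg (sq_nonneg (p.2 0)) (sq_nonneg (p.2 1)))]
  have e : (γ⁻¹ * p.2 0 * p.2 0 + γ⁻¹ * p.2 1 * p.2 1 + (p.1 0 * b 0 + p.1 1 * b 1)) * c +
      d * ((δ - 1) * (p.1 0 * (γ⁻¹ * p.2 0) + p.1 1 * (γ⁻¹ * p.2 1)) * (c / r)) -
      (δ * ((p.2 0 ^ 2 + p.2 1 ^ 2) * c / γ) + (p.1 0 * b 0 + p.1 1 * b 1) * c) =
      (1 - δ) * c * (r * (p.2 0 ^ 2 + p.2 1 ^ 2) - d ^ 2) / (γ * r) := by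
    rw [show p.1 0 * (γ⁻¹ * p.2 0) + p.1 1 * (γ⁻¹ * p.2 1) = γ⁻¹ * d by rw [hd]; ring]
    field_simp
    ring
  have hpos : 0 ≤ (1 - δ) * c * (r * (p.2 0 ^ 2 + p.2 1 ^ 2) - d ^ 2) / (γ * r) :=
    div_nonneg (mul_nonneg (mul_nonneg (by linarith [hδ.2]) hc.le) (by linarith)) (by positivity)
  linarith

/-! ### Cutoffs and the virial inequality -/

/-- A `C¹` cutoff of phase space at scale `R`, with gradient bounded by `C / R`. -/
structure IsCutoff (C R : ℝ) (χ : E3 × E3 → ℝ) : Prop where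
  contDiff : ContDiff ℝ 1 χ
  hasCompactSupport : HasCompactSupport χ
  nonneg : ∀ p, 0 ≤ χ p
  le_one : ∀ p, χ p ≤ 1
  eq_one : ∀ p, ‖p‖ ≤ R → χ p = 1
  abs_fderiv_le : ∀ p w, |fderiv ℝ χ p w| ≤ C / R * ‖w‖

theorem exists_isCutoff : ∃ C : ℝ, 0 ≤ C ∧ ∀ R : ℝ, 0 < R → ∃ χ, IsCutoff C R χ := by
  let b : ContDiffBump (0 : E3 × E3) := ⟨1, 2, one_pos, one_lt_two⟩
  have hb : ContDiff ℝ 1 b := b.contDiff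
  obtain ⟨C, hC⟩ := (b.hasCompactSupport.fderiv ℝ).exists_bound_of_continuous
    (hb.continuous_fderiv (by norm_num))
  refine ⟨C, (norm_nonneg _).trans (hC 0), fun R hR => ⟨fun p => b (R⁻¹ • p), ?_⟩⟩
  have hsm : ContDiff ℝ 1 fun p : E3 × E3 => R⁻¹ • p := contDiff_id.const_smul R⁻¹
  refine ⟨hb.comp hsm, b.hasCompactSupport.comp_smul (inv_ne_zero hR.ne'), fun p => b.nonneg,
    fun p => b.le_one, fun p hp => b.one_of_mem_closedBall ?_, fun p w => ?_⟩
  · rw [mem_closedBall_zero_iff, norm_smul, norm_inv, Real.norm_of_nonneg hR.le,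
      inv_mul_le_iff₀ hR]
    simpa [b] using hp
  · have h1 : HasFDerivAt (fun p : E3 × E3 => R⁻¹ • p)
        (R⁻¹ • ContinuousLinearMap.id ℝ (E3 × E3)) p := (hasFDerivAt_id p).const_smul R⁻¹
    have h2 := ((hb.differentiable (by norm_num) (R⁻¹ • p)).hasFDerivAt.comp p h1).fderiv
    rw [show (fun p : E3 × E3 => b (R⁻¹ • p)) = b ∘ fun p => R⁻¹ • p from rfl, h2]
    simp only [ContinuousLinearMap.comp_apply, smul_apply,
      ContinuousLinearMap.id_apply, map_smul, smul_eq_mul]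
    rw [abs_mul, abs_of_pos (inv_pos.2 hR), div_eq_inv_mul, mul_assoc]
    exact mul_le_mul_of_nonneg_left (((fderiv ℝ b (R⁻¹ • p)).le_opNorm w).trans
      (mul_le_mul_of_nonneg_right (hC _) (norm_nonneg _))) (inv_pos.2 hR).le

theorem one_sub_cutoff_le {C R : ℝ} {χ : E3 × E3 → ℝ} (hχ : IsCutoff C R χ) (hR : 0 < R)
    (p : E3 × E3) : 1 - χ p ≤ phaseWeight p / R := by
  have hQ := one_le_phaseWeight p
  rcases le_or_gt ‖p‖ R with h | h
  · rw [hχ.eq_one p h, sub_self]; positivity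
  · have h1 : ‖p‖ ≤ phaseWeight p := by
      rw [Prod.norm_def, phaseWeight]
      exact max_le (by linarith [norm_nonneg p.2]) (by linarith [norm_nonneg p.1])
    have h2 : 1 ≤ phaseWeight p / R := by rw [le_div_iff₀ hR]; linarith
    linarith [hχ.nonneg p]

theorem abs_virial_le_sq {δ η : ℝ} (hδ : δ ∈ Ioo (0 : ℝ) 1) (hη : 0 < η) (p : E3 × E3) :
    |virial δ η p| ≤ phaseWeight p ^ 2 := by
  have h1 : 1 + ‖p.2‖ ≤ phaseWeight p := by unfold phaseWeight; linarith [norm_nonneg p.1]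
  have h2 : 1 + ‖p.1‖ ≤ phaseWeight p := by unfold phaseWeight; linarith [norm_nonneg p.2]
  refine (abs_virial_le hδ hη p).trans ?_
  rw [sq]
  exact mul_le_mul h1 ((one_add_norm_rpow_le hδ p.1).trans h2) (by positivity)
    (by linarith [one_le_phaseWeight p])

theorem fderiv_cutoff_mul_virial_ge {δ η C R K : ℝ} (hδ : δ ∈ Ioo (0 : ℝ) 1) (hη : 0 < η)
    (hC : 0 ≤ C) (hR : 0 < R) {χ : E3 × E3 → ℝ} (hχ : IsCutoff C R χ) (p : E3 × E3) {b : E3}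
    (hb : ‖b‖ ≤ K) :
    δ * (χ p * virialWeight δ η p) + ⟪b, axisField δ η p.1⟫_ℝ -
        (C * (1 + K) + K) / R * phaseWeight p ^ 20 ≤
      fderiv ℝ (fun p => χ p * virial δ η p) p (vhat p.2, b) := by
  have hK : 0 ≤ K := (norm_nonneg b).trans hb
  have hQ := one_le_phaseWeight p
  have hdχ := hχ.contDiff.differentiable (by norm_num) p
  have hdv := (contDiff_virial δ hη).differentiable (by norm_num) p
  rw [fderiv_fun_mul hdχ hdv]
  simp only [add_apply, smul_apply, smul_eq_mul]
  have h1 := mul_le_mul_of_nonneg_left (fderiv_virial_ge hδ hη p b) (hχ.nonneg p)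
  have hw : ‖(vhat p.2, b)‖ ≤ 1 + K := by
    rw [Prod.norm_def]
    exact max_le (by linarith [norm_vhat_le p.2]) (by linarith)
  have h2 : |virial δ η p * fderiv ℝ χ p (vhat p.2, b)| ≤
      phaseWeight p ^ 2 * (C / R * (1 + K)) := by
    rw [abs_mul]
    exact mul_le_mul (abs_virial_le_sq hδ hη p) ((hχ.abs_fderiv_le p _).trans
      (mul_le_mul_of_nonneg_left hw (by positivity))) (abs_nonneg _) (by positivity)
  have h3 : |⟪b, axisField δ η p.1⟫_ℝ| ≤ K * phaseWeight p := by
    refine (abs_real_inner_le_norm _ _).trans (mul_le_mul hb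
      ((norm_axisField_le hδ hη p.1).trans ?_) (norm_nonneg _) hK)
    unfold phaseWeight; linarith [norm_nonneg p.2]
  have h4 : (1 - χ p) * ⟪b, axisField δ η p.1⟫_ℝ ≤ phaseWeight p / R * (K * phaseWeight p) :=
    (mul_le_mul_of_nonneg_left ((le_abs_self _).trans h3) (by linarith [hχ.le_one p])).trans
      (mul_le_mul_of_nonneg_right (one_sub_cutoff_le hχ hR p) (by positivity))
  have h5 : (C * (1 + K) + K) / R * phaseWeight p ^ 2 ≤
      (C * (1 + K) + K) / R * phaseWeight p ^ 20 :=
    mul_le_mul_of_nonneg_left (pow_le_pow_right₀ hQ (by norm_num)) (by positivity)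
  have e : (C * (1 + K) + K) / R * phaseWeight p ^ 2 =
      phaseWeight p ^ 2 * (C / R * (1 + K)) + phaseWeight p / R * (K * phaseWeight p) := by
    field_simp
  nlinarith [neg_abs_le (virial δ η p * fderiv ℝ χ p (vhat p.2, b))]

theorem IsPhaseDensity.integral_virial_ge {D δ η C R m : ℝ} {g χ : E3 × E3 → ℝ}
    (h : IsPhaseDensity D g) (hm : ∫ p, phaseWeight p ^ 20 * g p ≤ m)
    (hδ : δ ∈ Ioo (0 : ℝ) 1) (hη : 0 < η) (hC : 0 ≤ C) (hR : 0 < R) (hχ : IsCutoff C R χ) :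
    δ * (∫ p, χ p * virialWeight δ η p * g p) -
        (C * (1 + (m + D * ∫ p, closeKernel 0 p)) + (m + D * ∫ p, closeKernel 0 p)) / R * m ≤
      ∫ p, fderiv ℝ (fun p => χ p * virial δ η p) p (vhat p.2, coulombField g p.1) * g p := by
  set K := m + D * ∫ p, closeKernel 0 p with hKdef
  have hE : ∀ x, ‖coulombField g x‖ ≤ K := fun x =>
    (h.norm_coulombField_le x).trans (by unfold IsPhaseDensity.fieldBound; linarith)
  have hK : 0 ≤ K := (norm_nonneg _).trans (hE 0)
  have hEm := h.measurable_coulombField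
  have hum := measurable_axisField δ hη
  have hvm := continuous_vhat.measurable
  have hi1 : Integrable fun p => χ p * virialWeight δ η p * g p :=
    ((hχ.contDiff.continuous.mul (continuous_virialWeight δ hη)).mul
      h.continuous).integrable_of_hasCompactSupport hχ.hasCompactSupport.mul_right.mul_right
  have hi2 : Integrable fun p : E3 × E3 =>
      ⟪coulombField g p.1, axisField δ η p.1⟫_ℝ * g p := by
    refine h.integrable_mul_of_le (c := K) ((hEm.comp measurable_fst).inner
      (hum.comp measurable_fst)) fun p => (abs_real_inner_le_norm _ _).trans ?_
    refine mul_le_mul (hE _) ((norm_axisField_le hδ hη p.1).trans ?_) (norm_nonneg _) hK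
    refine le_trans ?_ (le_self_pow₀ (one_le_phaseWeight p) (by norm_num))
    unfold phaseWeight; linarith [norm_nonneg p.2]
  have hi3 := h.integrable_moment.const_mul ((C * (1 + K) + K) / R)
  have hi4 : Integrable fun p : E3 × E3 =>
      fderiv ℝ (fun p => χ p * virial δ η p) p (vhat p.2, coulombField g p.1) * g p := by
    refine integrable_fderiv_mul_of_hasCompactSupport (hχ.contDiff.mul (contDiff_virial δ hη))
      hχ.hasCompactSupport.mul_right h.continuous (K := 1 + K) (by fun_prop) fun p => ?_
    rw [Prod.norm_def]
    exact max_le (by linarith [norm_vhat_le p.2]) (by linarith [hE p.1])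
  have hpos := h.integral_inner_coulombField_nonneg hum (norm_axisField_le hδ hη)
    (axisField_monotone hδ.1 hη)
  have hmono := integral_mono (((hi1.const_mul δ).add hi2).sub hi3) hi4 fun p => ?_
  · rw [integral_sub' ((hi1.const_mul δ).add hi2) hi3, integral_add' (hi1.const_mul δ) hi2,
      integral_const_mul, integral_const_mul] at hmono
    have : (C * (1 + K) + K) / R * (∫ p, phaseWeight p ^ 20 * g p) ≤
      (C * (1 + K) + K) / R * m := mul_le_mul_of_nonneg_left hm (by positivity)
    linarith
  · have := mul_le_mul_of_nonneg_right
      (fderiv_cutoff_mul_virial_ge hδ hη hC hR hχ p (hE p.1)) (h.nonneg p)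
    simp only [Pi.add_apply, Pi.sub_apply]
    linarith

theorem IsRVPSolution.setIntegral_cutoff_virialWeight_le {T D δ η C R m B : ℝ} (hT : 0 < T)
    {f : ℝ → E3 → E3 → ℝ} (hf : IsRVPSolution (Icc 0 T) f)
    (hd : ∀ t ∈ Icc 0 T, IsPhaseDensity D fun p => f t p.1 p.2)
    (hm : ∀ t ∈ Icc 0 T, ∫ p : E3 × E3, phaseWeight p ^ 20 * f t p.1 p.2 ≤ m)
    (hB : ∀ t ∈ Icc 0 T, ∫ p : E3 × E3, (1 + ‖p.2‖) * (1 + ‖p.1‖) ^ δ * f t p.1 p.2 ≤ B)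
    (hδ : δ ∈ Ioo (0 : ℝ) 1) (hη : 0 < η) (hC : 0 ≤ C) (hR : 0 < R) {χ : E3 × E3 → ℝ}
    (hχ : IsCutoff C R χ) :
    IntegrableOn (fun t => ∫ p : E3 × E3, χ p * virialWeight δ η p * f t p.1 p.2) (Icc 0 T) ∧
    δ * ∫ t in Icc 0 T, ∫ p : E3 × E3, χ p * virialWeight δ η p * f t p.1 p.2 ≤
      2 * B + (C * (1 + (m + D * ∫ p, closeKernel 0 p)) +
        (m + D * ∫ p, closeKernel 0 p)) / R * m * T := by
  have hint : IntegrableOn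
      (fun t => ∫ p : E3 × E3, χ p * virialWeight δ η p * f t p.1 p.2) (Icc 0 T) :=
    (integrable_prod_of_hasCompactSupport (F := fun z => f z.1 z.2.1 z.2.2)
      (hχ.contDiff.continuous.mul (continuous_virialWeight δ hη))
      hχ.hasCompactSupport.mul_right hf.2.1.continuousOn).integral_prod_left
  refine ⟨hint, ?_⟩
  obtain ⟨hi, hw⟩ := hf.integral_weak hT hd (Ψ := fun p => χ p * virial δ η p)
    (hχ.contDiff.mul (contDiff_virial δ hη)) hχ.hasCompactSupport.mul_right
  have hend : ∀ t ∈ Icc 0 T, |∫ p : E3 × E3, χ p * virial δ η p * f t p.1 p.2| ≤ B := by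
    intro t ht
    refine le_trans ?_ (hB t ht)
    refine abs_integral_le_integral_abs.trans (integral_mono_of_nonneg
      (.of_forall fun p => abs_nonneg _) ?_ (.of_forall fun p => ?_))
    · refine (hd t ht).integrable_mul_of_le (c := 1) (by fun_prop) fun p => ?_
      have h1 : 1 + ‖p.2‖ ≤ phaseWeight p := by unfold phaseWeight; linarith [norm_nonneg p.1]
      have h2 : 1 + ‖p.1‖ ≤ phaseWeight p := by unfold phaseWeight; linarith [norm_nonneg p.2]
      rw [abs_of_nonneg (by positivity), one_mul]
      calc (1 + ‖p.2‖) * (1 + ‖p.1‖) ^ δ ≤ phaseWeight p * phaseWeight p :=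
            mul_le_mul h1 ((one_add_norm_rpow_le hδ p.1).trans h2) (by positivity)
              (by linarith [one_le_phaseWeight p])
        _ = phaseWeight p ^ 2 := (sq _).symm
        _ ≤ _ := pow_le_pow_right₀ (one_le_phaseWeight p) (by norm_num)
    · simp only [abs_mul, abs_of_nonneg (hχ.nonneg p), abs_of_nonneg ((hd t ht).nonneg p)]
      refine mul_le_mul_of_nonneg_right ?_ ((hd t ht).nonneg p)
      exact (mul_le_of_le_one_left (abs_nonneg _) (hχ.le_one p)).trans (abs_virial_le hδ hη p)
  have hmono := setIntegral_mono_on ((hint.const_mul δ).sub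
    (integrableOn_const (C := (C * (1 + (m + D * ∫ p, closeKernel 0 p)) +
        (m + D * ∫ p, closeKernel 0 p)) / R * m) measure_Icc_lt_top.ne)) hi measurableSet_Icc
    fun t ht => (hd t ht).integral_virial_ge (hm t ht) hδ hη hC hR hχ
  rw [hw, integral_sub' (hint.const_mul δ) (integrableOn_const measure_Icc_lt_top.ne),
    integral_const_mul, setIntegral_const, Real.volume_real_Icc_of_le hT.le, smul_eq_mul] at hmono
  have h0 := abs_le.1 (hend 0 ⟨le_rfl, hT.le⟩)
  have h1 := abs_le.1 (hend T ⟨hT.le, le_rfl⟩)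
  linarith [h0.1, h1.2]

theorem measurable_virialWeight_zero (δ : ℝ) : Measurable (virialWeight δ 0) := by
  have := measurable_slashN
  unfold virialWeight axisReg
  fun_prop

open Filter Topology in
theorem tendsto_virialWeight (δ : ℝ) {p : E3 × E3} (hp : slashN p.1 ≠ 0) :
    Tendsto (fun η => virialWeight δ η p) (𝓝 0) (𝓝 (virialWeight δ 0 p)) := by
  have h : axisReg 0 p.1 ≠ 0 := by
    rw [axisReg, ← slashN_sq]; positivity
  have hc : ContinuousAt (fun η => axisReg η p.1) 0 := by
    unfold axisReg; fun_prop
  exact ((hc.rpow_const (p := (δ - 1) / 2) (.inl h)).const_mul _).div_const _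

open Filter Topology in
theorem IsRVPSolution.lintegral_virialWeight_le {T D δ m B : ℝ} (hT : 0 < T)
    {f : ℝ → E3 → E3 → ℝ} (hf : IsRVPSolution (Icc 0 T) f)
    (hd : ∀ t ∈ Icc 0 T, IsPhaseDensity D fun p => f t p.1 p.2)
    (hm : ∀ t ∈ Icc 0 T, ∫ p : E3 × E3, phaseWeight p ^ 20 * f t p.1 p.2 ≤ m)
    (hB : ∀ t ∈ Icc 0 T, ∫ p : E3 × E3, (1 + ‖p.2‖) * (1 + ‖p.1‖) ^ δ * f t p.1 p.2 ≤ B)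
    (hδ : δ ∈ Ioo (0 : ℝ) 1) :
    ∫⁻ t in Icc 0 T, ∫⁻ p : E3 × E3, ENNReal.ofReal (virialWeight δ 0 p * f t p.1 p.2) ≤
      ENNReal.ofReal (2 * B / δ) := by
  obtain ⟨C, hC, hcut⟩ := exists_isCutoff
  have hpos : ∀ n : ℕ, (0 : ℝ) < n + 1 := fun n => by positivity
  choose χ hχ using fun n : ℕ => hcut (n + 1) (hpos n)
  set η : ℕ → ℝ := fun n => 1 / ((n : ℝ) + 1) with hηdef
  have hη : ∀ n, 0 < η n := fun n => one_div_pos.2 (hpos n)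
  have hη0 : Tendsto η atTop (𝓝 0) := tendsto_one_div_add_atTop_nhds_zero_nat
  set A := (C * (1 + (m + D * ∫ p, closeKernel 0 p)) + (m + D * ∫ p, closeKernel 0 p)) with hA
  set G : ℕ → ℝ → ℝ := fun n t =>
    ∫ p : E3 × E3, χ n p * virialWeight δ (η n) p * f t p.1 p.2 with hG
  have hreg := fun n => hf.setIntegral_cutoff_virialWeight_le hT hd hm hB hδ (hη n) hC (hpos n)
    (hχ n)
  have hnn : ∀ n, ∀ t ∈ Icc 0 T, ∀ p : E3 × E3,
      0 ≤ χ n p * virialWeight δ (η n) p * f t p.1 p.2 := fun n t ht p =>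
    mul_nonneg (mul_nonneg ((hχ n).nonneg p) (virialWeight_nonneg δ (hη n) p)) ((hd t ht).nonneg p)
  have hGn : ∀ n, ∀ t ∈ Icc 0 T, 0 ≤ G n t := fun n t ht => integral_nonneg (hnn n t ht)
  have hinner : ∀ t ∈ Icc 0 T, ∫⁻ p : E3 × E3, ENNReal.ofReal (virialWeight δ 0 p * f t p.1 p.2) ≤
      liminf (fun n => ENNReal.ofReal (G n t)) atTop := by
    intro t ht
    have hcn : ∀ n, Continuous fun p : E3 × E3 => χ n p * virialWeight δ (η n) p * f t p.1 p.2 :=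
      fun n => ((hχ n).contDiff.continuous.mul (continuous_virialWeight δ (hη n))).mul
        (hd t ht).continuous
    have hGe : ∀ n, ENNReal.ofReal (G n t) =
        ∫⁻ p : E3 × E3, ENNReal.ofReal (χ n p * virialWeight δ (η n) p * f t p.1 p.2) := fun n =>
      ofReal_integral_eq_lintegral_ofReal ((hcn n).integrable_of_hasCompactSupport
        (hχ n).hasCompactSupport.mul_right.mul_right) (.of_forall (hnn n t ht))
    simp only [hGe]
    refine le_trans (lintegral_mono fun p => ?_)
      (lintegral_liminf_le fun n => (hcn n).measurable.ennreal_ofReal)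
    by_cases hp : slashN p.1 = 0
    · have : virialWeight δ 0 p = 0 := by
        have he : (δ - 1) / 2 ≠ 0 := by linarith [hδ.2]
        simp [virialWeight, axisReg, ← slashN_sq, hp, Real.zero_rpow he]
      simp [this]
    · refine (Tendsto.liminf_eq ?_).ge
      refine (ENNReal.continuous_ofReal.tendsto _).comp (Tendsto.mul_const _ ?_)
      refine ((tendsto_virialWeight δ hp).comp hη0).congr' ?_
      filter_upwards [eventually_ge_atTop ⌈‖p‖⌉₊] with n hn
      rw [(hχ n).eq_one p, one_mul, Function.comp_apply]
      have := Nat.ceil_le.1 hn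
      linarith
  calc ∫⁻ t in Icc 0 T, ∫⁻ p : E3 × E3, ENNReal.ofReal (virialWeight δ 0 p * f t p.1 p.2)
      ≤ ∫⁻ t in Icc 0 T, liminf (fun n => ENNReal.ofReal (G n t)) atTop :=
        setLIntegral_mono' measurableSet_Icc hinner
    _ ≤ liminf (fun n => ∫⁻ t in Icc 0 T, ENNReal.ofReal (G n t)) atTop :=
        lintegral_liminf_le' fun n => (hreg n).1.aestronglyMeasurable.aemeasurable.ennreal_ofReal
    _ ≤ liminf (fun n : ℕ => ENNReal.ofReal ((2 * B + A * m * T * η n) / δ)) atTop := by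
        refine liminf_le_liminf (.of_forall fun n => ?_)
        rw [← ofReal_integral_eq_lintegral_ofReal (hreg n).1
          ((ae_restrict_iff' measurableSet_Icc).2 (.of_forall (hGn n)))]
        refine ENNReal.ofReal_le_ofReal ?_
        rw [le_div_iff₀' hδ.1]
        refine (hreg n).2.trans (le_of_eq ?_)
        rw [hηdef]; ring
    _ = ENNReal.ofReal (2 * B / δ) := by
        refine Tendsto.liminf_eq ((ENNReal.continuous_ofReal.tendsto _).comp ?_)
        have := ((hη0.const_mul (A * m * T)).const_add (2 * B)).div_const δ
        simpa using this

/-! ### Large velocities and the final estimate -/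

/-- The singular weight of the space-time estimate. -/
def axisWeight (δ : ℝ) (p : E3 × E3) : ℝ :=
  slashN p.2 ^ (2 + δ) / (slashN p.1 ^ (1 - δ) * √(1 + ‖p.2‖ ^ 2))

theorem one_le_sqrt_one_add_sq (r : ℝ) : 1 ≤ √(1 + r ^ 2) :=
  Real.one_le_sqrt.2 (by nlinarith [sq_nonneg r])

theorem slashN_rpow_le_phaseWeight_pow {δ : ℝ} (hδ : δ ∈ Ioo (0 : ℝ) 1) (p : E3 × E3) :
    slashN p.2 ^ (2 + δ) ≤ phaseWeight p ^ 3 := by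
  have h1 : slashN p.2 ≤ phaseWeight p := (slashN_le_norm _).trans (by
    unfold phaseWeight; linarith [norm_nonneg p.1])
  calc slashN p.2 ^ (2 + δ) ≤ phaseWeight p ^ (2 + δ) :=
        Real.rpow_le_rpow (slashN_nonneg _) h1 (by linarith [hδ.1])
    _ ≤ phaseWeight p ^ (3 : ℝ) :=
        Real.rpow_le_rpow_of_exponent_le (one_le_phaseWeight p) (by linarith [hδ.2])
    _ = phaseWeight p ^ 3 := by norm_cast

theorem axisWeight_le_of_norm_le {δ S : ℝ} (hδ : δ ∈ Ioo (0 : ℝ) 1) {p : E3 × E3}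
    (hp : 0 < slashN p.1) (hv : ‖p.2‖ ≤ S) :
    axisWeight δ p ≤ S ^ δ * virialWeight δ 0 p := by
  have h1 : slashN p.2 ^ (2 + δ) ≤ slashN p.2 ^ 2 * S ^ δ := by
    rw [Real.rpow_add' (slashN_nonneg _) (by linarith [hδ.1]), Real.rpow_two]
    exact mul_le_mul_of_nonneg_left (Real.rpow_le_rpow (slashN_nonneg _)
      ((slashN_le_norm _).trans hv) hδ.1.le) (sq_nonneg _)
  have h2 : axisReg 0 p.1 ^ ((δ - 1) / 2) = (slashN p.1 ^ (1 - δ))⁻¹ := by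
    rw [axisReg, ← slashN_sq, zero_pow two_ne_zero, zero_add, ← Real.rpow_neg hp.le,
      ← Real.rpow_natCast, ← Real.rpow_mul hp.le]
    congr 1; push_cast; ring
  have h3 : 0 < slashN p.1 ^ (1 - δ) := Real.rpow_pos_of_pos hp _
  have h4 : 0 < √(1 + ‖p.2‖ ^ 2) := by positivity
  unfold axisWeight virialWeight
  rw [h2, show S ^ δ * (slashN p.2 ^ 2 * (slashN p.1 ^ (1 - δ))⁻¹ / √(1 + ‖p.2‖ ^ 2)) =
    slashN p.2 ^ 2 * S ^ δ / (slashN p.1 ^ (1 - δ) * √(1 + ‖p.2‖ ^ 2)) by field_simp]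
  gcongr

theorem axisWeight_le_div {δ : ℝ} (hδ : δ ∈ Ioo (0 : ℝ) 1) {p : E3 × E3}
    (hp : 0 < slashN p.1) : axisWeight δ p ≤ phaseWeight p ^ 3 / slashN p.1 ^ (1 - δ) := by
  have h3 : 0 < slashN p.1 ^ (1 - δ) := Real.rpow_pos_of_pos hp _
  have hQ := one_le_phaseWeight p
  unfold axisWeight
  exact div_le_div₀ (by positivity) (slashN_rpow_le_phaseWeight_pow hδ p) h3
    (le_mul_of_one_le_right h3.le (one_le_sqrt_one_add_sq _))

theorem axisWeight_le_pow {δ : ℝ} (hδ : δ ∈ Ioo (0 : ℝ) 1) {p : E3 × E3}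
    (hp : (phaseWeight p ^ 18)⁻¹ ≤ slashN p.1) : axisWeight δ p ≤ phaseWeight p ^ 21 := by
  have hQ := one_le_phaseWeight p
  have hQ' : 0 < (phaseWeight p ^ 18)⁻¹ := by positivity
  have h1 : (phaseWeight p ^ 18)⁻¹ ≤ slashN p.1 ^ (1 - δ) := by
    refine le_trans ?_ (Real.rpow_le_rpow hQ'.le hp (by linarith [hδ.2]))
    simpa using Real.rpow_le_rpow_of_exponent_ge hQ' (inv_le_one_of_one_le₀ (one_le_pow₀ hQ))
      (by linarith [hδ.1] : 1 - δ ≤ 1)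
  refine (axisWeight_le_div hδ (hQ'.trans_le hp)).trans ?_
  calc phaseWeight p ^ 3 / slashN p.1 ^ (1 - δ) ≤ phaseWeight p ^ 3 / (phaseWeight p ^ 18)⁻¹ := by
        gcongr
    _ = phaseWeight p ^ 21 := by rw [div_inv_eq_mul, ← pow_add]

theorem axisWeight_le_axisKernel {δ : ℝ} (hδ : δ ∈ Ioo (0 : ℝ) 1) {p : E3 × E3}
    (hp : 0 < slashN p.1) (hp' : slashN p.1 < (phaseWeight p ^ 18)⁻¹) :
    axisWeight δ p ≤ axisKernel p.1 * (1 + ‖p.2‖) ^ (-4 : ℝ) := by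
  have hQ := one_le_phaseWeight p
  have hQ0 : 0 < phaseWeight p := by linarith
  have hs1 : slashN p.1 < 1 := hp'.trans_le (inv_le_one_of_one_le₀ (one_le_pow₀ hQ))
  have h1 : (slashN p.1 ^ (1 - δ))⁻¹ ≤ slashN p.1 ^ (-(3 / 2) : ℝ) * (phaseWeight p ^ 9)⁻¹ := by
    rw [← Real.rpow_neg hp.le]
    calc slashN p.1 ^ (-(1 - δ)) ≤ slashN p.1 ^ (-(3 / 2) + 1 / 2 : ℝ) :=
          Real.rpow_le_rpow_of_exponent_ge hp hs1.le (by linarith [hδ.1])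
      _ = slashN p.1 ^ (-(3 / 2) : ℝ) * √(slashN p.1) := by
          rw [Real.rpow_add hp, Real.sqrt_eq_rpow]
      _ ≤ _ := by
          refine mul_le_mul_of_nonneg_left (Real.sqrt_le_iff.2 ⟨by positivity, hp'.le.trans ?_⟩)
            (by positivity)
          rw [inv_pow, ← pow_mul]
  have h2 : phaseWeight p ^ 3 * (phaseWeight p ^ 9)⁻¹ ≤
      (1 + |p.1 2|) ^ (-2 : ℝ) * (1 + ‖p.2‖) ^ (-4 : ℝ) := by
    have e : phaseWeight p ^ 3 * (phaseWeight p ^ 9)⁻¹ =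
        (phaseWeight p ^ 2)⁻¹ * (phaseWeight p ^ 4)⁻¹ := by
      field_simp
    have hx : |p.1 2| ≤ ‖p.1‖ := PiLp.norm_apply_le p.1 2
    rw [e, Real.rpow_neg (by positivity), Real.rpow_neg (by positivity)]
    norm_cast
    gcongr
    · unfold phaseWeight; linarith [norm_nonneg p.2]
    · unfold phaseWeight; linarith [norm_nonneg p.1]
  have h3 : axisKernel p.1 = slashN p.1 ^ (-(3 / 2) : ℝ) * (1 + |p.1 2|) ^ (-2 : ℝ) := by
    unfold axisKernel
    rw [indicator_of_mem (show p.1 ∈ {x | slashN x < 1} from hs1)]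
  refine (axisWeight_le_div hδ hp).trans ?_
  rw [h3, div_eq_mul_inv]
  calc _ ≤ phaseWeight p ^ 3 * (slashN p.1 ^ (-(3 / 2) : ℝ) * (phaseWeight p ^ 9)⁻¹) := by gcongr
    _ = slashN p.1 ^ (-(3 / 2) : ℝ) * (phaseWeight p ^ 3 * (phaseWeight p ^ 9)⁻¹) := by ring
    _ ≤ _ := by
      rw [mul_assoc]
      exact mul_le_mul_of_nonneg_left h2 (by positivity)

theorem axisWeight_mul_le {D δ S : ℝ} {g : E3 × E3 → ℝ} (hg : ∀ p, 0 ≤ g p)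
    (hgD : ∀ p, g p ≤ D) (hδ : δ ∈ Ioo (0 : ℝ) 1) (hS : 1 ≤ S) (k : ℕ) (p : E3 × E3) :
    axisWeight δ p * g p ≤ S ^ δ * (virialWeight δ 0 p * g p) +
      ((S ^ k)⁻¹ * (phaseWeight p ^ (k + 21) * g p) +
        D * (axisKernel p.1 * (1 + ‖p.2‖) ^ (-4 : ℝ))) := by
  have hD : 0 ≤ D := (hg p).trans (hgD p)
  have hgp := hg p
  have hQ := one_le_phaseWeight p
  have hV : 0 ≤ virialWeight δ 0 p := by
    unfold virialWeight axisReg; positivity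
  have hK := axisKernel_nonneg p.1
  have n1 : 0 ≤ S ^ δ * (virialWeight δ 0 p * g p) := by positivity
  have n2 : 0 ≤ (S ^ k)⁻¹ * (phaseWeight p ^ (k + 21) * g p) := by positivity
  have n3 : 0 ≤ D * (axisKernel p.1 * (1 + ‖p.2‖) ^ (-4 : ℝ)) := by positivity
  rcases (slashN_nonneg p.1).eq_or_lt with hp | hp
  · have : axisWeight δ p = 0 := by
      rw [axisWeight, ← hp, Real.zero_rpow (by linarith [hδ.2]), zero_mul, div_zero]
    rw [this]; linarith
  rcases le_or_gt ‖p.2‖ S with hv | hv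
  · have := mul_le_mul_of_nonneg_right (axisWeight_le_of_norm_le hδ hp hv) hgp
    linarith
  rcases le_or_gt (phaseWeight p ^ 18)⁻¹ (slashN p.1) with hs | hs
  · have h1 := mul_le_mul_of_nonneg_right (axisWeight_le_pow hδ hs) hgp
    have hSQ : S ≤ phaseWeight p := by unfold phaseWeight; linarith [norm_nonneg p.1]
    have h2 : phaseWeight p ^ 21 ≤ (S ^ k)⁻¹ * phaseWeight p ^ (k + 21) := by
      rw [le_inv_mul_iff₀ (by positivity), pow_add]
      gcongr
    have h3 := mul_le_mul_of_nonneg_right h2 hgp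
    linarith
  · have h1 := axisWeight_le_axisKernel hδ hp hs
    have h2 : axisWeight δ p * g p ≤ axisKernel p.1 * (1 + ‖p.2‖) ^ (-4 : ℝ) * D :=
      mul_le_mul h1 (hgD p) hgp (by positivity)
    linarith

theorem integrable_axisKernel_mul :
    Integrable fun p : E3 × E3 => axisKernel p.1 * (1 + ‖p.2‖) ^ (-4 : ℝ) :=
  integrable_axisKernel.mul_prod (integrable_one_add_norm (by simp; norm_num))

theorem IsRVPSolution.lintegral_axisWeight_le {T D δ m B S P : ℝ} {k : ℕ} (hT : 0 < T)
    {f : ℝ → E3 → E3 → ℝ} (hf : IsRVPSolution (Icc 0 T) f)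
    (hd : ∀ t ∈ Icc 0 T, IsPhaseDensity D fun p => f t p.1 p.2)
    (hm : ∀ t ∈ Icc 0 T, ∫ p : E3 × E3, phaseWeight p ^ 20 * f t p.1 p.2 ≤ m)
    (hB : ∀ t ∈ Icc 0 T, ∫ p : E3 × E3, (1 + ‖p.2‖) * (1 + ‖p.1‖) ^ δ * f t p.1 p.2 ≤ B)
    (hδ : δ ∈ Ioo (0 : ℝ) 1) (hS : 1 ≤ S)
    (hk : ∀ t ∈ Icc 0 T, Integrable fun p : E3 × E3 => phaseWeight p ^ (k + 21) * f t p.1 p.2)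
    (hP : ∀ t ∈ Icc 0 T, ∫ p : E3 × E3, phaseWeight p ^ (k + 21) * f t p.1 p.2 ≤ P) :
    ∫⁻ t in Icc 0 T, ∫⁻ p : E3 × E3, ENNReal.ofReal (axisWeight δ p * f t p.1 p.2) ≤
      ENNReal.ofReal (S ^ δ * (2 * B / δ) + (P / S ^ k +
        D * ∫ p : E3 × E3, axisKernel p.1 * (1 + ‖p.2‖) ^ (-4 : ℝ)) * T) := by
  have h0T : (0 : ℝ) ∈ Icc 0 T := ⟨le_rfl, hT.le⟩
  set c := ∫ p : E3 × E3, axisKernel p.1 * (1 + ‖p.2‖) ^ (-4 : ℝ) with hc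
  have hK : ∀ p : E3 × E3, 0 ≤ axisKernel p.1 * (1 + ‖p.2‖) ^ (-4 : ℝ) := fun p =>
    mul_nonneg (axisKernel_nonneg _) (by positivity)
  have hc0 : 0 ≤ c := integral_nonneg hK
  have hD := (hd 0 h0T).bound_nonneg
  have hQ := one_le_phaseWeight
  have hQf : ∀ t ∈ Icc 0 T, ∀ p : E3 × E3, 0 ≤ phaseWeight p ^ (k + 21) * f t p.1 p.2 :=
    fun t ht p => mul_nonneg (by have := hQ p; positivity) ((hd t ht).nonneg p)
  have hP0 : 0 ≤ P := (integral_nonneg (hQf 0 h0T)).trans (hP 0 h0T)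
  have hB0 : 0 ≤ B := (integral_nonneg fun p => mul_nonneg (by positivity)
    ((hd 0 h0T).nonneg p)).trans (hB 0 h0T)
  have hS0 : 0 ≤ S := by linarith
  have hslice : ∀ t ∈ Icc 0 T, ∫⁻ p : E3 × E3, ENNReal.ofReal (axisWeight δ p * f t p.1 p.2) ≤
      ENNReal.ofReal (S ^ δ) *
        (∫⁻ p : E3 × E3, ENNReal.ofReal (virialWeight δ 0 p * f t p.1 p.2)) +
      ENNReal.ofReal (P / S ^ k + D * c) := by
    intro t ht
    have hi1 := (hk t ht).const_mul (S ^ k)⁻¹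
    have hi2 := integrable_axisKernel_mul.const_mul D
    have hint : Integrable fun p : E3 × E3 =>
        (S ^ k)⁻¹ * (phaseWeight p ^ (k + 21) * f t p.1 p.2) +
          D * (axisKernel p.1 * (1 + ‖p.2‖) ^ (-4 : ℝ)) := hi1.add hi2
    calc _ ≤ ∫⁻ p : E3 × E3, (ENNReal.ofReal (S ^ δ) *
            ENNReal.ofReal (virialWeight δ 0 p * f t p.1 p.2) +
          ENNReal.ofReal ((S ^ k)⁻¹ * (phaseWeight p ^ (k + 21) * f t p.1 p.2) +
            D * (axisKernel p.1 * (1 + ‖p.2‖) ^ (-4 : ℝ)))) := by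
          refine lintegral_mono fun p => ?_
          rw [← ENNReal.ofReal_mul (by positivity)]
          exact (ENNReal.ofReal_le_ofReal (axisWeight_mul_le (hd t ht).nonneg (hd t ht).le_bound
            hδ hS k p)).trans ENNReal.ofReal_add_le
      _ = ENNReal.ofReal (S ^ δ) *
            (∫⁻ p : E3 × E3, ENNReal.ofReal (virialWeight δ 0 p * f t p.1 p.2)) +
          ∫⁻ p : E3 × E3, ENNReal.ofReal ((S ^ k)⁻¹ * (phaseWeight p ^ (k + 21) * f t p.1 p.2) +
            D * (axisKernel p.1 * (1 + ‖p.2‖) ^ (-4 : ℝ))) := by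
          rw [lintegral_add_left, lintegral_const_mul' _ _ ENNReal.ofReal_ne_top]
          exact (((measurable_virialWeight_zero δ).mul
            (hd t ht).continuous.measurable).ennreal_ofReal).const_mul _
      _ ≤ _ := by
          refine add_le_add le_rfl ?_
          rw [← ofReal_integral_eq_lintegral_ofReal hint (.of_forall fun p =>
            add_nonneg (mul_nonneg (by positivity) (hQf t ht p)) (mul_nonneg hD (hK p)))]
          refine ENNReal.ofReal_le_ofReal ?_
          rw [integral_add hi1 hi2, integral_const_mul, integral_const_mul, div_eq_inv_mul]
          gcongr
          exact hP t ht
  calc _ ≤ ∫⁻ t in Icc 0 T, (ENNReal.ofReal (S ^ δ) *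
        (∫⁻ p : E3 × E3, ENNReal.ofReal (virialWeight δ 0 p * f t p.1 p.2)) +
      ENNReal.ofReal (P / S ^ k + D * c)) := setLIntegral_mono' measurableSet_Icc hslice
    _ = ENNReal.ofReal (S ^ δ) * (∫⁻ t in Icc 0 T, ∫⁻ p : E3 × E3,
          ENNReal.ofReal (virialWeight δ 0 p * f t p.1 p.2)) +
        ENNReal.ofReal (P / S ^ k + D * c) * ENNReal.ofReal T := by
        rw [lintegral_add_right _ measurable_const,
          lintegral_const_mul' _ _ ENNReal.ofReal_ne_top, setLIntegral_const, Real.volume_Icc,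
          sub_zero]
    _ ≤ ENNReal.ofReal (S ^ δ) * ENNReal.ofReal (2 * B / δ) +
        ENNReal.ofReal (P / S ^ k + D * c) * ENNReal.ofReal T := by
        gcongr
        exact hf.lintegral_virialWeight_le hT hd hm hB hδ
    _ = _ := by
        have hδ0 := hδ.1
        rw [← ENNReal.ofReal_mul (by positivity), ← ENNReal.ofReal_mul (by positivity),
          ← ENNReal.ofReal_add (by positivity) (by positivity)]

theorem rpow_le_rpow_mul_one_add_div_pow {δ a l : ℝ} (hδ : δ ∈ Ioo (0 : ℝ) 1) (ha : 0 ≤ a)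
    (hl : 0 < l) {n : ℕ} (hn : n ≠ 0) : a ^ δ ≤ l ^ δ * (1 + a ^ n / l ^ n) := by
  have h : (a / l) ^ δ ≤ 1 + (a / l) ^ n := by
    have h0 : 0 ≤ a / l := by positivity
    rcases le_total (a / l) 1 with h1 | h1
    · have := Real.rpow_le_one h0 h1 hδ.1.le
      linarith [pow_nonneg h0 n]
    · have h2 := Real.rpow_le_rpow_of_exponent_le h1 hδ.2.le
      rw [Real.rpow_one] at h2
      linarith [le_self_pow₀ h1 hn]
  rw [← div_pow]
  calc a ^ δ = l ^ δ * (a / l) ^ δ := by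
        rw [← Real.mul_rpow hl.le (by positivity), mul_div_cancel₀ _ hl.ne']
    _ ≤ _ := mul_le_mul_of_nonneg_left h (by positivity)

theorem integral_spatial_weight_le {D δ l P : ℝ} {g : E3 × E3 → ℝ} (hg : ∀ p, 0 ≤ g p)
    (hδ : δ ∈ Ioo (0 : ℝ) 1) (hl : 0 < l) {n : ℕ} (hn : n ≠ 0)
    (h1 : Integrable fun p : E3 × E3 => (1 + ‖p.2‖) * g p)
    (h1D : ∫ p : E3 × E3, (1 + ‖p.2‖) * g p ≤ D)
    (h2 : Integrable fun p : E3 × E3 => phaseWeight p ^ (n + 1) * g p)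
    (h2P : ∫ p : E3 × E3, phaseWeight p ^ (n + 1) * g p ≤ P) (hP : P ≤ l ^ n) :
    ∫ p : E3 × E3, (1 + ‖p.2‖) * (1 + ‖p.1‖) ^ δ * g p ≤ l ^ δ * (D + 1) := by
  have hi : Integrable fun p : E3 × E3 =>
      l ^ δ * ((1 + ‖p.2‖) * g p + (l ^ n)⁻¹ * (phaseWeight p ^ (n + 1) * g p)) :=
    (h1.add (h2.const_mul _)).const_mul _
  calc _ ≤ ∫ p : E3 × E3,
        l ^ δ * ((1 + ‖p.2‖) * g p + (l ^ n)⁻¹ * (phaseWeight p ^ (n + 1) * g p)) := by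
        refine integral_mono_of_nonneg (.of_forall fun p => mul_nonneg (by positivity) (hg p)) hi
          (.of_forall fun p => ?_)
        have hv : 1 + ‖p.2‖ ≤ phaseWeight p := by unfold phaseWeight; linarith [norm_nonneg p.1]
        have hx : 1 + ‖p.1‖ ≤ phaseWeight p := by unfold phaseWeight; linarith [norm_nonneg p.2]
        have hQ := one_le_phaseWeight p
        have h3 := rpow_le_rpow_mul_one_add_div_pow hδ (a := 1 + ‖p.1‖) (by positivity) hl hn
        have h4 : (1 + ‖p.2‖) * (1 + ‖p.1‖) ^ n ≤ phaseWeight p ^ (n + 1) := by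
          rw [pow_succ']
          gcongr
        have h5 : (1 + ‖p.2‖) * (1 + ‖p.1‖) ^ δ ≤
            l ^ δ * ((1 + ‖p.2‖) + (l ^ n)⁻¹ * phaseWeight p ^ (n + 1)) :=
          calc _ ≤ (1 + ‖p.2‖) * (l ^ δ * (1 + (1 + ‖p.1‖) ^ n / l ^ n)) := by gcongr
            _ = l ^ δ * ((1 + ‖p.2‖) + (l ^ n)⁻¹ * ((1 + ‖p.2‖) * (1 + ‖p.1‖) ^ n)) := by ring
            _ ≤ _ := by gcongr
        refine (mul_le_mul_of_nonneg_right h5 (hg p)).trans (le_of_eq ?_)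
        ring
    _ = l ^ δ * ((∫ p : E3 × E3, (1 + ‖p.2‖) * g p) +
        (l ^ n)⁻¹ * ∫ p : E3 × E3, phaseWeight p ^ (n + 1) * g p) := by
        rw [integral_const_mul, integral_add h1 (h2.const_mul _), integral_const_mul]
    _ ≤ l ^ δ * (D + 1) := by
        gcongr
        rw [inv_mul_le_iff₀ (by positivity), mul_one]
        exact h2P.trans hP

theorem IsRVPSolution.lintegral_axisWeight_le_two_rpow {T D δ P : ℝ} {k M : ℕ} (hT : 0 < T)
    {f : ℝ → E3 → E3 → ℝ} (hf : IsRVPSolution (Icc 0 T) f)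
    (hD : ∀ t ∈ Icc 0 T, ∀ x v, f t x v ≤ D) (hδ : δ ∈ Ioo (0 : ℝ) 1) (hk20 : 20 ≤ k)
    (h1 : ∀ t ∈ Icc 0 T, Integrable fun p : E3 × E3 => (1 + ‖p.2‖) * f t p.1 p.2)
    (h1D : ∀ t ∈ Icc 0 T, ∫ p : E3 × E3, (1 + ‖p.2‖) * f t p.1 p.2 ≤ D)
    (hk : ∀ t ∈ Icc 0 T, Integrable fun p : E3 × E3 => phaseWeight p ^ (k + 21) * f t p.1 p.2)
    (hkP : ∀ t ∈ Icc 0 T, ∫ p : E3 × E3, phaseWeight p ^ (k + 21) * f t p.1 p.2 ≤ P)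
    (hTP : (1 + T) ^ ((k + 21) * (k + 21)) ≤ P) (hP : P ≤ ((2 : ℝ) ^ M) ^ (k + 20)) :
    ∫⁻ t in Icc 0 T, ∫⁻ p : E3 × E3, ENNReal.ofReal (axisWeight δ p * f t p.1 p.2) ≤
      ENNReal.ofReal (2 * (D + 1) / δ * 2 ^ (3 * δ * M) +
        (1 + D * ∫ p : E3 × E3, axisKernel p.1 * (1 + ‖p.2‖) ^ (-4 : ℝ)) *
          2 ^ ((M : ℝ) / (k + 21 : ℕ))) := by
  have h0T : (0 : ℝ) ∈ Icc 0 T := ⟨le_rfl, hT.le⟩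
  have hcont : ∀ t ∈ Icc 0 T, Continuous fun p : E3 × E3 => f t p.1 p.2 := fun t ht => by
    rw [← continuousOn_univ]
    exact hf.2.1.continuousOn.comp (f := fun p : E3 × E3 => (t, p)) (by fun_prop)
      fun p _ => ⟨ht, mem_univ _⟩
  have hQle : ∀ p : E3 × E3, phaseWeight p ^ 20 ≤ phaseWeight p ^ (k + 21) := fun p =>
    pow_le_pow_right₀ (one_le_phaseWeight p) (by omega)
  have hQ0 : ∀ p : E3 × E3, 0 ≤ phaseWeight p ^ 20 := fun p => by
    have := one_le_phaseWeight p
    positivity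
  have hd : ∀ t ∈ Icc 0 T, IsPhaseDensity D fun p => f t p.1 p.2 := fun t ht => by
    refine ⟨hcont t ht, fun p => hf.1 t ht _ _, fun p => hD t ht _ _, (hk t ht).mono'
      ((continuous_phaseWeight.pow 20).mul (hcont t ht)).aestronglyMeasurable
      (.of_forall fun p => ?_)⟩
    have h0 := hf.1 t ht p.1 p.2
    rw [Real.norm_of_nonneg (mul_nonneg (hQ0 p) h0)]
    exact mul_le_mul_of_nonneg_right (hQle p) h0
  have hm : ∀ t ∈ Icc 0 T, ∫ p : E3 × E3, phaseWeight p ^ 20 * f t p.1 p.2 ≤ P := fun t ht =>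
    (integral_mono (hd t ht).integrable_moment (hk t ht) fun p =>
      mul_le_mul_of_nonneg_right (hQle p) (hf.1 t ht p.1 p.2)).trans (hkP t ht)
  have hB : ∀ t ∈ Icc 0 T, ∫ p : E3 × E3, (1 + ‖p.2‖) * (1 + ‖p.1‖) ^ δ * f t p.1 p.2 ≤
      ((2 : ℝ) ^ M) ^ δ * (D + 1) := fun t ht =>
    integral_spatial_weight_le (hd t ht).nonneg hδ (by positivity) (by omega) (h1 t ht)
      (h1D t ht) (hk t ht) (hkP t ht) hP
  have hmain := hf.lintegral_axisWeight_le hT hd hm hB hδ (S := ((2 : ℝ) ^ M) ^ 2)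
    (one_le_pow₀ (one_le_pow₀ one_le_two)) hk hkP
  have hD0 := (hd 0 h0T).bound_nonneg
  have hc0 : 0 ≤ ∫ p : E3 × E3, axisKernel p.1 * (1 + ‖p.2‖) ^ (-4 : ℝ) :=
    integral_nonneg fun p => mul_nonneg (axisKernel_nonneg _) (by positivity)
  refine hmain.trans (ENNReal.ofReal_le_ofReal (add_le_add (le_of_eq ?_) ?_))
  · have e : (((2 : ℝ) ^ M) ^ 2) ^ δ * ((2 : ℝ) ^ M) ^ δ = 2 ^ (3 * δ * M) := by
      rw [← Real.mul_rpow (by positivity) (by positivity), ← pow_succ, ← pow_mul,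
        ← Real.rpow_natCast, ← Real.rpow_mul zero_le_two]
      congr 1; push_cast; ring
    rw [← e]; ring
  · have hPS : P / (((2 : ℝ) ^ M) ^ 2) ^ k ≤ 1 := by
      rw [div_le_one (by positivity), ← pow_mul]
      exact hP.trans (pow_le_pow_right₀ (one_le_pow₀ one_le_two) (by omega))
    have hT2 : 1 + T ≤ 2 ^ ((M : ℝ) / (k + 21 : ℕ)) := by
      have hn : (k + 21) * (k + 21) ≠ 0 := by positivity
      refine (pow_le_pow_iff_left₀ (by positivity) (by positivity) hn).1 ?_
      have e : ((2 : ℝ) ^ ((M : ℝ) / (k + 21 : ℕ))) ^ ((k + 21) * (k + 21)) =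
          ((2 : ℝ) ^ M) ^ (k + 21) := by
        rw [pow_mul, ← Real.rpow_mul_natCast zero_le_two, div_mul_cancel₀ _ (by positivity),
          Real.rpow_natCast]
      rw [e]
      exact (hTP.trans hP).trans (pow_le_pow_right₀ (one_le_pow₀ one_le_two) (by omega))
    gcongr
    linarith

theorem le_pow_of_rpow_inv_le {a b : ℝ} (ha : 0 ≤ a) {n : ℕ} (hn : n ≠ 0)
    (h : a ^ ((1 : ℝ) / n) ≤ b) : a ≤ b ^ n := by
  have := pow_le_pow_left₀ (by positivity) h n
  rwa [one_div, Real.rpow_inv_natCast_pow ha hn] at this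

/-- Singular weighted space–time estimate in the cylindrical symmetry case:
`∫₀^T ∬ |v̸|^{2+2ε⋆} / (|x̸|^{1-2ε⋆} √(1+|v|²)) f ds dx dv ≲ 2^{5 ε M_T}`,
showing that particles do not concentrate near the `x₃`-axis. -/
theorem cylindrical_spacetime_estimate (D : ℝ) (hD : 0 < D) :
    ∃ C K₀ : ℝ, ∀ (T : ℝ) (f : ℝ → E3 → E3 → ℝ), 0 ≤ T →
      IsRVPSolution (Set.Icc 0 T) f →
      (∀ t ∈ Set.Icc (0 : ℝ) T, ∀ (θ : ℝ) (x v : E3),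
        f t (rotZ θ x) (rotZ θ v) = f t x v) →
      (∀ t ∈ Set.Icc (0 : ℝ) T, ∀ x v, f t x v ≤ D) →
      (∀ t ∈ Set.Icc (0 : ℝ) T,
        Integrable (fun p : E3 × E3 => (1 + ‖p.2‖) * f t p.1 p.2) volume) →
      (∀ t ∈ Set.Icc (0 : ℝ) T, (∫ p : E3 × E3, (1 + ‖p.2‖) * f t p.1 p.2) ≤ D) →
      (∀ t ∈ Set.Icc (0 : ℝ) T,
        Integrable (fun p : E3 × E3 => (1 + ‖p.2‖) ^ (10 ^ 7 : ℕ) * f t p.1 p.2) volume) →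
      BddAbove (momentNc f '' Set.Icc 0 T) →
      (∀ s ∈ Set.Icc (0 : ℝ) T,
        Integrable (fun p : E3 × E3 =>
          (1 + ‖p.1‖ + ‖p.2‖) ^ (10 ^ 7 : ℕ) * f s p.1 p.2) volume ∧
        (∫ p : E3 × E3, (1 + ‖p.1‖ + ‖p.2‖) ^ (10 ^ 7 : ℕ) * f s p.1 p.2) ≤ tildeMc f T) →
      ∀ M : ℕ, IsLeast {k : ℕ | tildeMc f T ^ ((1 : ℝ) / (ncR - 1)) ≤ (2 : ℝ) ^ k} M →
        K₀ ≤ (M : ℝ) →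
        (∫⁻ s in Set.Icc (0 : ℝ) T, ∫⁻ p : E3 × E3,
            ENNReal.ofReal (slashN p.2 ^ (2 + 2 * epsStar) * f s p.1 p.2 /
              (slashN p.1 ^ (1 - 2 * epsStar) * Real.sqrt (1 + ‖p.2‖ ^ 2)))) ≤
          ENNReal.ofReal (C * (2 : ℝ) ^ (5 * epsC * (M : ℝ))) := by

  have hδ : 2 * epsStar ∈ Ioo (0 : ℝ) 1 := by
    unfold epsStar epsC; constructor <;> norm_num
  have hc0 : 0 ≤ ∫ p : E3 × E3, axisKernel p.1 * (1 + ‖p.2‖) ^ (-4 : ℝ) :=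
    integral_nonneg fun p => mul_nonneg (axisKernel_nonneg _) (by positivity)
  refine ⟨2 * (D + 1) / (2 * epsStar) +
    (1 + D * ∫ p : E3 × E3, axisKernel p.1 * (1 + ‖p.2‖) ^ (-4 : ℝ)), 0, ?_⟩
  intro T f hT hf _ hle h1 h1D _ _ hmom M hM _
  rcases hT.eq_or_lt with rfl | hT0
  · simp
  obtain ⟨k, hk⟩ : ∃ k : ℕ, 10 ^ 7 = k + 21 := ⟨10 ^ 7 - 21, by norm_num⟩
  have hkR : ((k + 21 : ℕ) : ℝ) = 10 ^ 7 := by rw [← hk]; norm_num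
  have hsup : 0 ≤ sSup (momentNc f '' Icc 0 T) := by
    refine Real.sSup_nonneg ?_
    rintro _ ⟨t, ht, rfl⟩
    exact integral_nonneg fun p => mul_nonneg (by positivity) (hf.1 t ht _ _)
  have hTP : (1 + T) ^ ((k + 21) * (k + 21)) ≤ tildeMc f T := by
    rw [← hk, show 10 ^ 7 * 10 ^ 7 = 10 ^ 14 by norm_num]
    exact le_add_of_nonneg_right hsup
  have hP : tildeMc f T ≤ ((2 : ℝ) ^ M) ^ (k + 20) := by
    refine le_pow_of_rpow_inv_le (le_trans (by positivity) hTP) (by omega) ?_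
    have e : ((k + 20 : ℕ) : ℝ) = ncR - 1 := by
      rw [ncR, ← hkR]; push_cast; ring
    rw [e]
    exact hM.1
  simp only [hk] at hmom
  have hmain := hf.lintegral_axisWeight_le_two_rpow hT0 hle hδ (by omega) h1 h1D
    (fun t ht => (hmom t ht).1) (fun t ht => (hmom t ht).2) hTP hP
  refine le_trans (le_of_eq ?_) (hmain.trans (ENNReal.ofReal_le_ofReal ?_))
  · simp only [axisWeight, div_mul_eq_mul_div]
  have hM0 : (0 : ℝ) ≤ M := M.cast_nonneg
  have hδ0 := hδ.1
  rw [hkR, add_mul (2 * (D + 1) / (2 * epsStar))]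
  refine add_le_add
    (mul_le_mul_of_nonneg_left (Real.rpow_le_rpow_of_exponent_le one_le_two ?_) (by positivity))
    (mul_le_mul_of_nonneg_left (Real.rpow_le_rpow_of_exponent_le one_le_two ?_) (by positivity))
  · unfold epsStar epsC; linarith
  · unfold epsC; linarith
end
end
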